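/- arXiv:math/0401313 — 3 statements merged into one kernel-verified Lean document; each statement's English description precedes it below -/
import Mathlib

section
/- Let H=(V,E,w) be a honeycomb having at least one nonintegral vertex. Then there exists an open legal path or a legal cycle P=(v₀,q₁,v₁,…,q_k,v_k) in H such that: (i) each edge e of H occurs in P at most twice, and if it occurs exactly twice then P traverses e in both directions (i.e., e=q_i=q_j with i<j implies v_i=v_{j−1}); (ii) if an edge e occurs in P twice, then w(e)>1; and (iii) for each vertex v of H, the number of times P turns at v does not exceed min{2, |div_w(v)|}. -/
open scoped BigOperators

attribute [local instance] Classical.propDecidable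

noncomputable section

/-- Points of the plane. -/
abbrev Pt : Type := ℝ × ℝ

/-- Inner product on the plane. -/
def pdot (a b : Pt) : ℝ := a.1 * b.1 + a.2 * b.2

/-- The three generating vectors ξ₁ = (1,0), ξ₂ = (−1/2, √3/2), ξ₃ = (−1/2, −√3/2). -/
noncomputable def xiv : Fin 3 → Pt
  | 0 => ((1 : ℝ), (0 : ℝ))
  | 1 => (-(1 / 2 : ℝ), Real.sqrt 3 / 2)
  | 2 => (-(1 / 2 : ℝ), -(Real.sqrt 3 / 2))

/-- Dual coordinates d_i(x) = −x·ξ_i. -/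
noncomputable def dcoord (i : Fin 3) (x : Pt) : ℝ := -(pdot x (xiv i))

/-- Direction of the ray Ξ_i^s(·): ξ_i rotated by −90° for s = +(true), by +90° for
s = −(false), so that Ξ_i⁺(v)−v, ℝ₊ξ_i, Ξ_i⁻(v)−v follow anticlockwise. -/
noncomputable def rayDir (i : Fin 3) (s : Bool) : Pt :=
  if s then ((xiv i).2, -(xiv i).1) else (-(xiv i).2, (xiv i).1)

/-- The ray Ξ_i^s(v). -/
def XiRay (i : Fin 3) (s : Bool) (v : Pt) : Set Pt :=
  {x | ∃ t : ℝ, 0 ≤ t ∧ x = v + t • rayDir i s}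

/-- A finite line (nondegenerate segment). -/
def IsSegL (S : Set Pt) : Prop := ∃ a b : Pt, a ≠ b ∧ S = segment ℝ a b

/-- A semiinfinite line (ray) with end a. -/
def IsRayFrom (a : Pt) (S : Set Pt) : Prop :=
  ∃ d : Pt, d ≠ 0 ∧ S = {x | ∃ t : ℝ, 0 ≤ t ∧ x = a + t • d}

/-- A semiinfinite line (ray). -/
def IsRayL (S : Set Pt) : Prop := ∃ a : Pt, IsRayFrom a S

/-- A fully infinite line. -/
def IsFullLineL (S : Set Pt) : Prop := ∃ a d : Pt, d ≠ 0 ∧ S = {x | ∃ t : ℝ, x = a + t • d}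

/-- A line: a segment, a ray or a full line. -/
def IsLineL (S : Set Pt) : Prop := IsSegL S ∨ IsRayL S ∨ IsFullLineL S

/-- `S` is perpendicular to ξ_i, i.e. the dual coordinate d_i is constant on S. -/
def PerpTo (i : Fin 3) (S : Set Pt) : Prop := ∀ x ∈ S, ∀ y ∈ S, pdot (x - y) (xiv i) = 0

/-- w_i^s(v): the total weight of the lines of the system whose intersection with
Ξ_i^s(v) contains v and is a line (not a point). -/
noncomputable def wis (L : Finset (Set Pt)) (w : Set Pt → ℤ) (i : Fin 3) (s : Bool)
    (v : Pt) : ℤ :=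
  ∑ ℓ ∈ L.filter (fun ℓ => v ∈ ℓ ∧ IsLineL (ℓ ∩ XiRay i s v)), w ℓ

/-- A Ξ-system: a finite set of lines, each perpendicular to some ξ_i. -/
def IsXiSystem (L : Finset (Set Pt)) : Prop := ∀ ℓ ∈ L, IsLineL ℓ ∧ ∃ i : Fin 3, PerpTo i ℓ

/-- A pre-honeycomb: a Ξ-system with all w_i^s(v) nonnegative satisfying the
divergency (zero-tension) condition at every point. -/
def IsPreHoneycomb (L : Finset (Set Pt)) (w : Set Pt → ℤ) : Prop :=
  IsXiSystem L ∧ (∀ (v : Pt) (i : Fin 3) (s : Bool), 0 ≤ wis L w i s v) ∧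
  ∀ (v : Pt) (i j : Fin 3),
    wis L w i true v - wis L w i false v = wis L w j true v - wis L w j false v

/-- The divergency div_w(v). -/
noncomputable def divw (L : Finset (Set Pt)) (w : Set Pt → ℤ) (v : Pt) : ℤ :=
  wis L w 0 true v - wis L w 0 false v

/-- An interior (non-end) point of a line. -/
def InteriorPt (S : Set Pt) (x : Pt) : Prop :=
  x ∈ S ∧ ∃ d : Pt, d ≠ 0 ∧ ∃ ε : ℝ, 0 < ε ∧ ∀ t : ℝ, |t| ≤ ε → x + t • d ∈ S

/-- `v` is an end of the line `S` (so `S` is incident to `v` as a graph edge). -/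
def IsEnd (v : Pt) (S : Set Pt) : Prop := v ∈ S ∧ ¬ InteriorPt S v

/-- A honeycomb: a (non-standard) planar graph with a nonempty finite vertex set, whose
edges are positively weighted lines, each vertex incident with at least 3 edges, no
interior point of an edge lying on another edge, the ends of edges being vertices, and
the weighted edge set forming a pre-honeycomb. -/
structure Honeycomb : Type where
  verts : Finset Pt
  edges : Finset (Set Pt)
  w : Set Pt → ℤ
  verts_nonempty : verts.Nonempty
  degree : ∀ v ∈ verts, 3 ≤ (edges.filter fun e => IsEnd v e).card
  no_cross : ∀ e ∈ edges, ∀ e' ∈ edges, e ≠ e' → ∀ x : Pt, InteriorPt e x → x ∉ e'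
  w_pos : ∀ e ∈ edges, 0 < w e
  ends_mem : ∀ e ∈ edges, ∀ x : Pt, IsEnd x e → x ∈ verts
  edge_touch : ∀ e ∈ edges, ∃ v ∈ verts, v ∈ e
  pre : IsPreHoneycomb edges w

/-- The edge `e` is nonintegral: its constant dual coordinate is not an integer. -/
def NonIntegralEdge (e : Set Pt) : Prop :=
  ∃ i : Fin 3, PerpTo i e ∧ ∀ x ∈ e, ∀ z : ℤ, dcoord i x ≠ (z : ℝ)

/-- The edge `e` (incident to v, contained in Ξ_i^s(v)) is dominating at v. -/
def Dominating (H : Honeycomb) (v : Pt) (e : Set Pt) : Prop :=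
  ∃ (i : Fin 3) (s : Bool), IsEnd v e ∧ e ⊆ XiRay i s v ∧
    wis H.edges H.w i (!s) v < wis H.edges H.w i s v

/-- The edges e, e' are opposite to each other at v. -/
def OppositeAt (v : Pt) (e e' : Set Pt) : Prop :=
  ∃ (i : Fin 3) (s : Bool), e ⊆ XiRay i s v ∧ e' ⊆ XiRay i (!s) v

/-- A legal pair at v: two distinct nonintegral edges incident to v which are either
opposite at v or both dominating at v. -/
def LegalPair (H : Honeycomb) (v : Pt) (e e' : Set Pt) : Prop :=
  e ≠ e' ∧ NonIntegralEdge e ∧ NonIntegralEdge e' ∧ IsEnd v e ∧ IsEnd v e' ∧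
  (OppositeAt v e e' ∨ (Dominating H v e ∧ Dominating H v e'))

/-- `(v 0, q 1, v 1, …, q k, v k)` is a path in H: the q i are edges of H, the inner
edges q 2, …, q (k−1) are finite with ends v (i−1), v i; q 1 is finite with ends
v 0, v 1 or semiinfinite with end v 1 and dummy v 0 = none, and symmetrically for
q k. -/
def IsPathOf (H : Honeycomb) (k : ℕ) (q : ℕ → Set Pt) (v : ℕ → Option Pt) : Prop :=
  1 ≤ k ∧
  (∀ i : ℕ, 1 ≤ i → i ≤ k → q i ∈ H.edges) ∧
  (∀ i : ℕ, 2 ≤ i → i ≤ k - 1 →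
    ∃ a b : Pt, v (i - 1) = some a ∧ v i = some b ∧ a ≠ b ∧ q i = segment ℝ a b) ∧
  ((∃ a b : Pt, v 0 = some a ∧ v 1 = some b ∧ a ≠ b ∧ q 1 = segment ℝ a b) ∨
    (v 0 = none ∧ ∃ b : Pt, v 1 = some b ∧ IsRayFrom b (q 1))) ∧
  (1 < k →
    ((∃ a b : Pt, v (k - 1) = some a ∧ v k = some b ∧ a ≠ b ∧ q k = segment ℝ a b) ∨
      (v k = none ∧ ∃ a : Pt, v (k - 1) = some a ∧ IsRayFrom a (q k))))

/-- A legal path: every pair of consecutive edges is a legal pair at their common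
vertex. -/
def IsLegalPath (H : Honeycomb) (k : ℕ) (q : ℕ → Set Pt) (v : ℕ → Option Pt) : Prop :=
  IsPathOf H k q v ∧
  ∀ i : ℕ, 1 ≤ i → i < k → ∃ u : Pt, v i = some u ∧ LegalPair H u (q i) (q (i + 1))

/-- The number of times the path (or its cyclic closure, when `wrap = true`) turns at
the vertex u, i.e. the number of its bends at u. -/
noncomputable def turnCount (k : ℕ) (q : ℕ → Set Pt) (v : ℕ → Option Pt) (wrap : Bool)
    (u : Pt) : ℕ :=
  ((Finset.Ico 1 k).filter fun i => v i = some u ∧ ¬ OppositeAt u (q i) (q (i + 1))).card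
    + (if wrap = true ∧ v 0 = some u ∧ ¬ OppositeAt u (q k) (q 1) then 1 else 0)

/-! ## Geometry -/

def rc1 : Fin 3 → Bool → ℝ
  | 0, _ => 0
  | 1, true => 1
  | 1, false => -1
  | 2, true => -1
  | 2, false => 1

def rc2 : Fin 3 → Bool → ℝ
  | 0, true => -1
  | 0, false => 1
  | 1, true => 1/2
  | 1, false => -(1/2)
  | 2, true => 1/2
  | 2, false => -(1/2)

lemma sqrt3_pos : 0 < Real.sqrt 3 / 2 := by positivity

lemma rayDir_eq (i : Fin 3) (s : Bool) :
    rayDir i s = (Real.sqrt 3 / 2 * rc1 i s, rc2 i s) := by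
  fin_cases i <;> cases s <;> simp [rayDir, xiv, rc1, rc2]

lemma rayDir_inj {i j : Fin 3} {s s' : Bool} {t t' : ℝ} (ht : 0 < t) (ht' : 0 ≤ t')
    (h : t • rayDir i s = t' • rayDir j s') : i = j ∧ s = s' := by
  rw [rayDir_eq, rayDir_eq] at h
  simp only [Prod.smul_mk, smul_eq_mul, Prod.mk.injEq] at h
  obtain ⟨h1, h2⟩ := h
  have h3 : t * rc1 i s = t' * rc1 j s' := by
    have := sqrt3_pos
    apply mul_left_cancel₀ this.ne'
    linarith
  fin_cases i <;> fin_cases j <;> cases s <;> cases s' <;>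
    simp only [rc1, rc2] at h2 h3 <;> first | exact ⟨rfl, rfl⟩ | (exfalso; linarith)

lemma rayDir_ne (i : Fin 3) (s : Bool) : rayDir i s ≠ 0 := by
  intro h
  have : (1:ℝ) • rayDir i s = (0:ℝ) • rayDir i (!s) := by simp [h]
  have := (rayDir_inj one_pos le_rfl this).2
  cases s <;> simp at this

lemma rayDir_not (i : Fin 3) (s : Bool) : rayDir i (!s) = - rayDir i s := by
  cases s <;> simp [rayDir]

lemma xiv_ne (i : Fin 3) : (xiv i).1 ≠ 0 := by
  fin_cases i <;> simp [xiv]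

lemma perp_dir (i : Fin 3) (x : Pt) (h : pdot x (xiv i) = 0) :
    ∃ c : ℝ, x = c • rayDir i true := by
  have hx := xiv_ne i
  refine ⟨-x.2 / (xiv i).1, ?_⟩
  unfold pdot at h
  ext
  · simp [rayDir]
    field_simp
    linarith
  · simp [rayDir]
    field_simp

lemma perp_ray (i : Fin 3) (x : Pt) (hx : x ≠ 0) (h : pdot x (xiv i) = 0) :
    ∃ (s : Bool) (c : ℝ), 0 < c ∧ x = c • rayDir i s := by
  obtain ⟨c, hc⟩ := perp_dir i x h
  rcases lt_trichotomy c 0 with h0 | h0 | h0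
  · refine ⟨false, -c, by linarith, ?_⟩
    have := rayDir_not i true
    simp at this
    rw [this, hc]; simp
  · subst h0; simp at hc; exact absurd hc hx
  · exact ⟨true, c, h0, hc⟩

lemma pdot_rayDir {i j : Fin 3} {s : Bool} {t : ℝ} (ht : 0 < t)
    (h : pdot (t • rayDir i s) (xiv j) = 0) : i = j := by
  obtain ⟨s', c, hc, h'⟩ := perp_ray j (t • rayDir i s)
    (smul_ne_zero ht.ne' (rayDir_ne i s)) h
  exact (rayDir_inj ht hc.le h').1

lemma pdot_rayDir_self (i : Fin 3) (s : Bool) (t : ℝ) :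
    pdot (t • rayDir i s) (xiv i) = 0 := by
  cases s <;> simp [pdot, rayDir] <;> ring

lemma pdot_sub (a b c : Pt) : pdot (a - b) c = pdot a c - pdot b c := by
  simp [pdot]; ring

lemma dcoord_sum (x : Pt) : dcoord 0 x + dcoord 1 x + dcoord 2 x = 0 := by
  simp [dcoord, pdot, xiv]; ring

/-- the ray from a in direction d -/
def rayS (a d : Pt) : Set Pt := {x | ∃ t : ℝ, 0 ≤ t ∧ x = a + t • d}

lemma seg_param (a b x : Pt) : x ∈ segment ℝ a b ↔ ∃ t : ℝ, 0 ≤ t ∧ t ≤ 1 ∧ x = a + t • (b - a) := by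
  rw [segment_eq_image']
  simp only [Set.mem_image, Set.mem_Icc]
  constructor
  · rintro ⟨t, ⟨h0, h1⟩, rfl⟩; exact ⟨t, h0, h1, rfl⟩
  · rintro ⟨t, h0, h1, rfl⟩; exact ⟨t, ⟨h0, h1⟩, rfl⟩

lemma ray_end (a d : Pt) (hd : d ≠ 0) : IsEnd a (rayS a d) := by
  refine ⟨⟨0, le_rfl, by simp⟩, ?_⟩
  rintro ⟨-, d', hd', ε, hε, h⟩
  obtain ⟨t, ht, h1⟩ := h ε (by rw [abs_of_pos hε])
  obtain ⟨t', ht', h2⟩ := h (-ε) (by rw [abs_neg, abs_of_pos hε])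
  have e1 : ε • d' = t • d := add_left_cancel h1
  have e2 : (-ε) • d' = t' • d := add_left_cancel h2
  have : (t + t') • d = 0 := by rw [add_smul, ← e1, ← e2]; simp
  rcases smul_eq_zero.1 this with h | h
  · have : t = 0 := by linarith
    rw [this, zero_smul] at e1
    exact (smul_ne_zero hε.ne' hd') e1
  · exact hd h

lemma ray_interior (a d : Pt) (hd : d ≠ 0) (t : ℝ) (ht : 0 < t) :
    InteriorPt (rayS a d) (a + t • d) := by
  refine ⟨⟨t, ht.le, rfl⟩, d, hd, t, ht, fun r hr => ⟨t + r, ?_, ?_⟩⟩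
  · linarith [(abs_le.1 hr).1]
  · rw [add_smul, add_assoc]

lemma seg_end (a b : Pt) (hd : a ≠ b) : IsEnd a (segment ℝ a b) := by
  refine ⟨left_mem_segment ℝ a b, fun h => ?_⟩
  apply (ray_end a (b - a) (sub_ne_zero.2 hd.symm)).2
  have sub : segment ℝ a b ⊆ rayS a (b - a) := by
    intro x hx
    obtain ⟨t, h0, -, h⟩ := (seg_param a b x).1 hx
    exact ⟨t, h0, h⟩
  obtain ⟨h0, d, hd, ε, hε, h⟩ := h
  exact ⟨sub h0, d, hd, ε, hε, fun t ht => sub (h t ht)⟩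

lemma seg_interior (a b : Pt) (hd : a ≠ b) (t : ℝ) (ht : 0 < t) (ht1 : t < 1) :
    InteriorPt (segment ℝ a b) (a + t • (b - a)) := by
  refine ⟨(seg_param _ _ _).2 ⟨t, ht.le, ht1.le, rfl⟩, b - a, sub_ne_zero.2 hd.symm,
    min t (1 - t), lt_min ht (by linarith), fun r hr => (seg_param _ _ _).2 ⟨t + r, ?_, ?_, ?_⟩⟩
  · linarith [(abs_le.1 hr).1, min_le_left t (1 - t)]
  · linarith [(abs_le.1 hr).2, min_le_right t (1 - t)]
  · rw [add_smul, add_assoc]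

lemma seg_end_iff (a b x : Pt) (hd : a ≠ b) : IsEnd x (segment ℝ a b) ↔ x = a ∨ x = b := by
  constructor
  · rintro ⟨hx, hn⟩
    obtain ⟨t, h0, h1, rfl⟩ := (seg_param a b x).1 hx
    rcases h0.eq_or_lt with h | h
    · left; simp [← h]
    · rcases h1.eq_or_lt with h' | h'
      · right; simp [h']
      · exact absurd (seg_interior a b hd t h h') hn
  · rintro (rfl | rfl)
    · exact seg_end _ _ hd
    · rw [segment_symm]; exact seg_end _ _ hd.symm

lemma ray_end_iff (a d x : Pt) (hd : d ≠ 0) : IsEnd x (rayS a d) ↔ x = a := by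
  constructor
  · rintro ⟨⟨t, h0, rfl⟩, hn⟩
    rcases h0.eq_or_lt with h | h
    · simp [← h]
    · exact absurd (ray_interior a d hd t h) hn
  · rintro rfl; exact ray_end _ _ hd

lemma rayFrom_end_iff (a x : Pt) (e : Set Pt) (h : IsRayFrom a e) : IsEnd x e ↔ x = a := by
  obtain ⟨d, hd, rfl⟩ := h
  exact ray_end_iff a d x hd

lemma full_interior (a d x : Pt) (hd : d ≠ 0) (hx : x ∈ {x : Pt | ∃ t : ℝ, x = a + t • d}) :
    InteriorPt {x : Pt | ∃ t : ℝ, x = a + t • d} x := by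
  obtain ⟨t, rfl⟩ := hx
  exact ⟨⟨t, rfl⟩, d, hd, 1, one_pos, fun r _ => ⟨t + r, by rw [add_smul, add_assoc]⟩⟩

/-- a line contains two distinct points -/
lemma line_two {S : Set Pt} (h : IsLineL S) : ∃ x ∈ S, ∃ y ∈ S, x ≠ y := by
  rcases h with ⟨a, b, hab, rfl⟩ | ⟨a, d, hd, rfl⟩ | ⟨a, d, hd, rfl⟩
  · exact ⟨a, left_mem_segment ℝ a b, b, right_mem_segment ℝ a b, hab⟩
  · exact ⟨a, ⟨0, le_rfl, by simp⟩, a + d, ⟨1, zero_le_one, by simp⟩, by simpa using hd⟩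
  · exact ⟨a, ⟨0, by simp⟩, a + d, ⟨1, by simp⟩, by simpa using hd⟩

section HoneycombProof

variable (H : Honeycomb)

lemma vert_end {u : Pt} {e : Set Pt} (hu : u ∈ H.verts) (he : e ∈ H.edges) (h : u ∈ e) :
    IsEnd u e := by
  refine ⟨h, fun hi => ?_⟩
  have h3 := H.degree u hu
  have : ∃ e' ∈ H.edges.filter (fun e => IsEnd u e), e' ≠ e := by
    by_contra hc
    push Not at hc
    have : H.edges.filter (fun e => IsEnd u e) ⊆ {e} := fun x hx => by simp [hc x hx]
    have := Finset.card_le_card this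
    simp at this
    omega
  obtain ⟨e', he', hne⟩ := this
  rw [Finset.mem_filter] at he'
  exact H.no_cross e he e' he'.1 hne.symm u hi he'.2.1

lemma edge_cases {e : Set Pt} (he : e ∈ H.edges) :
    (∃ a b : Pt, a ≠ b ∧ e = segment ℝ a b) ∨ ∃ a, IsRayFrom a e := by
  rcases (H.pre.1 e he).1 with h | h | ⟨a, d, hd, rfl⟩
  · exact Or.inl h
  · exact Or.inr h
  · obtain ⟨v, hv, hve⟩ := H.edge_touch _ he
    exact absurd (full_interior a d v hd hve) (vert_end H hv he hve).2

/-- Shape of an edge near one of its ends. -/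
lemma edge_dir {u : Pt} {e : Set Pt} (he : e ∈ H.edges) (h : IsEnd u e) :
    ∃ (i : Fin 3) (s : Bool), e ⊆ XiRay i s u ∧
      ∃ ε : ℝ, 0 < ε ∧ ∀ t : ℝ, 0 < t → t < ε → InteriorPt e (u + t • rayDir i s) := by
  obtain ⟨i, hi⟩ := (H.pre.1 e he).2
  rcases edge_cases H he with ⟨a, b, hab, rfl⟩ | ⟨a, d, hd, rfl⟩
  · have key : ∀ a b : Pt, a ≠ b → PerpTo i (segment ℝ a b) →
      ∃ (i : Fin 3) (s : Bool), segment ℝ a b ⊆ XiRay i s a ∧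
      ∃ ε : ℝ, 0 < ε ∧ ∀ t : ℝ, 0 < t → t < ε →
        InteriorPt (segment ℝ a b) (a + t • rayDir i s) := by
      intro a b hab hi
      obtain ⟨s, c, hc, hcc⟩ := perp_ray i (b - a) (sub_ne_zero.2 hab.symm)
        (hi b (right_mem_segment ℝ a b) a (left_mem_segment ℝ a b))
      refine ⟨i, s, ?_, c, hc, ?_⟩
      · intro x hx
        obtain ⟨t, h0, -, rfl⟩ := (seg_param a b x).1 hx
        exact ⟨t * c, by positivity, by rw [hcc, smul_smul]⟩
      · intro t ht htc
        have := seg_interior a b hab (t / c) (by positivity) (by rwa [div_lt_one hc])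
        rwa [hcc, smul_smul, div_mul_cancel₀ _ hc.ne'] at this
    rcases (seg_end_iff a b u hab).1 h with rfl | rfl
    · exact key _ _ hab hi
    · rw [segment_symm] at hi ⊢
      exact key _ _ hab.symm hi
  · obtain rfl := (ray_end_iff a d u hd).1 h
    obtain ⟨s, c, hc, hcc⟩ := perp_ray i d hd (by
      have := hi (u + d) ⟨1, zero_le_one, by simp⟩ u ⟨0, le_rfl, by simp⟩
      simpa using this)
    refine ⟨i, s, ?_, 1, one_pos, ?_⟩
    · rintro x ⟨t, h0, rfl⟩
      exact ⟨t * c, by positivity, by rw [hcc, smul_smul]⟩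
    · intro t ht _
      have := ray_interior u d hd (t / c) (by positivity)
      rwa [hcc, smul_smul, div_mul_cancel₀ _ hc.ne', ← hcc] at this

lemma XiRay_inter {i j : Fin 3} {s s' : Bool} {u x : Pt} (hx : x ≠ u)
    (h1 : x ∈ XiRay i s u) (h2 : x ∈ XiRay j s' u) : i = j ∧ s = s' := by
  obtain ⟨t, ht, rfl⟩ := h1
  obtain ⟨t', ht', h⟩ := h2
  have h0 : 0 < t := by
    rcases ht.eq_or_lt with h | h
    · exact absurd (by simp [← h]) hx
    · exact h
  exact rayDir_inj h0 ht' (add_left_cancel h)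

/-- all data about an edge with an end -/
lemma edge_full {u : Pt} {e : Set Pt} {i : Fin 3} {s : Bool} (he : e ∈ H.edges)
    (h : IsEnd u e) (hs : e ⊆ XiRay i s u) :
    ∃ ε : ℝ, 0 < ε ∧ ∀ t : ℝ, 0 < t → t < ε → InteriorPt e (u + t • rayDir i s) := by
  obtain ⟨j, s', hs', ε, hε, hh⟩ := edge_dir H he h
  have hm := (hh (ε/2) (by linarith) (by linarith)).1
  have hne : u + (ε/2) • rayDir j s' ≠ u := by
    simpa using ⟨hε.ne', rayDir_ne j s'⟩
  obtain ⟨rfl, rfl⟩ := XiRay_inter hne (hs hm) (hs' hm)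
  exact ⟨ε, hε, hh⟩

lemma dir_unique {u : Pt} {e : Set Pt} {i j : Fin 3} {s s' : Bool} (he : e ∈ H.edges)
    (h : IsEnd u e) (hs : e ⊆ XiRay i s u) (hs' : e ⊆ XiRay j s' u) : i = j ∧ s = s' := by
  obtain ⟨ε, hε, hh⟩ := edge_full H he h hs
  have hm := (hh (ε/2) (by linarith) (by linarith)).1
  have hne : u + (ε/2) • rayDir i s ≠ u := by
    simpa using ⟨hε.ne', rayDir_ne i s⟩
  exact XiRay_inter hne (hs hm) (hs' hm)

lemma edge_unique {u : Pt} {e f : Set Pt} {i : Fin 3} {s : Bool} (he : e ∈ H.edges)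
    (hf : f ∈ H.edges) (h : IsEnd u e) (h' : IsEnd u f) (hs : e ⊆ XiRay i s u)
    (hs' : f ⊆ XiRay i s u) : e = f := by
  obtain ⟨ε, hε, hh⟩ := edge_full H he h hs
  obtain ⟨δ, hδ, hh'⟩ := edge_full H hf h' hs'
  by_contra hne
  have hpos : 0 < min ε δ := lt_min hε hδ
  have h1 := hh (min ε δ / 2) (by linarith) (by linarith [min_le_left ε δ])
  have h2 := hh' (min ε δ / 2) (by linarith) (by linarith [min_le_right ε δ])
  exact H.no_cross e he f hf hne _ h1 h2.1

lemma filter_iff {u : Pt} {e : Set Pt} {i : Fin 3} {s : Bool} (hu : u ∈ H.verts)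
    (he : e ∈ H.edges) :
    (u ∈ e ∧ IsLineL (e ∩ XiRay i s u)) ↔ (IsEnd u e ∧ e ⊆ XiRay i s u) := by
  constructor
  · rintro ⟨hue, hl⟩
    have hend := vert_end H hu he hue
    refine ⟨hend, ?_⟩
    obtain ⟨j, s', hs', -⟩ := edge_dir H he hend
    obtain ⟨x, hx, y, hy, hxy⟩ := line_two hl
    have : ∃ z ∈ e ∩ XiRay i s u, z ≠ u := by
      by_cases h : x = u
      · exact ⟨y, hy, fun h' => hxy (h.trans h'.symm)⟩
      · exact ⟨x, hx, h⟩
    obtain ⟨z, hz, hzu⟩ := this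
    obtain ⟨rfl, rfl⟩ := XiRay_inter hzu hz.2 (hs' hz.1)
    exact hs'
  · rintro ⟨h, hs⟩
    refine ⟨h.1, ?_⟩
    rw [Set.inter_eq_left.2 hs]
    exact (H.pre.1 e he).1

lemma wis_eq {u : Pt} {e : Set Pt} {i : Fin 3} {s : Bool} (hu : u ∈ H.verts)
    (he : e ∈ H.edges) (h : IsEnd u e) (hs : e ⊆ XiRay i s u) :
    wis H.edges H.w i s u = H.w e := by
  unfold wis
  have : H.edges.filter (fun ℓ => u ∈ ℓ ∧ IsLineL (ℓ ∩ XiRay i s u)) = {e} := by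
    ext f
    rw [Finset.mem_filter, Finset.mem_singleton]
    constructor
    · rintro ⟨hf, hh⟩
      obtain ⟨h1, h2⟩ := (filter_iff H hu hf).1 hh
      exact edge_unique H hf he h1 h h2 hs
    · rintro rfl
      exact ⟨he, (filter_iff H hu he).2 ⟨h, hs⟩⟩
  rw [this, Finset.sum_singleton]

lemma wis_pos {u : Pt} {i : Fin 3} {s : Bool} (hu : u ∈ H.verts)
    (h : 0 < wis H.edges H.w i s u) : ∃ e ∈ H.edges, IsEnd u e ∧ e ⊆ XiRay i s u := by
  unfold wis at h
  by_contra hc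
  push Not at hc
  rw [Finset.filter_false_of_mem] at h
  · simp at h
  · intro e he hh
    obtain ⟨h1, h2⟩ := (filter_iff H hu he).1 hh
    exact hc e he h1 h2

lemma ni_iff {u : Pt} {e : Set Pt} {i : Fin 3} {s : Bool} (he : e ∈ H.edges)
    (h : IsEnd u e) (hs : e ⊆ XiRay i s u) :
    NonIntegralEdge e ↔ ∀ z : ℤ, dcoord i u ≠ z := by
  constructor
  · rintro ⟨j, hp, hz⟩
    obtain ⟨ε, hε, hh⟩ := edge_full H he h hs
    have hm := (hh (ε/2) (by linarith) (by linarith)).1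
    have := hp _ hm u h.1
    rw [add_sub_cancel_left] at this
    obtain rfl := pdot_rayDir (by linarith) this
    exact hz u h.1
  · intro hz
    have hx : ∀ x ∈ e, pdot x (xiv i) = pdot u (xiv i) := by
      intro x hx
      obtain ⟨t, ht, rfl⟩ := hs hx
      have h1 := pdot_rayDir_self i s t
      have h2 := pdot_sub (u + t • rayDir i s) u (xiv i)
      rw [add_sub_cancel_left] at h2
      linarith
    refine ⟨i, fun x hx' y hy => ?_, fun x hx' => ?_⟩
    · rw [pdot_sub, hx x hx', hx y hy, sub_self]
    · have : dcoord i x = dcoord i u := by simp [dcoord, hx x hx']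
      rw [this]; exact hz

lemma other_ni {u : Pt} {i : Fin 3} (h : ∀ z : ℤ, dcoord i u ≠ z) :
    ∃ j, j ≠ i ∧ ∀ z : ℤ, dcoord j u ≠ z := by
  by_contra hc
  push Not at hc
  have hsum := dcoord_sum u
  fin_cases i
  · obtain ⟨a, ha⟩ := hc 1 (by decide)
    obtain ⟨b, hb⟩ := hc 2 (by decide)
    apply h (-a - b); push_cast; show dcoord 0 u = _; linarith
  · obtain ⟨a, ha⟩ := hc 0 (by decide)
    obtain ⟨b, hb⟩ := hc 2 (by decide)
    apply h (-a - b); push_cast; show dcoord 1 u = _; linarith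
  · obtain ⟨a, ha⟩ := hc 0 (by decide)
    obtain ⟨b, hb⟩ := hc 1 (by decide)
    apply h (-a - b); push_cast; show dcoord 2 u = _; linarith

/-! ## Local facts -/

structure Inc (u : Pt) (e : Set Pt) : Prop where
  vert : u ∈ H.verts
  edge : e ∈ H.edges
  isEnd : IsEnd u e
  ni : NonIntegralEdge e

/-- absolute value of the divergency -/
def dv (u : Pt) : ℕ := (divw H.edges H.w u).natAbs

lemma div_eq (u : Pt) (i : Fin 3) :
    divw H.edges H.w u = wis H.edges H.w i true u - wis H.edges H.w i false u :=
  H.pre.2.2 u 0 i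

lemma div_cases (u : Pt) (i j : Fin 3) (s : Bool) :
    wis H.edges H.w i s u - wis H.edges H.w i (!s) u
      = wis H.edges H.w j s u - wis H.edges H.w j (!s) u := by
  have := H.pre.2.2 u i j
  cases s <;> simp <;> linarith

lemma dv_of_lt (u : Pt) (i : Fin 3) (s : Bool)
    (h : wis H.edges H.w i (!s) u < wis H.edges H.w i s u) :
    (dv H u : ℤ) = wis H.edges H.w i s u - wis H.edges H.w i (!s) u := by
  unfold dv
  have := div_eq H u i
  cases s <;> simp at h ⊢ <;> rw [this, abs_sub_comm] <;> first
    | (rw [abs_of_pos (by linarith)]) | (rw [abs_sub_comm, abs_of_pos (by linarith)])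

variable {H} {u : Pt} {e f g : Set Pt}

lemma Inc.dom_iff {i : Fin 3} {s : Bool} (h : Inc H u e) (hs : e ⊆ XiRay i s u) :
    Dominating H u e ↔ wis H.edges H.w i (!s) u < wis H.edges H.w i s u := by
  constructor
  · rintro ⟨j, s', -, hs', hlt⟩
    obtain ⟨rfl, rfl⟩ := dir_unique H h.edge h.isEnd hs hs'
    exact hlt
  · intro hlt
    exact ⟨i, s, h.isEnd, hs, hlt⟩

lemma Inc.dir (h : Inc H u e) : ∃ i s, e ⊆ XiRay i s u ∧ wis H.edges H.w i s u = H.w e := by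
  obtain ⟨i, s, hs, -⟩ := edge_dir H h.edge h.isEnd
  exact ⟨i, s, hs, wis_eq H h.vert h.edge h.isEnd hs⟩

lemma Inc.wpos (h : Inc H u e) : 0 < H.w e := H.w_pos e h.edge

lemma opp_symm (h : OppositeAt u e f) : OppositeAt u f e := by
  obtain ⟨i, s, h1, h2⟩ := h
  exact ⟨i, !s, h2, by simpa using h1⟩

lemma opp_unique (he : Inc H u e) (hf : Inc H u f) (hg : Inc H u g)
    (h1 : OppositeAt u e f) (h2 : OppositeAt u e g) : f = g := by
  obtain ⟨i, s, ha, hb⟩ := h1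
  obtain ⟨j, s', hc, hd⟩ := h2
  obtain ⟨rfl, rfl⟩ := dir_unique H he.edge he.isEnd ha hc
  exact edge_unique H hf.edge hg.edge hf.isEnd hg.isEnd hb hd

lemma opp_ne (he : Inc H u e) (h : OppositeAt u e f) : e ≠ f := by
  rintro rfl
  obtain ⟨i, s, ha, hb⟩ := h
  have := (dir_unique H he.edge he.isEnd ha hb).2
  cases s <;> simp at this

lemma opp_exists (he : Inc H u e) (hd : ¬ Dominating H u e) :
    ∃ f, Inc H u f ∧ OppositeAt u e f := by
  obtain ⟨i, s, hs, hw⟩ := he.dir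
  rw [he.dom_iff hs, not_lt] at hd
  obtain ⟨f, hf, hfe, hfs⟩ := wis_pos H he.vert (lt_of_lt_of_le (hw ▸ he.wpos) hd)
  refine ⟨f, ⟨he.vert, hf, hfe, ?_⟩, i, s, hs, hfs⟩
  rw [ni_iff H hf hfe hfs, ← ni_iff H he.edge he.isEnd hs]
  exact he.ni

lemma opp_data (he : Inc H u e) (hf : Inc H u f) (h : OppositeAt u e f) :
    ∃ i s, e ⊆ XiRay i s u ∧ f ⊆ XiRay i (!s) u ∧ wis H.edges H.w i s u = H.w e ∧
      wis H.edges H.w i (!s) u = H.w f := by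
  obtain ⟨i, s, ha, hb⟩ := h
  exact ⟨i, s, ha, hb, wis_eq H he.vert he.edge he.isEnd ha, wis_eq H hf.vert hf.edge hf.isEnd hb⟩

lemma opp_dom (he : Inc H u e) (hf : Inc H u f) (h : OppositeAt u e f) :
    (Dominating H u e ↔ H.w f < H.w e) := by
  obtain ⟨i, s, h1, h2, h3, h4⟩ := opp_data he hf h
  rw [he.dom_iff h1, h3, h4]

lemma dom_noopp (he : Inc H u e) (hd : Dominating H u e)
    (hn : ∀ f, Inc H u f → ¬ OppositeAt u e f) : H.w e = dv H u := by
  obtain ⟨i, s, hs, hw⟩ := he.dir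
  rw [he.dom_iff hs] at hd
  rw [dv_of_lt H u i s hd, hw]
  rcases (H.pre.2.1 u i (!s)).eq_or_lt with h0 | h0
  · rw [← h0, sub_zero]
  · obtain ⟨f, hf, hfe, hfs⟩ := wis_pos H he.vert h0
    refine absurd ⟨i, s, hs, hfs⟩ (hn f ⟨he.vert, hf, hfe, ?_⟩)
    rw [ni_iff H hf hfe hfs, ← ni_iff H he.edge he.isEnd hs]
    exact he.ni

lemma dom_pos (he : Inc H u e) (hd : Dominating H u e) : 1 ≤ dv H u := by
  obtain ⟨i, s, hs, hw⟩ := he.dir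
  rw [he.dom_iff hs] at hd
  have := dv_of_lt H u i s hd
  omega

lemma dom_other (he : Inc H u e) (hd : Dominating H u e) :
    ∃ f, Inc H u f ∧ Dominating H u f ∧ e ≠ f := by
  obtain ⟨i, s, hs, hw⟩ := he.dir
  rw [he.dom_iff hs] at hd
  obtain ⟨j, hji, hj⟩ := other_ni ((ni_iff H he.edge he.isEnd hs).1 he.ni)
  have hlt : wis H.edges H.w j (!s) u < wis H.edges H.w j s u := by
    have := div_cases H u i j s
    linarith
  obtain ⟨f, hf, hfe, hfs⟩ := wis_pos H he.vert
    (lt_of_le_of_lt (H.pre.2.1 u j (!s)) hlt)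
  refine ⟨f, ⟨he.vert, hf, hfe, (ni_iff H hf hfe hfs).2 hj⟩, ⟨j, s, hfe, hfs, hlt⟩, ?_⟩
  rintro rfl
  exact hji (dir_unique H hf hfe hfs hs).1

lemma third_index : ∀ i j : Fin 3, j ≠ i → ∃ k : Fin 3, ∀ l, l ≠ i → l ≠ j → l = k := by
  intro i j h
  refine ⟨-(i + j), fun l h1 h2 => ?_⟩
  fin_cases i <;> fin_cases j <;> fin_cases l <;> first | rfl | exact absurd rfl h | exact absurd rfl h1 | exact absurd rfl h2

lemma exists_ni_edge (H : Honeycomb)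
    (hni : ∃ v ∈ H.verts, ∃ i : Fin 3, ∀ z : ℤ, dcoord i v ≠ (z : ℝ)) :
    ∃ u e, Inc H u e := by
  obtain ⟨v, hv, i, hi⟩ := hni
  obtain ⟨j, hji, hj⟩ := other_ni hi
  by_contra hc
  push Not at hc
  have h3 := H.degree v hv
  have hk : ∃ k : Fin 3, ∀ l, l ≠ i → l ≠ j → l = k := by
    exact third_index i j hji
  obtain ⟨k, hk⟩ := hk
  have hdir : ∀ e ∈ H.edges.filter (fun e => IsEnd v e), ∃ s, e ⊆ XiRay k s v := by
    intro e he
    rw [Finset.mem_filter] at he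
    obtain ⟨l, s, hs, -⟩ := edge_dir H he.1 he.2
    have hn : ¬ NonIntegralEdge e := fun h => hc v e ⟨hv, he.1, he.2, h⟩
    rw [ni_iff H he.1 he.2 hs] at hn
    obtain rfl := hk l (by rintro rfl; exact hn hi) (by rintro rfl; exact hn hj)
    exact ⟨s, hs⟩
  choose! σ hσ using hdir
  have := Finset.card_le_card_of_injOn (t := (Finset.univ : Finset Bool)) σ (fun x _ => by simp)
    (s := H.edges.filter (fun e => IsEnd v e)) (by
      intro e he f hf hef
      have h1 := hσ e he
      have h2 := hσ f hf
      rw [← hef] at h2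
      rw [Finset.mem_coe, Finset.mem_filter] at he hf
      exact edge_unique H he.1 hf.1 he.2 hf.2 h1 h2)
  simp at this
  omega

/-! ## Darts and greedy paths -/

variable (H)

def IsDart (a : Option Pt) (e : Set Pt) (b : Option Pt) : Prop :=
  e ∈ H.edges ∧ NonIntegralEdge e ∧
  ((∃ x y : Pt, a = some x ∧ b = some y ∧ x ≠ y ∧ e = segment ℝ x y) ∨
    (a = none ∧ ∃ y : Pt, b = some y ∧ IsRayFrom y e) ∨
    (b = none ∧ ∃ x : Pt, a = some x ∧ IsRayFrom x e))

def Turn (q : ℕ → Set Pt) (v : ℕ → Option Pt) (u : Pt) (i : ℕ) : Prop :=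
  v i = some u ∧ ¬ OppositeAt u (q i) (q (i + 1))

structure HInv (n : ℕ) (q : ℕ → Set Pt) (v : ℕ → Option Pt) : Prop where
  pos : 1 ≤ n
  dart : ∀ i, i < n → IsDart H (v i) (q (i + 1)) (v (i + 1))
  legal : ∀ i, 1 ≤ i → i < n → ∃ u, v i = some u ∧ LegalPair H u (q i) (q (i + 1))
  uniq : ∀ i j, i < j → j < n → q (i + 1) = q (j + 1) → v i ≠ v j
  dbl : ∀ i j, i < j → j < n → q (i + 1) = q (j + 1) → 1 < H.w (q (i + 1))
  str : ∀ i u, 1 ≤ i → i < n → v i = some u → Dominating H u (q i) →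
    OppositeAt u (q i) (q (i + 1)) → ∃ j, 1 ≤ j ∧ j < i ∧ Turn q v u j ∧ q (j + 1) = q i
  turn2 : ∀ i j u, 1 ≤ i → i < j → j < n → Turn q v u i → Turn q v u j →
    q j = q (i + 1) ∧ q (j + 1) = q i ∧ 2 ≤ dv H u

/-- a closing cycle exists at the end of the path -/
def Cyc (n : ℕ) (q : ℕ → Set Pt) (v : ℕ → Option Pt) : Prop :=
  ∃ m u, m + 1 < n ∧ v m = some u ∧ v n = some u ∧ LegalPair H u (q n) (q (m + 1)) ∧
    (OppositeAt u (q n) (q (m + 1)) ∨ (∀ i, m < i → i < n → ¬ Turn q v u i) ∨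
      (2 ≤ dv H u ∧ ∀ i j, 1 ≤ i → i < n → 1 ≤ j → j < n → Turn q v u i → Turn q v u j → i = j))

/-- the candidate for the next edge -/
def Cand (n : ℕ) (q : ℕ → Set Pt) (v : ℕ → Option Pt) (u : Pt) (f : Set Pt) : Prop :=
  (LegalPair H u (q n) f ∧ f ∈ H.edges) ∧
  (OppositeAt u (q n) f ∨
    (¬ OppositeAt u (q n) f ∧ Dominating H u (q n) ∧ Dominating H u f ∧
      ((∀ i, 1 ≤ i → i < n → ¬ Turn q v u i) ∨
       ∃ j, 1 ≤ j ∧ j < n ∧ Turn q v u j ∧ q (j + 1) = q n ∧ f = q j ∧ 2 ≤ dv H u ∧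
        ∀ i, 1 ≤ i → i < n → Turn q v u i → i = j))) ∧
  (Dominating H u (q n) → OppositeAt u (q n) f →
    ∃ j, 1 ≤ j ∧ j < n ∧ Turn q v u j ∧ q (j + 1) = q n)

variable {H} {n : ℕ} {q q' : ℕ → Set Pt} {v v' : ℕ → Option Pt} {a b a' b' : Option Pt}

lemma IsDart.ends (h : IsDart H a e b) (x : Pt) : IsEnd x e ↔ (a = some x ∨ b = some x) := by
  obtain ⟨-, -, ⟨y, z, rfl, rfl, hyz, rfl⟩ | ⟨rfl, y, rfl, hr⟩ | ⟨rfl, y, rfl, hr⟩⟩ := h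
  · rw [seg_end_iff y z x hyz]; simp [eq_comm]
  · rw [rayFrom_end_iff y x e hr]; simp [eq_comm]
  · rw [rayFrom_end_iff y x e hr]; simp [eq_comm]

lemma IsDart.ne (h : IsDart H a e b) : a ≠ b := by
  obtain ⟨-, -, ⟨y, z, rfl, rfl, hyz, rfl⟩ | ⟨rfl, y, rfl, hr⟩ | ⟨rfl, y, rfl, hr⟩⟩ := h
  · simpa using hyz
  · simp
  · simp

lemma IsDart.flip (h : IsDart H a e b) (h' : IsDart H a' e b') :
    (a = a' ∧ b = b') ∨ (a = b' ∧ b = a') := by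
  have h1 := h.ne
  have h2 := h'.ne
  have h3 : ∀ x, (a = some x ∨ b = some x) ↔ (a' = some x ∨ b' = some x) := fun x => by
    rw [← h.ends, ← h'.ends]
  clear h h'
  rcases a with _ | a <;> rcases b with _ | b <;> rcases a' with _ | a' <;>
    rcases b' with _ | b' <;> grind

lemma IsDart.incR {u : Pt} (h : IsDart H a e (some u)) : Inc H u e := by
  have he := (h.ends u).2 (Or.inr rfl)
  exact ⟨H.ends_mem e h.1 u he, h.1, he, h.2.1⟩

lemma IsDart.incL {u : Pt} (h : IsDart H (some u) e b) : Inc H u e := by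
  have he := (h.ends u).2 (Or.inl rfl)
  exact ⟨H.ends_mem e h.1 u he, h.1, he, h.2.1⟩

lemma Inc.dart (h : Inc H u e) : ∃ b, IsDart H (some u) e b := by
  rcases edge_cases H h.edge with ⟨x, y, hxy, he⟩ | ⟨x, hx⟩
  · have := h.isEnd
    rw [he, seg_end_iff x y u hxy] at this
    rcases this with rfl | rfl
    · exact ⟨some y, h.edge, h.ni, Or.inl ⟨_, _, rfl, rfl, hxy, he⟩⟩
    · exact ⟨some x, h.edge, h.ni, Or.inl ⟨_, _, rfl, rfl, hxy.symm, by rw [he, segment_symm]⟩⟩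
  · have := h.isEnd
    rw [rayFrom_end_iff x u e hx] at this
    subst this
    exact ⟨none, h.edge, h.ni, Or.inr (Or.inr ⟨rfl, u, rfl, hx⟩)⟩

lemma Turn.congr {i : ℕ} (hq : ∀ i, i ≤ n → q' i = q i) (hv : ∀ i, i ≤ n → v' i = v i)
    (hi : i < n) : Turn q' v' u i ↔ Turn q v u i := by
  unfold Turn
  rw [hv i hi.le, hq i hi.le, hq (i + 1) hi]

lemma HInv.congr (h : HInv H n q v) (hq : ∀ i, i ≤ n → q' i = q i) (hv : ∀ i, i ≤ n → v' i = v i) :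
    HInv H n q' v' := by
  refine ⟨h.pos, ?_, ?_, ?_, ?_, ?_, ?_⟩
  · intro i hi
    rw [hv i hi.le, hq (i+1) hi, hv (i+1) hi]; exact h.dart i hi
  · intro i h1 hi
    rw [hv i hi.le, hq (i+1) hi, hq i hi.le]; exact h.legal i h1 hi
  · intro i j hij hj
    rw [hv i (by omega), hv j (by omega), hq _ (by omega), hq (j+1) (by omega)]
    exact h.uniq i j hij hj
  · intro i j hij hj
    rw [hq _ (by omega), hq (j+1) (by omega)]
    exact h.dbl i j hij hj
  · intro i u h1 hi
    rw [hv i (by omega), hq i (by omega), hq (i+1) (by omega)]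
    intro h2 h3 h4
    obtain ⟨j, hj1, hj2, hj3, hj4⟩ := h.str i u h1 hi h2 h3 h4
    exact ⟨j, hj1, hj2, (Turn.congr hq hv (by omega)).2 hj3, by rw [hq _ (by omega)]; exact hj4⟩
  · intro i j u h1 hij hj ht ht'
    rw [Turn.congr hq hv (by omega)] at ht ht'
    rw [hq _ (by omega), hq _ (by omega), hq (j+1) (by omega), hq i (by omega)]
    exact h.turn2 i j u h1 hij hj ht ht'

lemma Cand.congr (h : Cand H n q v u f) (hq : ∀ i, i ≤ n → q' i = q i)
    (hv : ∀ i, i ≤ n → v' i = v i) : Cand H n q' v' u f := by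
  obtain ⟨h1, h2, h3⟩ := h
  unfold Cand
  rw [hq n le_rfl]
  refine ⟨h1, ?_, ?_⟩
  · rcases h2 with h2 | ⟨ha, hb, hc, h2⟩
    · exact Or.inl h2
    · refine Or.inr ⟨ha, hb, hc, ?_⟩
      rcases h2 with h2 | ⟨j, j1, j2, j3, j4, j5, j6, j7⟩
      · left
        intro i i1 i2
        rw [Turn.congr hq hv i2]; exact h2 i i1 i2
      · right
        refine ⟨j, j1, j2, (Turn.congr hq hv j2).2 j3, ?_, ?_, j6, ?_⟩
        · rw [hq _ (by omega)]; exact j4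
        · rw [hq _ (by omega)]; exact j5
        · intro i i1 i2
          rw [Turn.congr hq hv i2]; exact j7 i i1 i2
  · intro ha hb
    obtain ⟨j, j1, j2, j3, j4⟩ := h3 ha hb
    exact ⟨j, j1, j2, (Turn.congr hq hv j2).2 j3, by rw [hq _ (by omega)]; exact j4⟩

lemma HInv.incR (h : HInv H n q v) {i : ℕ} (h1 : 1 ≤ i) (hi : i ≤ n) (hv : v i = some u) :
    Inc H u (q i) := by
  obtain ⟨i, rfl⟩ : ∃ j, i = j + 1 := ⟨i - 1, by omega⟩
  have := h.dart i (by omega)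
  rw [hv] at this
  exact this.incR

lemma HInv.incL (h : HInv H n q v) {i : ℕ} (hi : i < n) (hv : v i = some u) :
    Inc H u (q (i + 1)) := by
  have := h.dart i hi
  rw [hv] at this
  exact this.incL

lemma HInv.legal' (h : HInv H n q v) {i : ℕ} (h1 : 1 ≤ i) (hi : i < n) (hv : v i = some u) :
    LegalPair H u (q i) (q (i + 1)) := by
  obtain ⟨u', hu', hl⟩ := h.legal i h1 hi
  rw [hv] at hu'
  cases hu'
  exact hl

lemma HInv.turn_dom (h : HInv H n q v) {i : ℕ} (h1 : 1 ≤ i) (hi : i < n) (ht : Turn q v u i) :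
    Dominating H u (q i) ∧ Dominating H u (q (i + 1)) := by
  rcases (h.legal' h1 hi ht.1).2.2.2.2.2 with ho | hd
  · exact absurd ho ht.2
  · exact hd

lemma HInv.uniqL (h : HInv H n q v) {i j : ℕ} (hi : i < n) (hj : j < n)
    (hq : q (i + 1) = q (j + 1)) (hv : v i = v j) : i = j := by
  rcases lt_trichotomy i j with hl | hl | hl
  · exact absurd hv (h.uniq i j hl hj hq)
  · exact hl
  · exact absurd hv.symm (h.uniq j i hl hi hq.symm)

lemma HInv.uniqR (h : HInv H n q v) {i j : ℕ} (hi1 : 1 ≤ i) (hi : i ≤ n) (hj1 : 1 ≤ j) (hj : j ≤ n)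
    (hq : q i = q j) (hv : v i = v j) : i = j := by
  obtain ⟨i, rfl⟩ : ∃ k, i = k + 1 := ⟨i - 1, by omega⟩
  obtain ⟨j, rfl⟩ : ∃ k, j = k + 1 := ⟨j - 1, by omega⟩
  have d1 := h.dart i (by omega)
  have d2 := h.dart j (by omega)
  rw [hq] at d1
  rcases d1.flip d2 with hf | hf
  · rw [h.uniqL (by omega) (by omega) hq hf.1]
  · exact absurd (hf.1.trans hv.symm) d1.ne

lemma opp_dom_not (he : Inc H u e) (hf : Inc H u f) (h : OppositeAt u e f)
    (h1 : Dominating H u e) : ¬ Dominating H u f := by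
  rw [opp_dom he hf h] at h1
  rw [opp_dom hf he (opp_symm h)]
  omega

lemma HInv.candidate (h : HInv H n q v) (hu : v n = some u) :
    Cyc H n q v ∨ ∃ f, Cand H n q v u f := by
  have hI : Inc H u (q n) := h.incR h.pos le_rfl hu
  by_cases hd : Dominating H u (q n)
  swap
  · obtain ⟨f, hf, ho⟩ := opp_exists hI hd
    exact Or.inr ⟨f, ⟨⟨opp_ne hI ho, hI.ni, hf.ni, hI.isEnd, hf.isEnd, Or.inl ho⟩, hf.edge⟩, Or.inl ho,
      fun h => absurd h hd⟩
  by_cases hT : ∃ i, 1 ≤ i ∧ i < n ∧ Turn q v u i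
  swap
  · push Not at hT
    obtain ⟨f, hf, hfd, hne⟩ := dom_other hI hd
    have hno : ¬ OppositeAt u (q n) f := fun ho => opp_dom_not hI hf ho hd hfd
    exact Or.inr ⟨f, ⟨⟨hne, hI.ni, hf.ni, hI.isEnd, hf.isEnd, Or.inr ⟨hd, hfd⟩⟩, hf.edge⟩,
      Or.inr ⟨hno, hd, hfd, Or.inl hT⟩, fun _ ho => absurd ho hno⟩
  -- last turn
  obtain ⟨j, ⟨hj1, hjn, hjT⟩, hlast⟩ : ∃ j, (1 ≤ j ∧ j < n ∧ Turn q v u j) ∧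
      ∀ i, 1 ≤ i → i < n → Turn q v u i → i ≤ j := by
    obtain ⟨i0, hi0⟩ := hT
    have := Nat.findGreatest_spec (P := fun i => 1 ≤ i ∧ i < n ∧ Turn q v u i) (n := n)
      hi0.2.1.le hi0
    exact ⟨_, this, fun i a b c => Nat.le_findGreatest b.le ⟨a, b, c⟩⟩
  have hjI : Inc H u (q j) := h.incR hj1 hjn.le hjT.1
  have hjI' : Inc H u (q (j + 1)) := h.incL hjn hjT.1
  have hjd := h.turn_dom hj1 hjn hjT
  by_cases hq : q (j + 1) = q n
  swap
  · left
    have : j + 1 ≠ n := fun hh => hq (by rw [hh])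
    exact ⟨j, u, by omega, hjT.1, hu, ⟨Ne.symm hq, hI.ni, hjI'.ni, hI.isEnd, hjI'.isEnd,
      Or.inr ⟨hd, hjd.2⟩⟩, Or.inr (Or.inl fun i i1 i2 i3 => by
        have := hlast i (by omega) i2 i3
        omega)⟩
  right
  by_cases hopp : ∃ f, Inc H u f ∧ OppositeAt u (q n) f
  · obtain ⟨f, hf, ho⟩ := hopp
    exact ⟨f, ⟨⟨opp_ne hI ho, hI.ni, hf.ni, hI.isEnd, hf.isEnd, Or.inl ho⟩, hf.edge⟩, Or.inl ho,
      fun _ _ => ⟨j, hj1, hjn, hjT, hq⟩⟩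
  push Not at hopp
  have hw := dom_noopp hI hd hopp
  have hj1n : j + 1 ≠ n := by
    intro hh
    have := (h.dart j hjn).ne
    rw [hh, hu, hjT.1] at this
    exact this rfl
  have hw2 : 1 < H.w (q n) := by
    have := h.dbl j (n - 1) (by omega) (by omega) (by rw [hq]; congr 1; omega)
    rwa [hq] at this
  have hne : q n ≠ q j := by
    rw [← hq]
    exact (h.legal' hj1 hjn hjT.1).1.symm
  have hno := hopp (q j) hjI
  refine ⟨q j, ⟨⟨hne, hI.ni, hjI.ni, hI.isEnd, hjI.isEnd, Or.inr ⟨hd, hjd.1⟩⟩, hjI.edge⟩,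
    Or.inr ⟨hno, hd, hjd.1, Or.inr ⟨j, hj1, hjn, hjT, hq, rfl, by omega, ?_⟩⟩,
    fun _ ho => absurd ho hno⟩
  intro i i1 i2 i3
  by_contra hij
  have hlt : i < j := lt_of_le_of_ne (hlast i i1 i2 i3) hij
  have := (h.turn2 i j u i1 hlt hjn i3 hjT).2.1
  have := h.uniqR i1 i2.le h.pos le_rfl (this.symm.trans hq) (i3.1.trans hu.symm)
  omega

lemma Cand.inc (h : HInv H n q v) (hu : v n = some u) (hc : Cand H n q v u f) :
    Inc H u f :=
  ⟨(h.incR h.pos le_rfl hu).vert, hc.1.2, hc.1.1.2.2.2.2.1, hc.1.1.2.2.1⟩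

lemma HInv.weight (h : HInv H n q v) (hu : v n = some u) (hc : Cand H n q v u f)
    (hf : Inc H u f) {i : ℕ} (i1 : 1 ≤ i) (i2 : i < n) (hi : q i = f) (hvi : v i = some u) :
    1 < H.w f := by
  have hI : Inc H u (q n) := h.incR h.pos le_rfl hu
  have hL := h.legal' i1 i2 hvi
  have hI' : Inc H u (q (i + 1)) := h.incL i2 hvi
  obtain ⟨hl, hopp | ⟨hno, hd, hfd, hrule⟩, hst⟩ := hc
  · by_cases hfd : Dominating H u f
    · rw [opp_dom hf hI (opp_symm hopp)] at hfd
      have := hI.wpos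
      omega
    · rw [hi] at hL
      rcases hL.2.2.2.2.2 with ho | hdd
      swap
      · exact absurd hdd.1 hfd
      have hqe : q (i + 1) = q n := opp_unique hf hI' hI ho (opp_symm hopp)
      have hin : i + 1 ≠ n := by
        intro hh
        have := (h.dart i i2).ne
        rw [hh, hu, hvi] at this
        exact this rfl
      have hw2 : 1 < H.w (q n) := by
        have := h.dbl i (n - 1) (by omega) (by omega) (by rw [hqe]; congr 1; omega)
        rwa [hqe] at this
      by_cases hd : Dominating H u (q n)
      · obtain ⟨j, j1, j2, j3, j4⟩ := hst hd hopp
        have := h.uniqL i2 j2 (hqe.trans j4.symm) (hvi.trans j3.1.symm)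
        subst this
        rw [← hi] at ho
        exact absurd ho j3.2
      · rw [opp_dom hI hf hopp] at hd
        omega
  · by_contra hw
    have hwf := hf.wpos
    have hnoopp : ∀ g, Inc H u g → ¬ OppositeAt u f g := by
      intro g hg ho
      have := (opp_dom hf hg ho).1 hfd
      have := hg.wpos
      omega
    have hdv := dom_noopp hf hfd hnoopp
    have ht : Turn q v u i := ⟨hvi, by rw [hi]; exact hnoopp _ hI'⟩
    rcases hrule with hr | ⟨j, -, -, -, -, -, hr, -⟩
    · exact hr i i1 i2 ht
    · omega

lemma HInv.extend (h : HInv H n q v) (hu : v n = some u) (hc : Cand H n q v u (q (n + 1)))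
    (hdart : IsDart H (some u) (q (n + 1)) (v (n + 1)))
    (hnew : ∀ i, i < n → q (i + 1) = q (n + 1) → v i ≠ some u) : HInv H (n + 1) q v := by
  have hf := hdart.incL
  refine ⟨by omega, ?_, ?_, ?_, ?_, ?_, ?_⟩
  · intro i hi
    rcases (Nat.lt_succ_iff.1 hi).eq_or_lt with rfl | hi
    · rw [hu]; exact hdart
    · exact h.dart i hi
  · intro i i1 hi
    rcases (Nat.lt_succ_iff.1 hi).eq_or_lt with rfl | hi
    · exact ⟨u, hu, hc.1.1⟩
    · exact h.legal i i1 hi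
  · intro i j hij hj
    rcases (Nat.lt_succ_iff.1 hj).eq_or_lt with rfl | hj
    · rw [hu]; exact hnew i hij
    · exact h.uniq i j hij hj
  · intro i j hij hj hqq
    rcases (Nat.lt_succ_iff.1 hj).eq_or_lt with rfl | hj
    · have hn := hnew i hij hqq
      have d := h.dart i hij
      rw [hqq] at d ⊢
      rcases d.flip hdart with hh | hh
      · exact absurd hh.1 hn
      · have hne : i + 1 ≠ j := by
          intro h2
          rw [h2] at hqq
          exact hc.1.1.1 hqq
        exact h.weight hu hc hf (i := i + 1) (by omega) (by omega) hqq hh.2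
    · exact h.dbl i j hij hj hqq
  · intro i u' i1 hi hv hd ho
    rcases (Nat.lt_succ_iff.1 hi).eq_or_lt with rfl | hi
    · rw [hu] at hv
      cases hv
      exact hc.2.2 hd ho
    · exact h.str i u' i1 hi hv hd ho
  · intro i j u' i1 hij hj ht ht'
    rcases (Nat.lt_succ_iff.1 hj).eq_or_lt with rfl | hj
    · have := ht'.1
      rw [hu] at this
      cases this
      rcases hc.2.1 with ho | ⟨-, -, -, hr | ⟨k, k1, k2, k3, k4, k5, k6, k7⟩⟩
      · exact absurd ho ht'.2
      · exact absurd ht (hr i i1 hij)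
      · obtain rfl := k7 i i1 hij ht
        exact ⟨k4.symm, k5, k6⟩
    · exact h.turn2 i j u' i1 hij hj ht ht'

lemma HInv.step (h : HInv H n q v) (hu : v n = some u) :
    Cyc H n q v ∨ ∃ q' v', HInv H (n + 1) q' v' ∧ v' 0 = v 0 := by
  rcases h.candidate hu with hc | ⟨f, hc⟩
  · exact Or.inl hc
  by_cases hold : ∃ i, i < n ∧ q (i + 1) = f ∧ v i = some u
  · left
    obtain ⟨i, hi, hqf, hvi⟩ := hold
    have hne : i + 1 ≠ n := by
      intro h2
      rw [h2] at hqf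
      exact hc.1.1.1 hqf
    refine ⟨i, u, by omega, hvi, hu, by rw [hqf]; exact hc.1.1, ?_⟩
    rw [hqf]
    rcases hc.2.1 with ho | ⟨-, -, -, hr | ⟨k, k1, k2, k3, k4, k5, k6, k7⟩⟩
    · exact Or.inl ho
    · exact Or.inr (Or.inl fun j j1 j2 => hr j (by omega) j2)
    · refine Or.inr (Or.inr ⟨k6, fun j l j1 j2 l1 l2 jt lt => ?_⟩)
      rw [k7 j j1 j2 jt, k7 l l1 l2 lt]
  · right
    push Not at hold
    obtain ⟨b, hb⟩ := (Cand.inc h hu hc).dart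
    have e1 : ∀ i, i ≤ n → Function.update q (n + 1) f i = q i := fun i hi => by
      rw [Function.update_of_ne (by omega)]
    have e2 : ∀ i, i ≤ n → Function.update v (n + 1) b i = v i := fun i hi => by
      rw [Function.update_of_ne (by omega)]
    refine ⟨Function.update q (n + 1) f, Function.update v (n + 1) b, ?_, e2 0 (by omega)⟩
    refine (h.congr e1 e2).extend (u := u) (by rw [e2 n le_rfl, hu]) ?_ ?_ ?_
    · rw [Function.update_self]; exact hc.congr e1 e2
    · rw [Function.update_self, Function.update_self]; exact hb
    · intro i hi
      rw [Function.update_self, e1 _ (by omega), e2 _ (by omega)]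
      exact hold i hi

lemma HInv.bound (h : HInv H n q v) :
    n ≤ ((insert none (H.verts.image some)) ×ˢ H.edges).card := by
  have := Finset.card_le_card_of_injOn (s := Finset.range n)
    (t := (insert none (H.verts.image some)) ×ˢ H.edges) (fun i => (v i, q (i + 1))) (by
      intro i hi
      rw [Finset.mem_coe, Finset.mem_range] at hi
      rw [Finset.mem_coe, Finset.mem_product]
      refine ⟨?_, (h.dart i hi).1⟩
      rw [Finset.mem_insert, Finset.mem_image]
      rcases hv : v i with _ | x
      · left; exact hv
      · exact Or.inr ⟨x, (h.incL hi hv).vert, hv.symm⟩) (by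
      intro i hi j hj hij
      rw [Finset.mem_coe, Finset.mem_range] at hi hj
      simp only [Prod.mk.injEq] at hij
      exact h.uniqL hi hj hij.2 hij.1)
  rwa [Finset.card_range] at this

lemma run_all (o : Option Pt) (q0 : ℕ → Set Pt) (v0 : ℕ → Option Pt) (h0 : HInv H 1 q0 v0)
    (hv0 : v0 0 = o) :
    ∃ n q v, HInv H n q v ∧ v 0 = o ∧ (Cyc H n q v ∨ v n = none) := by
  by_contra hc
  push Not at hc
  have : ∀ N, ∃ q v, HInv H (N + 1) q v ∧ v 0 = o := by
    intro N
    induction N with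
    | zero => exact ⟨q0, v0, h0, hv0⟩
    | succ N ih =>
      obtain ⟨q, v, hi, ho⟩ := ih
      obtain ⟨hcy, hn⟩ := hc _ q v hi ho
      obtain ⟨u, hu⟩ := Option.ne_none_iff_exists'.1 hn
      rcases hi.step hu with h | ⟨q', v', h1, h2⟩
      · exact absurd h hcy
      · exact ⟨q', v', h1, h2.trans ho⟩
  obtain ⟨q, v, hi, -⟩ := this (((insert none (H.verts.image some)) ×ˢ H.edges).card)
  have := hi.bound
  omega

lemma HInv.start {e : Set Pt} (h : IsDart H a e b) :
    HInv H 1 (fun _ => e) (fun i => if i = 0 then a else b) := by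
  refine ⟨le_rfl, ?_, ?_, ?_, ?_, ?_, ?_⟩
  · intro i hi
    obtain rfl : i = 0 := by omega
    simpa using h
  all_goals intros; omega

/-- The window of the path from position m on. -/
lemma HInv.window (h : HInv H n q v) (m : ℕ) (hm : m + 1 < n) :
    IsLegalPath H (n - m) (fun i => q (m + i)) (fun i => v (m + i)) := by
  have hsome : ∀ i, 1 ≤ i → i < n → ∃ u, v i = some u := fun i h1 h2 => by
    obtain ⟨u, hu, -⟩ := h.legal i h1 h2
    exact ⟨u, hu⟩
  refine ⟨⟨by omega, ?_, ?_, ?_, ?_⟩, ?_⟩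
  · intro i i1 i2
    obtain ⟨j, rfl⟩ : ∃ j, i = j + 1 := ⟨i - 1, by omega⟩
    exact (h.dart (m + j) (by omega)).1
  · intro i i1 i2
    obtain ⟨j, rfl⟩ : ∃ j, i = j + 1 := ⟨i - 1, by omega⟩
    obtain ⟨x, hx⟩ := hsome (m + j) (by omega) (by omega)
    obtain ⟨y, hy⟩ := hsome (m + (j + 1)) (by omega) (by omega)
    have d := h.dart (m + j) (by omega)
    rcases d.2.2 with ⟨a, b, ha, hb, hab, hq⟩ | ⟨ha, -⟩ | ⟨hb, -⟩
    · exact ⟨a, b, ha, hb, hab, hq⟩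
    · rw [hx] at ha; cases ha
    · rw [add_assoc, hy] at hb; cases hb
  · obtain ⟨y, hy⟩ := hsome (m + 1) (by omega) (by omega)
    have d := h.dart m (by omega)
    rcases d.2.2 with hh | hh | ⟨hb, -⟩
    · exact Or.inl hh
    · exact Or.inr hh
    · rw [hy] at hb; cases hb
  · intro _
    obtain ⟨y, hy⟩ := hsome (n - 1) (by omega) (by omega)
    have d := h.dart (n - 1) (by omega)
    have e1 : m + (n - m - 1) = n - 1 := by omega
    have e2 : m + (n - m) = n := by omega
    have e3 : n - 1 + 1 = n := by omega
    simp only [e1, e2]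
    rw [e3] at d
    rcases d.2.2 with hh | ⟨ha, -⟩ | hh
    · exact Or.inl hh
    · rw [hy] at ha; cases ha
    · exact Or.inr hh
  · intro i i1 i2
    exact h.legal (m + i) (by omega) (by omega)

lemma HInv.rev (h : HInv H n q v) {i j : ℕ} (i1 : 1 ≤ i) (hij : i < j) (hj : j ≤ n)
    (hq : q i = q j) : v i = v (j - 1) ∧ 1 < H.w (q i) := by
  obtain ⟨i, rfl⟩ : ∃ k, i = k + 1 := ⟨i - 1, by omega⟩
  obtain ⟨j, rfl⟩ : ∃ k, j = k + 1 := ⟨j - 1, by omega⟩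
  refine ⟨?_, h.dbl i j (by omega) (by omega) hq⟩
  have d1 := h.dart i (by omega)
  have d2 := h.dart j (by omega)
  rw [hq] at d1
  rcases d1.flip d2 with hf | hf
  · exact absurd hf.1 (h.uniq i j (by omega) (by omega) hq)
  · exact hf.2

lemma HInv.no_triple (h : HInv H n q v) {i j k : ℕ} (i1 : 1 ≤ i) (hij : i < j) (hjk : j < k)
    (hk : k ≤ n) (hq : q i = q j) (hq' : q i = q k) : False := by
  have h1 := (h.rev i1 hij (by omega) hq).1
  have h2 := (h.rev i1 (by omega) hk hq').1
  refine h.uniq (j - 1) (k - 1) (by omega) (by omega) ?_ (h1.symm.trans h2)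
  rw [show j - 1 + 1 = j by omega, show k - 1 + 1 = k by omega, ← hq, hq']

lemma HInv.occ (h : HInv H n q v) (m : ℕ) (hm : m + 1 < n) (e : Set Pt) :
    ((Finset.Icc 1 (n - m)).filter fun i => q (m + i) = e).card ≤ 2 ∧
    (((Finset.Icc 1 (n - m)).filter fun i => q (m + i) = e).card = 2 → 1 < H.w e) := by
  have hmem : ∀ i ∈ ((Finset.Icc 1 (n - m)).filter fun i => q (m + i) = e),
      1 ≤ m + i ∧ m + i ≤ n ∧ q (m + i) = e := by
    intro i hi
    rw [Finset.mem_filter, Finset.mem_Icc] at hi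
    exact ⟨by omega, by omega, hi.2⟩
  constructor
  · by_contra hc
    push Not at hc
    obtain ⟨x, y, z, hx, hy, hz, hxy, hxz, hyz⟩ := Finset.two_lt_card_iff.1 hc
    obtain ⟨x1, x2, x3⟩ := hmem x hx
    obtain ⟨y1, y2, y3⟩ := hmem y hy
    obtain ⟨z1, z2, z3⟩ := hmem z hz
    have key : ∀ {a b c : ℕ}, a < b → b < c → 1 ≤ m + a → m + c ≤ n → q (m + a) = e →
      q (m + b) = e → q (m + c) = e → False := fun hab hbc ha hc h1 h2 h3 =>
        h.no_triple ha (Nat.add_lt_add_left hab m) (Nat.add_lt_add_left hbc m) hc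
          (h1.trans h2.symm) (h1.trans h3.symm)
    rcases lt_or_gt_of_ne hxy with a | a <;> rcases lt_or_gt_of_ne hxz with b | b <;>
      rcases lt_or_gt_of_ne hyz with c | c <;> first
      | omega
      | exact key a c x1 z2 x3 y3 z3
      | exact key b c x1 y2 x3 z3 y3
      | exact key a b y1 z2 y3 x3 z3
      | exact key c b y1 x2 y3 z3 x3
      | exact key b a z1 y2 z3 x3 y3
      | exact key c a z1 x2 z3 y3 x3
  · intro hc
    obtain ⟨x, y, hxy, hs⟩ := Finset.card_eq_two.1 hc
    obtain ⟨x1, x2, x3⟩ := hmem x (by rw [hs]; simp)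
    obtain ⟨y1, y2, y3⟩ := hmem y (by rw [hs]; simp)
    rcases lt_or_gt_of_ne hxy with a | a
    · have := (h.rev x1 (Nat.add_lt_add_left a m) y2 (x3.trans y3.symm)).2
      rwa [x3] at this
    · have := (h.rev y1 (Nat.add_lt_add_left a m) x2 (y3.trans x3.symm)).2
      rwa [y3] at this

lemma HInv.no_triple_turn (h : HInv H n q v) {i j k : ℕ} (i1 : 1 ≤ i) (hij : i < j) (hjk : j < k)
    (hk : k < n) (hi : Turn q v u i) (hj : Turn q v u j) (hkt : Turn q v u k) : False := by
  obtain ⟨-, h2, -⟩ := h.turn2 i j u i1 hij (by omega) hi hj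
  obtain ⟨h3, -, -⟩ := h.turn2 j k u (by omega) hjk hk hj hkt
  have := h.uniqR i1 (by omega) (by omega) hk.le (h2.symm.trans h3.symm) (hi.1.trans hkt.1.symm)
  omega

/-- the turns at u in the window -/
lemma HInv.turns (h : HInv H n q v) (m : ℕ) (u : Pt) :
    ((Finset.Ico 1 (n - m)).filter fun i => v (m + i) = some u ∧
      ¬ OppositeAt u (q (m + i)) (q (m + (i + 1)))).card ≤ min 2 (dv H u) := by
  set S := ((Finset.Ico 1 (n - m)).filter fun i => v (m + i) = some u ∧
      ¬ OppositeAt u (q (m + i)) (q (m + (i + 1)))) with hS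
  have hmem : ∀ i ∈ S, 1 ≤ m + i ∧ m + i < n ∧ Turn q v u (m + i) := by
    intro i hi
    rw [hS, Finset.mem_filter, Finset.mem_Ico] at hi
    exact ⟨by omega, by omega, hi.2⟩
  have h2 : S.card ≤ 2 := by
    by_contra hc
    push Not at hc
    obtain ⟨x, y, z, hx, hy, hz, hxy, hxz, hyz⟩ := Finset.two_lt_card_iff.1 hc
    obtain ⟨x1, x2, x3⟩ := hmem x hx
    obtain ⟨y1, y2, y3⟩ := hmem y hy
    obtain ⟨z1, z2, z3⟩ := hmem z hz
    have key : ∀ {a b c : ℕ}, a < b → b < c → 1 ≤ m + a → m + c < n → Turn q v u (m + a) →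
      Turn q v u (m + b) → Turn q v u (m + c) → False := fun hab hbc ha hc h1 h2 h3 =>
        h.no_triple_turn ha (Nat.add_lt_add_left hab m) (Nat.add_lt_add_left hbc m) hc h1 h2 h3
    rcases lt_or_gt_of_ne hxy with a | a <;> rcases lt_or_gt_of_ne hxz with b | b <;>
      rcases lt_or_gt_of_ne hyz with c | c <;> first
      | omega
      | exact key a c x1 z2 x3 y3 z3
      | exact key b c x1 y2 x3 z3 y3
      | exact key a b y1 z2 y3 x3 z3
      | exact key c b y1 x2 y3 z3 x3
      | exact key b a z1 y2 z3 x3 y3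
      | exact key c a z1 x2 z3 y3 x3
  refine le_min h2 ?_
  rcases Nat.eq_zero_or_pos S.card with h0 | h0
  · omega
  rcases Nat.lt_or_ge 1 S.card with h1 | h1
  · obtain ⟨x, y, hx, hy, hxy⟩ := Finset.one_lt_card_iff.1 h1
    obtain ⟨x1, x2, x3⟩ := hmem x hx
    obtain ⟨y1, y2, y3⟩ := hmem y hy
    have : 2 ≤ dv H u := by
      rcases lt_or_gt_of_ne hxy with a | a
      · exact (h.turn2 _ _ u x1 (Nat.add_lt_add_left a m) y2 x3 y3).2.2
      · exact (h.turn2 _ _ u y1 (Nat.add_lt_add_left a m) x2 y3 x3).2.2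
    omega
  · obtain ⟨x, hx⟩ := Finset.card_pos.1 h0
    obtain ⟨x1, x2, x3⟩ := hmem x hx
    have := dom_pos (h.incR x1 x2.le x3.1) (h.turn_dom x1 x2 x3).1
    omega

lemma HInv.turns_wrap (h : HInv H n q v) (m : ℕ) (u : Pt) (hm : m + 1 < n)
    (hvn : v n = some u) (hl : LegalPair H u (q n) (q (m + 1)))
    (hno : ¬ OppositeAt u (q n) (q (m + 1)))
    (hr : (∀ i, m < i → i < n → ¬ Turn q v u i) ∨ (2 ≤ dv H u ∧
      ∀ i j, 1 ≤ i → i < n → 1 ≤ j → j < n → Turn q v u i → Turn q v u j → i = j)) :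
    ((Finset.Ico 1 (n - m)).filter fun i => v (m + i) = some u ∧
      ¬ OppositeAt u (q (m + i)) (q (m + (i + 1)))).card + 1 ≤ min 2 (dv H u) := by
  set S := ((Finset.Ico 1 (n - m)).filter fun i => v (m + i) = some u ∧
      ¬ OppositeAt u (q (m + i)) (q (m + (i + 1)))) with hS
  have hmem : ∀ i ∈ S, m < m + i ∧ m + i < n ∧ Turn q v u (m + i) := by
    intro i hi
    rw [hS, Finset.mem_filter, Finset.mem_Ico] at hi
    exact ⟨by omega, by omega, hi.2⟩
  have hd : 1 ≤ dv H u := by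
    rcases hl.2.2.2.2.2 with ho | hd
    · exact absurd ho hno
    · exact dom_pos (h.incR h.pos le_rfl hvn) hd.1
  rcases hr with hr | ⟨h2, hr⟩
  · have : S = ∅ := by
      rw [Finset.eq_empty_iff_forall_notMem]
      intro i hi
      obtain ⟨a, b, c⟩ := hmem i hi
      exact hr _ a b c
    rw [this, Finset.card_empty]
    omega
  · have : S.card ≤ 1 := by
      rw [Finset.card_le_one]
      intro x hx y hy
      obtain ⟨x1, x2, x3⟩ := hmem x hx
      obtain ⟨y1, y2, y3⟩ := hmem y hy
      have := hr _ _ (by omega) x2 (by omega) y2 x3 y3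
      omega
    omega

end HoneycombProof

/-- Lemma 1.  If a honeycomb has a nonintegral vertex, then it has an
open legal path or a legal cycle P such that: (i) each edge occurs in P at most twice,
and when twice, P traverses it in both directions; (ii) an edge occurring twice has
weight > 1; (iii) at each vertex u, P turns at most min{2, |div_w(u)|} times. -/
theorem stmt5 (H : Honeycomb)
    (hni : ∃ v ∈ H.verts, ∃ i : Fin 3, ∀ z : ℤ, dcoord i v ≠ (z : ℝ)) :
    ∃ (k : ℕ) (q : ℕ → Set Pt) (v : ℕ → Option Pt) (wrap : Bool),
      IsLegalPath H k q v ∧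
      ((wrap = false ∧ 1 < k ∧ v 0 = none ∧ v k = none) ∨
        (wrap = true ∧ ∃ u : Pt, v 0 = some u ∧ v k = some u ∧
          LegalPair H u (q k) (q 1))) ∧
      (∀ e ∈ H.edges, ((Finset.Icc 1 k).filter fun i => q i = e).card ≤ 2) ∧
      (∀ i j : ℕ, 1 ≤ i → i < j → j ≤ k → q i = q j → v i = v (j - 1)) ∧
      (∀ e ∈ H.edges, ((Finset.Icc 1 k).filter fun i => q i = e).card = 2 → 1 < H.w e) ∧
      (∀ u ∈ H.verts, turnCount k q v wrap u ≤ min 2 (divw H.edges H.w u).natAbs) := by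
  obtain ⟨n, q, v, h, hend⟩ : ∃ n q v, HInv H n q v ∧
      (Cyc H n q v ∨ (v 0 = none ∧ v n = none)) := by
    by_cases hray : ∃ e ∈ H.edges, NonIntegralEdge e ∧ ∃ a, IsRayFrom a e
    · obtain ⟨e, he, hn, a, ha⟩ := hray
      have hd : IsDart H none e (some a) := ⟨he, hn, Or.inr (Or.inl ⟨rfl, a, rfl, ha⟩)⟩
      obtain ⟨n, q, v, h, h0, hh⟩ := run_all none _ _ (HInv.start hd) rfl
      exact ⟨n, q, v, h, hh.imp id fun hh => ⟨h0, hh⟩⟩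
    · obtain ⟨u, e, hue⟩ := exists_ni_edge H hni
      obtain ⟨b, hb⟩ := hue.dart
      obtain ⟨n, q, v, h, h0, hh⟩ := run_all (some u) _ _ (HInv.start hb) rfl
      refine ⟨n, q, v, h, hh.imp id fun hh => ?_⟩
      exfalso
      have hpos := h.pos
      have d := h.dart (n - 1) (by omega)
      rw [show n - 1 + 1 = n by omega, hh] at d
      rcases d.2.2 with ⟨x, y, -, hy, -⟩ | ⟨-, y, hy, -⟩ | ⟨-, x, -, hr⟩
      · cases hy
      · cases hy
      · exact hray ⟨_, d.1, d.2.1, x, hr⟩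
  rcases hend with ⟨m, u, hm, hvm, hvn, hl, hr⟩ | ⟨hv0, hvn⟩
  · have en : m + (n - m) = n := by omega
    refine ⟨n - m, fun i => q (m + i), fun i => v (m + i), true, h.window m hm,
      Or.inr ⟨rfl, u, hvm, ?_, ?_⟩, fun e _ => (h.occ m hm e).1, ?_,
      fun e _ => (h.occ m hm e).2, ?_⟩
    · simp only [en]; exact hvn
    · simp only [en]; exact hl
    · intro i j i1 hij hj hq
      have := (h.rev (i := m + i) (j := m + j) (by omega) (by omega) (by omega) hq).1
      rwa [show m + j - 1 = m + (j - 1) by omega] at this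
    · intro u' _
      unfold turnCount
      simp only [en]
      split_ifs with hw
      · obtain ⟨-, hv', hno⟩ := hw
        have : u' = u := by
          rw [add_zero, hvm] at hv'
          cases hv'
          rfl
        subst this
        exact h.turns_wrap m u' hm hvn hl hno (hr.resolve_left hno)
      · exact h.turns m u'
  · have hpos := h.pos
    have hn : 0 + 1 < n := by
      by_contra hc
      obtain rfl : n = 1 := by omega
      exact (h.dart 0 (by omega)).ne (hv0.trans hvn.symm)
    have hwin := h.window 0 hn
    have hocc := h.occ 0 hn
    have htu := h.turns 0
    simp only [zero_add, Nat.sub_zero] at hwin hocc htu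
    refine ⟨n, q, v, false, hwin, Or.inl ⟨rfl, by omega, hv0, hvn⟩, fun e _ => (hocc e).1,
      fun i j i1 hij hj hq => (h.rev i1 hij hj hq).1, fun e _ => (hocc e).2, fun u _ => ?_⟩
    unfold turnCount
    rw [if_neg (by simp)]
    exact htu u
end
end

section
/- Let G be a convex triangular grid, F ⊆ E(G), h₀ : F → ℝ, and h ∈ C(G,h₀). Then h is a vertex (extreme point) of C(G,h₀) if and only if h is uniquely determined by its tiling, i.e., every h' ∈ C(G,h₀) with τ_{h'} = τ_h satisfies h' = h. -/
open scoped BigOperators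

attribute [local instance] Classical.propDecidable

noncomputable section

/-- Directed edges: ordered pairs of points. -/
abbrev Ed : Type := Pt × Pt

/-- A little (lattice) triangle of the triangular grid, given by its base point and
its orientation (`up = true` for an upward triangle). -/
structure GridTriangle : Type where
  base : Pt
  up : Bool

noncomputable def GridTriangle.v0 (T : GridTriangle) : Pt := T.base
noncomputable def GridTriangle.v1 (T : GridTriangle) : Pt := T.base + xiv 0
noncomputable def GridTriangle.v2 (T : GridTriangle) : Pt :=
  if T.up then T.base + xiv 0 + xiv 1 else T.base + xiv 0 + xiv 2

/-- The three directed edges of the 3-circuit surrounding a little triangle;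
each has direction ξ₁, ξ₂ or ξ₃. -/
noncomputable def GridTriangle.e0 (T : GridTriangle) : Ed := (T.v0, T.v1)
noncomputable def GridTriangle.e1 (T : GridTriangle) : Ed := (T.v1, T.v2)
noncomputable def GridTriangle.e2 (T : GridTriangle) : Ed := (T.v2, T.v0)

noncomputable def GridTriangle.edgeFinset (T : GridTriangle) : Finset Ed := {T.e0, T.e1, T.e2}

/-- The closed region spanned by a little triangle. -/
noncomputable def GridTriangle.region (T : GridTriangle) : Set Pt :=
  convexHull ℝ {T.v0, T.v1, T.v2}

/-- Vectors of the lattice generated by ξ₁ and ξ₂. -/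
def IsLatticeVec (p : Pt) : Prop := ∃ m n : ℤ, p = (m : ℝ) • xiv 0 + (n : ℝ) • xiv 1

/-- A convex triangular grid: a finite nonempty set of little triangles of a common
translate of the triangular lattice whose union is a convex polygon.  (Its vertices,
edges, bounded faces and boundary are then those of the planar digraph formed by the
edges of the little triangles.) -/
structure ConvexGrid : Type where
  tris : Finset GridTriangle
  nonempty : tris.Nonempty
  aligned : ∀ T ∈ tris, ∀ T' ∈ tris, IsLatticeVec (T.base - T'.base)
  convex : Convex ℝ (⋃ T ∈ tris, GridTriangle.region T)

/-- The region R(G) spanned by the grid. -/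
noncomputable def ConvexGrid.region (G : ConvexGrid) : Set Pt :=
  ⋃ T ∈ G.tris, GridTriangle.region T

/-- The (directed) edge set E(G) of the grid. -/
noncomputable def ConvexGrid.edges (G : ConvexGrid) : Finset Ed :=
  G.tris.biUnion GridTriangle.edgeFinset

/-- The boundary edges B(G): edges lying in exactly one little triangle. -/
noncomputable def ConvexGrid.boundary (G : ConvexGrid) : Finset Ed :=
  G.edges.filter fun e => (G.tris.filter fun T => e ∈ T.edgeFinset).card = 1

/-- A cocirculation: `h(e)+h(e')+h(e'')=0` around each little triangle. -/
def IsCocirculation (G : ConvexGrid) (h : Ed → ℝ) : Prop :=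
  ∀ T ∈ G.tris, h T.e0 + h T.e1 + h T.e2 = 0

/-- `g` coincides with an affine function on `S`. -/
def AffineOn (g : Pt → ℝ) (S : Set Pt) : Prop :=
  ∃ φ : Pt →ᵃ[ℝ] ℝ, ∀ x ∈ S, g x = φ x

/-- A concave cocirculation: a cocirculation induced by a concave function on R(G)
which is affinely linear within each little triangle. -/
def IsConcaveCocirculation (G : ConvexGrid) (h : Ed → ℝ) : Prop :=
  IsCocirculation G h ∧
  ∃ g : Pt → ℝ, ConcaveOn ℝ G.region g ∧ (∀ T ∈ G.tris, AffineOn g T.region) ∧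
    ∀ e ∈ G.edges, h e = g e.2 - g e.1

/-- The polyhedron C(G,h₀) of concave cocirculations agreeing with h₀ on F. -/
def CC (G : ConvexGrid) (F : Set Ed) (h₀ : Ed → ℝ) : Set (Ed → ℝ) :=
  {h | IsConcaveCocirculation G h ∧ ∀ e ∈ F, h e = h₀ e}

/-- `h` is a vertex (extreme point) of the set `C` of cocirculations, regarded as a
subset of ℝ^{E(G)} (only the coordinates on the edges of `G` matter). -/
def IsVertexOf (G : ConvexGrid) (C : Set (Ed → ℝ)) (h : Ed → ℝ) : Prop :=
  h ∈ C ∧ ∀ h₁ ∈ C, ∀ h₂ ∈ C,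
    (∀ e ∈ G.edges, h e = (h₁ e + h₂ e) / 2) → ∀ e ∈ G.edges, h₁ e = h₂ e

/-- Two concave cocirculations have the same tiling iff they make exactly the same
little rhombi flat (i.e. satisfy the rhombus inequality with equality): the tiles of
τ_h are the unions of the equivalence classes of little triangles under the relation
generated by flat rhombi, so this coincides with τ_{h'} = τ_h. -/
def SameTiling (G : ConvexGrid) (h h' : Ed → ℝ) : Prop :=
  ∀ T ∈ G.tris, ∀ T' ∈ G.tris, T ≠ T' → (T.edgeFinset ∩ T'.edgeFinset).Nonempty →
    ((∀ e ∈ T.edgeFinset, ∀ e' ∈ T'.edgeFinset,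
        e ≠ e' → e.2 - e.1 = e'.2 - e'.1 → h e = h e') ↔
      (∀ e ∈ T.edgeFinset, ∀ e' ∈ T'.edgeFinset,
        e ≠ e' → e.2 - e.1 = e'.2 - e'.1 → h' e = h' e'))

/-! ### Lattice coordinates and barycentric coordinates -/

/-- First lattice coordinate. -/
def cX (p : Pt) : ℝ := p.1 + p.2 / Real.sqrt 3
/-- Second lattice coordinate. -/
def cY (p : Pt) : ℝ := 2 * p.2 / Real.sqrt 3

lemma sqrt3_ne : Real.sqrt 3 ≠ 0 := by positivity

lemma cX_add (p q : Pt) : cX (p + q) = cX p + cX q := by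
  simp only [cX, Prod.fst_add, Prod.snd_add]; ring
lemma cY_add (p q : Pt) : cY (p + q) = cY p + cY q := by
  simp only [cY, Prod.fst_add, Prod.snd_add]; ring
lemma cX_sub (p q : Pt) : cX (p - q) = cX p - cX q := by
  simp only [cX, Prod.fst_sub, Prod.snd_sub]; ring
lemma cY_sub (p q : Pt) : cY (p - q) = cY p - cY q := by
  simp only [cY, Prod.fst_sub, Prod.snd_sub]; ring
lemma cX_smul (a : ℝ) (p : Pt) : cX (a • p) = a * cX p := by
  simp only [cX, Prod.smul_fst, Prod.smul_snd, smul_eq_mul]; ring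
lemma cY_smul (a : ℝ) (p : Pt) : cY (a • p) = a * cY p := by
  simp only [cY, Prod.smul_fst, Prod.smul_snd, smul_eq_mul]; ring
lemma cX_xi0 : cX (xiv 0) = 1 := by simp [cX, xiv]
lemma cY_xi0 : cY (xiv 0) = 0 := by simp [cY, xiv]
lemma cX_xi1 : cX (xiv 1) = 0 := by
  have := sqrt3_ne
  simp only [cX, xiv]; field_simp; ring
lemma cY_xi1 : cY (xiv 1) = 1 := by
  have := sqrt3_ne
  simp only [cY, xiv]; field_simp
lemma cX_xi2 : cX (xiv 2) = -1 := by
  have := sqrt3_ne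
  simp only [cX, xiv]; field_simp; ring
lemma cY_xi2 : cY (xiv 2) = -1 := by
  have := sqrt3_ne
  simp only [cY, xiv]; field_simp

lemma pt_ext {p q : Pt} (hx : cX p = cX q) (hy : cY p = cY q) : p = q := by
  have h3 := sqrt3_ne
  have h2 : p.2 = q.2 := by
    simp only [cY] at hy
    field_simp at hy
    linarith
  have h1 : p.1 = q.1 := by
    simp only [cX, h2] at hx
    linarith
  exact Prod.ext h1 h2

/-- The vertices of a little triangle. -/
def vtx (T : GridTriangle) : Fin 3 → Pt
  | 0 => T.v0
  | 1 => T.v1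
  | 2 => T.v2

/-- Barycentric coordinates. -/
def lam (T : GridTriangle) (i : Fin 3) (p : Pt) : ℝ :=
  match T.up, i with
  | true, 0 => 1 - (cX p - cX T.base)
  | true, 1 => (cX p - cX T.base) - (cY p - cY T.base)
  | true, 2 => cY p - cY T.base
  | false, 0 => 1 - (cX p - cX T.base) + (cY p - cY T.base)
  | false, 1 => cX p - cX T.base
  | false, 2 => -(cY p - cY T.base)

lemma lam_sum (T : GridTriangle) (p : Pt) : lam T 0 p + lam T 1 p + lam T 2 p = 1 := by
  obtain ⟨b, u⟩ := T
  cases u <;> simp only [lam] <;> ring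

lemma lam_comb (T : GridTriangle) (i : Fin 3) (p q : Pt) (a b : ℝ) (hab : a + b = 1) :
    lam T i (a • p + b • q) = a * lam T i p + b * lam T i q := by
  obtain ⟨c, u⟩ := T
  obtain rfl : b = 1 - a := by linarith
  cases u <;> fin_cases i <;> simp only [lam, cX_add, cY_add, cX_smul, cY_smul] <;> ring

lemma lam_repr (T : GridTriangle) (p : Pt) :
    p = lam T 0 p • vtx T 0 + lam T 1 p • vtx T 1 + lam T 2 p • vtx T 2 := by
  obtain ⟨c, u⟩ := T
  apply pt_ext <;> cases u <;>
    simp [lam, vtx, GridTriangle.v0, GridTriangle.v1, GridTriangle.v2, cX_add, cY_add, cX_smul,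
      cY_smul, cX_xi0, cX_xi1, cX_xi2, cY_xi0, cY_xi1, cY_xi2] <;> ring

lemma lam_vtx_nonneg (T : GridTriangle) (i j : Fin 3) : 0 ≤ lam T i (vtx T j) := by
  obtain ⟨c, u⟩ := T
  cases u <;> fin_cases i <;> fin_cases j <;>
    simp [lam, vtx, GridTriangle.v0, GridTriangle.v1, GridTriangle.v2, cX_add, cY_add, cX_smul,
      cY_smul, cX_xi0, cX_xi1, cX_xi2, cY_xi0, cY_xi1, cY_xi2]

lemma vtx_mem (T : GridTriangle) (i : Fin 3) : vtx T i ∈ T.region := by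
  apply subset_convexHull
  fin_cases i <;> simp [vtx]

lemma mem_region_iff (T : GridTriangle) (p : Pt) : p ∈ T.region ↔ ∀ i, 0 ≤ lam T i p := by
  constructor
  · intro hp
    have hc : Convex ℝ {p : Pt | ∀ i, 0 ≤ lam T i p} := by
      intro x hx y hy a b ha hb hab i
      rw [lam_comb T i x y a b hab]
      have := hx i
      have := hy i
      positivity
    refine convexHull_min ?_ hc hp
    intro x hx
    simp only [Set.mem_insert_iff, Set.mem_singleton_iff] at hx
    rcases hx with rfl | rfl | rfl
    · exact fun i => lam_vtx_nonneg T i 0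
    · exact fun i => lam_vtx_nonneg T i 1
    · exact fun i => lam_vtx_nonneg T i 2
  · intro hp
    have hc : Convex ℝ T.region := convex_convexHull ℝ _
    have := hc.sum_mem (t := Finset.univ) (w := fun i => lam T i p) (z := vtx T)
      (fun i _ => hp i) (by rw [Fin.sum_univ_three]; exact lam_sum T p) (fun i _ => vtx_mem T i)
    rw [Fin.sum_univ_three] at this
    rw [lam_repr T p]
    exact this

lemma aff_lam (φ : Pt →ᵃ[ℝ] ℝ) (T : GridTriangle) (p : Pt) :
    φ p = lam T 0 p * φ (vtx T 0) + lam T 1 p * φ (vtx T 1) + lam T 2 p * φ (vtx T 2) := by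
  have hd : ∀ x, φ x = φ.linear x + φ 0 := fun x => by
    have := congrFun (AffineMap.decomp φ) x
    simpa using this
  have hs := lam_sum T p
  rw [hd p, hd (vtx T 0), hd (vtx T 1), hd (vtx T 2)]
  conv_lhs => rw [lam_repr T p]
  simp only [map_add, map_smul, smul_eq_mul]
  linear_combination (-φ 0) * hs

lemma aff_comb (φ : Pt →ᵃ[ℝ] ℝ) (x y : Pt) (a b : ℝ) (hab : a + b = 1) :
    φ (a • x + b • y) = a * φ x + b * φ y := by
  have := Convex.combo_affine_apply (f := φ) (x := x) (y := y) hab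
  simpa using this

/-- Affine maps agreeing at the vertices of a triangle are equal. -/
lemma aff_ext (φ ψ : Pt →ᵃ[ℝ] ℝ) (T : GridTriangle) (hv : ∀ i, φ (vtx T i) = ψ (vtx T i)) :
    φ = ψ := by
  ext p
  rw [aff_lam φ T p, aff_lam ψ T p, hv, hv, hv]

/-- The edge of `T` with direction `ξ_k`. -/
def ded (T : GridTriangle) : Fin 3 → Ed
  | 0 => T.e0
  | 1 => if T.up then T.e1 else T.e2
  | 2 => if T.up then T.e2 else T.e1

lemma mem_edgeFinset (T : GridTriangle) (e : Ed) : e ∈ T.edgeFinset ↔ ∃ k, e = ded T k := by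
  obtain ⟨c, u⟩ := T
  simp only [GridTriangle.edgeFinset, Finset.mem_insert, Finset.mem_singleton, Fin.exists_fin_succ,
    Fin.exists_fin_zero_pi]
  cases u <;> simp [ded] <;> tauto

lemma ded_dir (T : GridTriangle) (k : Fin 3) : (ded T k).2 - (ded T k).1 = xiv k := by
  obtain ⟨c, u⟩ := T
  apply pt_ext <;> cases u <;> fin_cases k <;>
    simp [ded, GridTriangle.e0, GridTriangle.e1, GridTriangle.e2, GridTriangle.v0,
      GridTriangle.v1, GridTriangle.v2, cX_add, cY_add, cX_sub, cY_sub,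
      cX_xi0, cX_xi1, cX_xi2, cY_xi0, cY_xi1, cY_xi2]

lemma ded_fst_mem (T : GridTriangle) (k : Fin 3) : (ded T k).1 ∈ T.region := by
  apply subset_convexHull
  obtain ⟨c, u⟩ := T
  cases u <;> fin_cases k <;> simp [ded, GridTriangle.e0, GridTriangle.e1, GridTriangle.e2]

lemma ded_snd_mem (T : GridTriangle) (k : Fin 3) : (ded T k).2 ∈ T.region := by
  apply subset_convexHull
  obtain ⟨c, u⟩ := T
  cases u <;> fin_cases k <;> simp [ded, GridTriangle.e0, GridTriangle.e1, GridTriangle.e2]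

lemma xiv_inj {i j : Fin 3} (hij : xiv i = xiv j) : i = j := by
  have hx := congrArg cX hij
  have hy := congrArg cY hij
  fin_cases i <;> fin_cases j <;>
    simp [cX_xi0, cX_xi1, cX_xi2, cY_xi0, cY_xi1, cY_xi2] at hx hy ⊢ <;> linarith

/-- Parallel edges of `T` and `T'` have the same value. -/
def Flat (h : Ed → ℝ) (T T' : GridTriangle) : Prop := ∀ k, h (ded T k) = h (ded T' k)

lemma flat_iff (h : Ed → ℝ) (T T' : GridTriangle) :
    (∀ e ∈ T.edgeFinset, ∀ e' ∈ T'.edgeFinset,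
        e ≠ e' → e.2 - e.1 = e'.2 - e'.1 → h e = h e') ↔ Flat h T T' := by
  constructor
  · intro hf k
    by_cases hk : ded T k = ded T' k
    · rw [hk]
    · exact hf _ ((mem_edgeFinset _ _).2 ⟨k, rfl⟩) _ ((mem_edgeFinset _ _).2 ⟨k, rfl⟩) hk
        (by rw [ded_dir, ded_dir])
  · intro hf e he e' he' _ hd
    obtain ⟨k, rfl⟩ := (mem_edgeFinset _ _).1 he
    obtain ⟨k', rfl⟩ := (mem_edgeFinset _ _).1 he'
    rw [ded_dir, ded_dir] at hd
    obtain rfl := xiv_inj hd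
    exact hf k

/-! ### Neighbours -/

/-- The triangle on the other side of the edge opposite to vertex `i`. -/
def nb (T : GridTriangle) (i : Fin 3) : GridTriangle :=
  match T.up, i with
  | true, 0 => ⟨T.base + (xiv 0 + xiv 1), false⟩
  | true, 1 => ⟨T.base + xiv 1, false⟩
  | true, 2 => ⟨T.base, false⟩
  | false, 0 => ⟨T.base - xiv 1, true⟩
  | false, 1 => ⟨T.base - (xiv 0 + xiv 1), true⟩
  | false, 2 => ⟨T.base, true⟩

lemma nb_ne (T : GridTriangle) (i : Fin 3) : T ≠ nb T i := by
  obtain ⟨c, u⟩ := T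
  cases u <;> fin_cases i <;> simp [nb]

lemma nb_pos (T : GridTriangle) (i : Fin 3) (q : Pt) (h0 : lam T i q < 0)
    (h1 : ∀ j, j ≠ i → 0 < lam T j q + lam T i q) (k : Fin 3) : 0 < lam (nb T i) k q := by
  have a := h1 (i + 1) (by fin_cases i <;> decide)
  have b := h1 (i + 2) (by fin_cases i <;> decide)
  clear h1
  obtain ⟨c, u⟩ := T
  cases u <;> fin_cases i <;> fin_cases k <;>
    simp [lam, nb, cX_add, cY_add, cX_sub, cY_sub,
      cX_xi0, cX_xi1, cX_xi2, cY_xi0, cY_xi1, cY_xi2] at a b h0 ⊢ <;> linarith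

lemma nb_shared (T : GridTriangle) (i : Fin 3) :
    ∃ k, ded T k = ded (nb T i) k := by
  refine ⟨if T.up then i + 1 else 2 - i, ?_⟩
  obtain ⟨c, u⟩ := T
  refine Prod.ext ?_ ?_ <;> apply pt_ext <;> cases u <;> fin_cases i <;>
    simp [ded, nb, GridTriangle.e0, GridTriangle.e1, GridTriangle.e2, GridTriangle.v0,
      GridTriangle.v1, GridTriangle.v2, cX_add, cY_add, cX_sub, cY_sub,
      cX_xi0, cX_xi1, cX_xi2, cY_xi0, cY_xi1, cY_xi2] <;> ring

lemma nb_lattice (T : GridTriangle) (i : Fin 3) :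
    ∃ m n : ℤ, cX (nb T i).base - cX T.base = m ∧ cY (nb T i).base - cY T.base = n := by
  obtain ⟨c, u⟩ := T
  cases u <;> fin_cases i
  · exact ⟨0, -1, by simp [nb, cX_sub, cX_xi1], by simp [nb, cY_sub, cY_xi1]⟩
  · exact ⟨-1, -1, by simp [nb, cX_sub, cX_add, cX_xi1, cX_xi0],
      by simp [nb, cY_sub, cY_add, cY_xi1, cY_xi0]⟩
  · exact ⟨0, 0, by simp [nb], by simp [nb]⟩
  · exact ⟨1, 1, by simp [nb, cX_sub, cX_add, cX_xi1, cX_xi0],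
      by simp [nb, cY_sub, cY_add, cY_xi1, cY_xi0]⟩
  · exact ⟨0, 1, by simp [nb, cX_add, cX_xi1], by simp [nb, cY_add, cY_xi1]⟩
  · exact ⟨0, 0, by simp [nb], by simp [nb]⟩

lemma lattice_coords {p : Pt} (hp : IsLatticeVec p) : ∃ m n : ℤ, cX p = m ∧ cY p = n := by
  obtain ⟨m, n, rfl⟩ := hp
  exact ⟨m, n, by simp [cX_add, cX_smul, cX_xi0, cX_xi1], by simp [cY_add, cY_smul, cY_xi0, cY_xi1]⟩

lemma tri_eq (T T' : GridTriangle) (m n : ℤ) (hm : cX T.base - cX T'.base = m)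
    (hn : cY T.base - cY T'.base = n) (q : Pt) (hq : ∀ k, 0 < lam T k q)
    (hq' : ∀ k, 0 ≤ lam T' k q) : T = T' := by
  have a0 := hq 0
  have a1 := hq 1
  have a2 := hq 2
  have b0 := hq' 0
  have b1 := hq' 1
  have b2 := hq' 2
  clear hq hq'
  obtain ⟨c, u⟩ := T
  obtain ⟨c', u'⟩ := T'
  have hfin : u = u' → m = 0 → n = 0 → GridTriangle.mk c u = ⟨c', u'⟩ := by
    rintro rfl rfl rfl
    congr 1
    apply pt_ext
    · push_cast at hm; linarith
    · push_cast at hn; linarith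
  cases u <;> cases u' <;> simp only [lam] at a0 a1 a2 b0 b1 b2 hm hn
  · have i1 : (m : ℝ) < 1 := by linarith
    have i2 : (-1 : ℝ) < m := by linarith
    have i3 : (n : ℝ) < 1 := by linarith
    have i4 : (-1 : ℝ) < n := by linarith
    norm_cast at i1 i2 i3 i4
    exact hfin rfl (by omega) (by omega)
  · exfalso
    have i1 : (m : ℝ) < 1 := by linarith
    have i2 : (-1 : ℝ) < m := by linarith
    have i3 : (n : ℝ) < 2 := by linarith
    have i4 : (0 : ℝ) < n := by linarith
    have i5 : (m : ℝ) - n < 1 := by linarith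
    have i6 : (-1 : ℝ) < (m : ℝ) - n := by linarith
    norm_cast at i1 i2 i3 i4 i5 i6
    omega
  · exfalso
    have i1 : (m : ℝ) < 1 := by linarith
    have i2 : (-1 : ℝ) < m := by linarith
    have i3 : (n : ℝ) < 0 := by linarith
    have i4 : (-2 : ℝ) < n := by linarith
    have i5 : (m : ℝ) - n < 1 := by linarith
    have i6 : (-1 : ℝ) < (m : ℝ) - n := by linarith
    norm_cast at i1 i2 i3 i4 i5 i6
    omega
  · have i1 : (m : ℝ) < 1 := by linarith
    have i2 : (-1 : ℝ) < m := by linarith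
    have i3 : (n : ℝ) < 1 := by linarith
    have i4 : (-1 : ℝ) < n := by linarith
    norm_cast at i1 i2 i3 i4
    exact hfin rfl (by omega) (by omega)

/-- Squared distance from (three times) the barycentre of `T` to (three times) `p`. -/
def pot (T : GridTriangle) (p : Pt) : ℝ :=
  let x := cX (T.v0 + T.v1 + T.v2) - 3 * cX p
  let y := cY (T.v0 + T.v1 + T.v2) - 3 * cY p
  x ^ 2 - x * y + y ^ 2

lemma nb_pot (T : GridTriangle) (i : Fin 3) (p : Pt) (hp : lam T i p < 0) :
    pot (nb T i) p < pot T p := by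
  obtain ⟨c, u⟩ := T
  cases u <;> fin_cases i <;>
    simp [pot, lam, nb, GridTriangle.v0,
      GridTriangle.v1, GridTriangle.v2, cX_add, cY_add, cX_sub, cY_sub,
      cX_xi0, cX_xi1, cX_xi2, cY_xi0, cY_xi1, cY_xi2] at hp ⊢ <;> nlinarith

/-! ### Potentials -/

/-- `g` is a concave potential of `h`, given on each triangle `T` by the affine map `φ T`. -/
def GRep (G : ConvexGrid) (h : Ed → ℝ) (g : Pt → ℝ) (φ : GridTriangle → (Pt →ᵃ[ℝ] ℝ)) : Prop :=
  ConcaveOn ℝ G.region g ∧ (∀ T ∈ G.tris, ∀ x ∈ T.region, g x = φ T x) ∧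
    ∀ e ∈ G.edges, h e = g e.2 - g e.1

lemma exists_rep {G : ConvexGrid} {h : Ed → ℝ} (hh : IsConcaveCocirculation G h) :
    ∃ g φ, GRep G h g φ := by
  obtain ⟨_, g, hc, ha, he⟩ := hh
  have : ∀ T : GridTriangle, ∃ φ : Pt →ᵃ[ℝ] ℝ, T ∈ G.tris → ∀ x ∈ T.region, g x = φ x := by
    intro T
    by_cases hT : T ∈ G.tris
    · obtain ⟨φ, hφ⟩ := ha T hT
      exact ⟨φ, fun _ => hφ⟩
    · exact ⟨0, fun h => absurd h hT⟩
  choose φ hφ using this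
  exact ⟨g, φ, hc, hφ, he⟩

lemma ded_mem_edges {G : ConvexGrid} {T : GridTriangle} (hT : T ∈ G.tris) (k : Fin 3) :
    ded T k ∈ G.edges :=
  Finset.mem_biUnion.2 ⟨T, hT, (mem_edgeFinset _ _).2 ⟨k, rfl⟩⟩

lemma region_sub {G : ConvexGrid} {T : GridTriangle} (hT : T ∈ G.tris) {x : Pt}
    (hx : x ∈ T.region) : x ∈ G.region :=
  Set.mem_biUnion (s := {T | T ∈ G.tris}) hT hx

lemma exists_tri {G : ConvexGrid} {x : Pt} (hx : x ∈ G.region) : ∃ T ∈ G.tris, x ∈ T.region := by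
  simpa [ConvexGrid.region] using hx

lemma rep_linear {G : ConvexGrid} {h : Ed → ℝ} {g : Pt → ℝ} {φ : GridTriangle → (Pt →ᵃ[ℝ] ℝ)}
    (hr : GRep G h g φ) {T : GridTriangle} (hT : T ∈ G.tris) (k : Fin 3) :
    (φ T).linear (xiv k) = h (ded T k) := by
  rw [hr.2.2 _ (ded_mem_edges hT k), hr.2.1 T hT _ (ded_fst_mem T k),
    hr.2.1 T hT _ (ded_snd_mem T k), ← ded_dir T k]
  exact AffineMap.linearMap_vsub (φ T) _ _

/-- The concave potential lies below each of its affine pieces. -/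
lemma rep_le {G : ConvexGrid} {h : Ed → ℝ} {g : Pt → ℝ} {φ : GridTriangle → (Pt →ᵃ[ℝ] ℝ)}
    (hr : GRep G h g φ) {T : GridTriangle} (hT : T ∈ G.tris) {x : Pt} (hx : x ∈ G.region) :
    g x ≤ φ T x := by
  obtain ⟨c, hc⟩ : ∃ c : Pt, ∀ i, lam T i c = 1 / 3 := by
    refine ⟨(1 / 3 : ℝ) • (T.v0 + T.v1 + T.v2), ?_⟩
    obtain ⟨b, u⟩ := T
    intro i
    cases u <;> fin_cases i <;> simp [lam, GridTriangle.v0,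
      GridTriangle.v1, GridTriangle.v2, cX_add, cY_add, cX_smul, cY_smul,
      cX_xi0, cX_xi1, cX_xi2, cY_xi0, cY_xi1, cY_xi2] <;> ring
  obtain ⟨M, hM0, hM⟩ : ∃ M : ℝ, 0 < M ∧ ∀ i, lam T i x ≤ M := by
    refine ⟨1 + |lam T 0 x| + |lam T 1 x| + |lam T 2 x|, by positivity, ?_⟩
    intro i
    have := abs_nonneg (lam T 0 x)
    have := abs_nonneg (lam T 1 x)
    have := abs_nonneg (lam T 2 x)
    have := le_abs_self (lam T i x)
    fin_cases i <;> simp only [Fin.zero_eta, Fin.mk_one, Fin.reduceFinMk] at * <;> linarith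
  -- small step beyond the barycentre
  set d : ℝ := 1 / (3 * M) with hd
  have hd0 : 0 < d := by positivity
  have hdM : d * M = 1 / 3 := by rw [hd]; field_simp
  set y : Pt := (1 + d) • c + (-d) • x with hy
  have hyT : y ∈ T.region := by
    rw [mem_region_iff]
    intro i
    rw [hy, lam_comb T i c x _ _ (by ring), hc]
    have := mul_le_mul_of_nonneg_left (hM i) hd0.le
    linarith
  have hcT : c ∈ T.region := by
    rw [mem_region_iff]
    intro i
    rw [hc]; norm_num
  have hcy : c = (1 / (1 + d)) • y + (d / (1 + d)) • x := by
    have hne : (1 + d) ≠ 0 := by positivity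
    rw [hy, smul_add, smul_smul, smul_smul, add_assoc, ← add_smul]
    have e1 : 1 / (1 + d) * (1 + d) = 1 := by field_simp
    have e2 : 1 / (1 + d) * -d + d / (1 + d) = 0 := by field_simp; ring
    rw [e1, e2]; simp
  have hab : 1 / (1 + d) + d / (1 + d) = 1 := by
    have hne : (1 + d) ≠ 0 := by positivity
    field_simp
  have hconc := hr.1.2 (region_sub hT hyT) hx (by positivity : (0 : ℝ) ≤ 1 / (1 + d))
    (by positivity : (0 : ℝ) ≤ d / (1 + d)) hab
  rw [← hcy, hr.2.1 T hT c hcT, hr.2.1 T hT y hyT] at hconc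
  have hφ := aff_comb (φ T) y x _ _ hab
  rw [← hcy] at hφ
  rw [hφ] at hconc
  simp only [smul_eq_mul, add_le_add_iff_left] at hconc
  exact le_of_mul_le_mul_left hconc (by positivity)

lemma aff_eq_of_linear (φ ψ : Pt →ᵃ[ℝ] ℝ) (u : Pt) (hu : φ u = ψ u)
    (hl : ∀ k, φ.linear (xiv k) = ψ.linear (xiv k)) : φ = ψ := by
  have hlin : φ.linear = ψ.linear := by
    refine LinearMap.ext fun p => ?_
    have hp : p = cX p • xiv 0 + cY p • xiv 1 := by
      apply pt_ext <;> simp [cX_add, cY_add, cX_smul, cY_smul, cX_xi0, cX_xi1, cY_xi0, cY_xi1]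
    rw [hp]
    simp only [map_add, map_smul, hl]
  ext p
  have h1 := AffineMap.linearMap_vsub φ p u
  have h2 := AffineMap.linearMap_vsub ψ p u
  simp only [vsub_eq_sub] at h1 h2
  rw [hlin] at h1
  linarith

/-- Local concavity data coming from the convex-combination argument for the easy direction. -/
lemma flat_of_mid {G : ConvexGrid} {h h₁ h₂ : Ed → ℝ} {g₁ g₂ : Pt → ℝ}
    {φ₁ φ₂ : GridTriangle → (Pt →ᵃ[ℝ] ℝ)} (hr₁ : GRep G h₁ g₁ φ₁) (hr₂ : GRep G h₂ g₂ φ₂)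
    (hm : ∀ e ∈ G.edges, h e = (h₁ e + h₂ e) / 2) {T T' : GridTriangle} (hT : T ∈ G.tris)
    (hT' : T' ∈ G.tris) {u : Pt} (hu : u ∈ T.region) (hu' : u ∈ T'.region) (hf : Flat h T T') :
    Flat h₁ T T' := by
  have hsum : φ₁ T + φ₂ T = φ₁ T' + φ₂ T' := by
    apply aff_eq_of_linear _ _ u
    · simp only [AffineMap.coe_add, Pi.add_apply]
      rw [← hr₁.2.1 T hT u hu, ← hr₁.2.1 T' hT' u hu', ← hr₂.2.1 T hT u hu,
        ← hr₂.2.1 T' hT' u hu']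
    · intro k
      simp only [AffineMap.add_linear, LinearMap.add_apply]
      rw [rep_linear hr₁ hT, rep_linear hr₁ hT', rep_linear hr₂ hT, rep_linear hr₂ hT']
      have := hf k
      rw [hm _ (ded_mem_edges hT k), hm _ (ded_mem_edges hT' k)] at this
      linarith
  have h1 : φ₁ T = φ₁ T' := by
    apply aff_ext _ _ T'
    intro i
    have hv := vtx_mem T' i
    have a := rep_le hr₁ hT (region_sub hT' hv)
    have b := rep_le hr₂ hT (region_sub hT' hv)
    rw [hr₁.2.1 T' hT' _ hv] at a
    rw [hr₂.2.1 T' hT' _ hv] at b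
    have c := congrArg (fun f : Pt →ᵃ[ℝ] ℝ => f (vtx T' i)) hsum
    simp only [AffineMap.coe_add, Pi.add_apply] at c
    linarith
  intro k
  rw [← rep_linear hr₁ hT, ← rep_linear hr₁ hT', h1]

lemma CC_convex {G : ConvexGrid} {F : Set Ed} {h₀ h₁ h₂ : Ed → ℝ} (m₁ : h₁ ∈ CC G F h₀)
    (m₂ : h₂ ∈ CC G F h₀) {a b : ℝ} (ha : 0 ≤ a) (hb : 0 ≤ b) (hab : a + b = 1) :
    (fun e => a * h₁ e + b * h₂ e) ∈ CC G F h₀ := by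
  obtain ⟨⟨c₁, g₁, k₁, l₁, e₁⟩, f₁⟩ := m₁
  obtain ⟨⟨c₂, g₂, k₂, l₂, e₂⟩, f₂⟩ := m₂
  refine ⟨⟨?_, fun x => a * g₁ x + b * g₂ x, ?_, ?_, ?_⟩, ?_⟩
  · intro T hT
    linear_combination a * c₁ T hT + b * c₂ T hT
  · exact (k₁.smul ha).add (k₂.smul hb)
  · intro T hT
    obtain ⟨φ₁, p₁⟩ := l₁ T hT
    obtain ⟨φ₂, p₂⟩ := l₂ T hT
    refine ⟨a • φ₁ + b • φ₂, fun x hx => ?_⟩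
    simp [p₁ x hx, p₂ x hx]
  · intro e he
    simp only [e₁ e he, e₂ e he]; ring
  · intro e he
    simp only [f₁ e he, f₂ e he]
    rw [← add_mul, hab, one_mul]

/-- The walking lemma: if `v` belongs to the tile of `T` for `h`, then it also belongs to the
tile of `T` for `h'`. -/
lemma walk {G : ConvexGrid} {h h' : Ed → ℝ} {g g' : Pt → ℝ}
    {φ φ' : GridTriangle → (Pt →ᵃ[ℝ] ℝ)} (hr : GRep G h g φ) (hr' : GRep G h' g' φ')
    (hs : SameTiling G h h') {T : GridTriangle} (hT : T ∈ G.tris) {v : Pt} (hv : v ∈ G.region)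
    (hgv : φ T v = g v) : φ' T v = g' v := by
  obtain ⟨S, hS, hmin⟩ := Finset.exists_min_image
    (G.tris.filter fun S => φ S = φ T ∧ φ' S = φ' T) (fun S => pot S v)
    ⟨T, Finset.mem_filter.2 ⟨hT, rfl, rfl⟩⟩
  obtain ⟨hSG, hSφ, hSφ'⟩ := Finset.mem_filter.1 hS
  by_cases hvS : v ∈ S.region
  · rw [← hSφ', hr'.2.1 S hSG v hvS]
  exfalso
  rw [mem_region_iff] at hvS
  push Not at hvS
  obtain ⟨i, hi⟩ := hvS
  -- a point in the relative interior of the separating edge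
  obtain ⟨c, hci, hcj⟩ : ∃ c : Pt, lam S i c = 0 ∧ ∀ j, j ≠ i → lam S j c = 1 / 2 := by
    refine ⟨(1 / 2 : ℝ) • (vtx S (i + 1) + vtx S (i + 2)), ?_, ?_⟩
    · obtain ⟨b, u⟩ := S
      cases u <;> fin_cases i <;> simp [lam, vtx, GridTriangle.v0,
        GridTriangle.v1, GridTriangle.v2, cX_add, cY_add, cX_smul, cY_smul,
        cX_xi0, cX_xi1, cX_xi2, cY_xi0, cY_xi1, cY_xi2] <;> ring
    · obtain ⟨b, u⟩ := S
      intro j hj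
      cases u <;> fin_cases i <;> fin_cases j <;> simp [lam, vtx, GridTriangle.v0,
        GridTriangle.v1, GridTriangle.v2, cX_add, cY_add, cX_smul, cY_smul,
        cX_xi0, cX_xi1, cX_xi2, cY_xi0, cY_xi1, cY_xi2] at hj ⊢ <;> ring
  have hcS : c ∈ S.region := by
    rw [mem_region_iff]
    intro j
    by_cases hj : j = i
    · rw [hj, hci]
    · rw [hcj j hj]; norm_num
  -- a small step from `c` towards `v`
  obtain ⟨M, hM0, hM⟩ : ∃ M : ℝ, 1 < M ∧ ∀ j, -M < lam S j v + lam S i v := by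
    have n0 := abs_nonneg (lam S 0 v)
    have n1 := abs_nonneg (lam S 1 v)
    have n2 := abs_nonneg (lam S 2 v)
    have hle : ∀ j, -(|lam S 0 v| + |lam S 1 v| + |lam S 2 v|) ≤ lam S j v := by
      intro j
      have := neg_abs_le (lam S j v)
      fin_cases j <;> simp only [Fin.zero_eta, Fin.mk_one, Fin.reduceFinMk] at this ⊢ <;> linarith
    refine ⟨2 + 2 * (|lam S 0 v| + |lam S 1 v| + |lam S 2 v|), by linarith, ?_⟩
    intro j
    have := hle j
    have := hle i
    linarith
  set s : ℝ := 1 / (2 * (1 + M)) with hsdef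
  have hs0 : 0 < s := by positivity
  have hsM : s * M = 1 / 2 - s := by rw [hsdef]; field_simp; ring
  have hs1 : s < 1 := by nlinarith
  set q : Pt := (1 - s) • c + s • v with hq
  have hqG : q ∈ G.region :=
    hr.1.1 (region_sub hSG hcS) hv (by linarith) hs0.le (by ring)
  have hqpos : ∀ k, 0 < lam (nb S i) k q := by
    apply nb_pos
    · rw [hq, lam_comb S i c v _ _ (by ring), hci]
      nlinarith
    · intro j hj
      rw [hq, lam_comb S i c v _ _ (by ring), lam_comb S j c v _ _ (by ring), hci, hcj j hj]
      have := mul_lt_mul_of_pos_left (hM j) hs0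
      nlinarith
  -- the neighbour belongs to the grid
  obtain ⟨N, hN, hqN⟩ := exists_tri hqG
  have hNe : nb S i = N := by
    obtain ⟨m, n, hm, hn⟩ := nb_lattice S i
    obtain ⟨m', n', hm', hn'⟩ := lattice_coords (G.aligned S hSG N hN)
    rw [cX_sub] at hm'
    rw [cY_sub] at hn'
    refine tri_eq _ _ (m + m') (n + n') ?_ ?_ q hqpos ((mem_region_iff N q).1 hqN)
    · push_cast; linarith
    · push_cast; linarith
  -- equality of the affine pieces for `g`
  have hφN : φ S = φ N := by
    have hle : ∀ i, 0 ≤ φ S (vtx N i) - φ N (vtx N i) := by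
      intro i
      have := rep_le hr hSG (region_sub hN (vtx_mem N i))
      rw [hr.2.1 N hN _ (vtx_mem N i)] at this
      linarith
    have hq0 : φ S q ≤ φ N q := by
      have h1 := hr.1.2 (region_sub hSG hcS) hv (by linarith : (0 : ℝ) ≤ 1 - s) hs0.le (by ring)
      rw [← hq, hr.2.1 S hSG c hcS, ← hgv, ← hSφ, hr.2.1 N hN q hqN] at h1
      rw [hq, aff_comb (φ S) c v _ _ (by ring), ← hq]
      simpa using h1
    rw [aff_lam (φ S) N q, aff_lam (φ N) N q] at hq0
    rw [hNe] at hqpos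
    have p0 := mul_nonneg (hqpos 0).le (hle 0)
    have p1 := mul_nonneg (hqpos 1).le (hle 1)
    have p2 := mul_nonneg (hqpos 2).le (hle 2)
    apply aff_ext _ _ N
    intro k
    have hk : lam N k q * (φ S (vtx N k) - φ N (vtx N k)) = 0 := by
      fin_cases k <;> simp only [Fin.zero_eta, Fin.mk_one, Fin.reduceFinMk] <;> linarith
    rcases mul_eq_zero.1 hk with hk | hk
    · exact absurd hk (hqpos k).ne'
    · linarith
  -- transfer to `h'`
  obtain ⟨k, hk⟩ := nb_shared S i
  rw [hNe] at hk
  have hfl : Flat h S N := by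
    intro k
    rw [← rep_linear hr hSG, ← rep_linear hr hN, hφN]
  have hfl' : Flat h' S N := by
    rw [← flat_iff]
    refine (hs S hSG N hN (hNe ▸ nb_ne S i) ⟨ded S k, ?_⟩).1 ((flat_iff _ _ _).2 hfl)
    rw [Finset.mem_inter]
    exact ⟨(mem_edgeFinset _ _).2 ⟨k, rfl⟩, (mem_edgeFinset _ _).2 ⟨k, hk⟩⟩
  have hφN' : φ' S = φ' N := by
    apply aff_eq_of_linear _ _ (ded S k).1
    · rw [← hr'.2.1 S hSG _ (ded_fst_mem S k), hk, ← hr'.2.1 N hN _ (ded_fst_mem N k)]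
    · intro k
      rw [rep_linear hr' hSG, rep_linear hr' hN, hfl' k]
  have hlt := nb_pot S i v hi
  rw [hNe] at hlt
  have := hmin N (Finset.mem_filter.2 ⟨hN, hφN ▸ hSφ, hφN' ▸ hSφ'⟩)
  linarith

/-- A small extrapolation beyond `h`, away from `h'`, stays in the polyhedron. -/
lemma extrapolate {G : ConvexGrid} {F : Set Ed} {h₀ h h' : Ed → ℝ} (hh : h ∈ CC G F h₀)
    (hh' : h' ∈ CC G F h₀) (hs : SameTiling G h h') :
    ∃ ε : ℝ, 0 < ε ∧ ε < 1 ∧ (fun e => h e + ε * (h e - h' e)) ∈ CC G F h₀ := by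
  obtain ⟨g, φ, hr⟩ := exists_rep hh.1
  obtain ⟨g', φ', hr'⟩ := exists_rep hh'.1
  have hev : ∀ᶠ ε in nhdsWithin (0 : ℝ) (Set.Ioi 0), ∀ T ∈ G.tris, ∀ T' ∈ G.tris, ∀ i : Fin 3,
      ε * (φ' T (vtx T' i) - g' (vtx T' i)) ≤ φ T (vtx T' i) - g (vtx T' i) := by
    rw [Finset.eventually_all]
    intro T hT
    rw [Finset.eventually_all]
    intro T' hT'
    rw [Filter.eventually_all]
    intro i
    have hv := region_sub hT' (vtx_mem T' i)
    have hd := rep_le hr hT hv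
    rcases hd.eq_or_lt with hd | hd
    · have := walk hr hr' hs hT hv hd.symm
      simp [this, hd]
    · have ht : Filter.Tendsto (fun ε : ℝ => ε * (φ' T (vtx T' i) - g' (vtx T' i)))
          (nhdsWithin (0 : ℝ) (Set.Ioi 0)) (nhds 0) := by
        have : Continuous (fun ε : ℝ => ε * (φ' T (vtx T' i) - g' (vtx T' i))) := by fun_prop
        have := this.tendsto 0
        rw [zero_mul] at this
        exact this.mono_left nhdsWithin_le_nhds
      exact (ht.eventually_lt_const (sub_pos.2 hd)).mono fun _ h => h.le
  have hlt1 : ∀ᶠ ε in nhdsWithin (0 : ℝ) (Set.Ioi 0), ε < 1 :=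
    (eventually_lt_nhds one_pos).filter_mono nhdsWithin_le_nhds
  obtain ⟨ε, ⟨hε, hε1⟩, hε0⟩ := ((hev.and hlt1).and self_mem_nhdsWithin).exists
  have hε0 : 0 < ε := hε0
  refine ⟨ε, hε0, hε1, ⟨?_, fun x => g x + ε * (g x - g' x), ?_, ?_, ?_⟩, ?_⟩
  · intro T hT
    linear_combination (1 + ε) * hh.1.1 T hT - ε * hh'.1.1 T hT
  · have key : ∀ T ∈ G.tris, ∀ x ∈ G.region,
        g x + ε * (g x - g' x) ≤ φ T x + ε * (φ T x - φ' T x) := by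
      intro T hT x hx
      obtain ⟨T', hT', hx'⟩ := exists_tri hx
      rw [hr.2.1 T' hT' x hx', hr'.2.1 T' hT' x hx']
      rw [aff_lam (φ T) T' x, aff_lam (φ' T) T' x, aff_lam (φ T') T' x, aff_lam (φ' T') T' x]
      have hl := (mem_region_iff T' x).1 hx'
      have hvx : ∀ i, 0 ≤ lam T' i x * ((φ T (vtx T' i) - φ T' (vtx T' i)) +
          ε * ((φ T (vtx T' i) - φ T' (vtx T' i)) - (φ' T (vtx T' i) - φ' T' (vtx T' i)))) := by
        intro i
        apply mul_nonneg (hl i)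
        have a := hε T hT T' hT' i
        have b := rep_le hr hT (region_sub hT' (vtx_mem T' i))
        rw [hr.2.1 T' hT' _ (vtx_mem T' i)] at a b
        rw [hr'.2.1 T' hT' _ (vtx_mem T' i)] at a
        have := mul_nonneg hε0.le (sub_nonneg.2 b)
        linarith
      have h0 := hvx 0
      have h1 := hvx 1
      have h2 := hvx 2
      linarith
    refine ⟨G.convex, ?_⟩
    intro x hx y hy a b ha hb hab
    have hz := hr.1.1 hx hy ha hb hab
    obtain ⟨T, hT, hzT⟩ := exists_tri hz
    have kx := mul_le_mul_of_nonneg_left (key T hT x hx) ha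
    have ky := mul_le_mul_of_nonneg_left (key T hT y hy) hb
    simp only [smul_eq_mul]
    rw [hr.2.1 T hT _ hzT, hr'.2.1 T hT _ hzT, aff_comb _ _ _ _ _ hab, aff_comb _ _ _ _ _ hab]
    linarith
  · intro T hT
    refine ⟨φ T + ε • (φ T - φ' T), fun x hx => ?_⟩
    simp [hr.2.1 T hT x hx, hr'.2.1 T hT x hx]
  · intro e he
    simp only [hr.2.2 e he, hr'.2.2 e he]; ring
  · intro e he
    simp only [hh.2 e he, hh'.2 e he]; ring

/-- Lemma on tilings.  h ∈ C(G,h₀) is a vertex of C(G,h₀) iff h is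
uniquely determined by its tiling. -/
theorem stmt6 (G : ConvexGrid) (F : Set Ed) (hF : F ⊆ ↑G.edges) (h₀ : Ed → ℝ)
    (h : Ed → ℝ) (hh : h ∈ CC G F h₀) :
    IsVertexOf G (CC G F h₀) h ↔
      ∀ h' ∈ CC G F h₀, SameTiling G h h' → ∀ e ∈ G.edges, h' e = h e := by
  constructor
  · rintro ⟨_, hv⟩ h' hh' hs e he
    obtain ⟨ε, hε0, hε1, hm⟩ := extrapolate hh hh' hs
    have hm2 := CC_convex hh hh' (a := 1 - ε) (b := ε) (by linarith) hε0.le (by ring)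
    have := hv _ hm _ hm2 (fun e _ => by ring) e he
    have h0 : ε * (h e - h' e) = 0 := by linarith
    rcases mul_eq_zero.1 h0 with h0 | h0
    · exact absurd h0 hε0.ne'
    · linarith
  · intro hu
    refine ⟨hh, ?_⟩
    intro h₁ m₁ h₂ m₂ hm
    obtain ⟨g₁, φ₁, hr₁⟩ := exists_rep m₁.1
    obtain ⟨g₂, φ₂, hr₂⟩ := exists_rep m₂.1
    have hm3 := CC_convex m₁ m₂ (a := 3 / 4) (b := 1 / 4) (by norm_num) (by norm_num) (by norm_num)
    obtain ⟨g₃, φ₃, hr₃⟩ := exists_rep hm3.1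
    have key := hu _ hm3 ?_
    · intro e he
      have a := key e he
      have b := hm e he
      linarith
    · intro T hT T' hT' _ hne
      obtain ⟨e, he⟩ := hne
      rw [Finset.mem_inter] at he
      obtain ⟨k, rfl⟩ := (mem_edgeFinset _ _).1 he.1
      obtain ⟨k', hk'⟩ := (mem_edgeFinset _ _).1 he.2
      have hu1 := ded_fst_mem T k
      have hu2 : (ded T k).1 ∈ T'.region := by rw [hk']; exact ded_fst_mem T' k'
      rw [flat_iff, flat_iff]
      constructor
      · intro hf
        have f1 := flat_of_mid hr₁ hr₂ hm hT hT' hu1 hu2 hf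
        intro j
        have a := hf j
        have b := f1 j
        rw [hm _ (ded_mem_edges hT j), hm _ (ded_mem_edges hT' j)] at a
        simp only
        linarith
      · intro hf
        have hb : ∀ e ∈ G.edges, (3 / 4 * h₁ e + 1 / 4 * h₂ e) =
            (h₁ e + h e) / 2 := by
          intro e he
          rw [hm e he]; ring
        obtain ⟨g, φ, hr⟩ := exists_rep hh.1
        have f1 := flat_of_mid hr₁ hr hb hT hT' hu1 hu2 hf
        intro j
        have a := hf j
        have b := f1 j
        simp only at a
        rw [hm _ (ded_mem_edges hT j), hm _ (ded_mem_edges hT' j)]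
        linarith
end
end

section
/- Let G be a convex triangular grid such that the convex polygon R(G) is not a hexagon (i.e., has at most five sides), and let h₀ : B(G) → ℝ be a function on all boundary edges of G. Then the polyhedron C(G,h₀) is bounded, i.e., it is a (possibly empty) polytope. -/
open scoped BigOperators

attribute [local instance] Classical.propDecidable

noncomputable section

namespace TG

def Lp (o : Pt) (x y : ℝ) : Pt := (o.1 + x - y / 2, o.2 + y * (Real.sqrt 3 / 2))
def PZ (o : Pt) (v : ℤ × ℤ) : Pt := Lp o v.1 v.2
def mkT (o : Pt) (m n : ℤ) (b : Bool) : GridTriangle := ⟨Lp o m n, b⟩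
def VV (G : ConvexGrid) (o : Pt) (v : ℤ × ℤ) : Prop := PZ o v ∈ G.region
def Al (G : ConvexGrid) (o : Pt) : Prop := ∀ T ∈ G.tris, ∃ m n : ℤ, ∃ b, T = mkT o m n b

/-- inverse coordinates -/
def cy (o q : Pt) : ℝ := (q.2 - o.2) / (Real.sqrt 3 / 2)
def cx (o q : Pt) : ℝ := q.1 - o.1 + cy o q / 2

lemma s3 : (0 : ℝ) < Real.sqrt 3 / 2 := by positivity

@[simp] lemma cy_Lp (o : Pt) (x y : ℝ) : cy o (Lp o x y) = y := by
  have := s3.ne'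
  simp only [cy, Lp]
  field_simp
  ring
@[simp] lemma cx_Lp (o : Pt) (x y : ℝ) : cx o (Lp o x y) = x := by
  simp only [cx, cy_Lp]
  simp only [Lp]
  ring
lemma Lp_c (o q : Pt) : Lp o (cx o q) (cy o q) = q := by
  have := s3.ne'
  ext
  · simp only [Lp, cx]
    ring
  · simp only [Lp, cy]
    field_simp
    ring

lemma cy_comb (o p q : Pt) (a b : ℝ) (h : a + b = 1) :
    cy o (a • p + b • q) = a * cy o p + b * cy o q := by
  have := s3.ne'
  obtain rfl : b = 1 - a := by linarith
  simp only [cy, Prod.snd_add, Prod.smul_snd, smul_eq_mul]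
  field_simp
  ring
lemma cx_comb (o p q : Pt) (a b : ℝ) (h : a + b = 1) :
    cx o (a • p + b • q) = a * cx o p + b * cx o q := by
  simp only [cx, cy_comb o p q a b h]
  obtain rfl : b = 1 - a := by linarith
  simp only [Prod.fst_add, Prod.smul_fst, smul_eq_mul]
  ring

lemma Lp_inj (o : Pt) {x y x' y' : ℝ} (h : Lp o x y = Lp o x' y') : x = x' ∧ y = y' := by
  constructor
  · rw [← cx_Lp o x y, h, cx_Lp]
  · rw [← cy_Lp o x y, h, cy_Lp]

lemma PZ_inj (o : Pt) : Function.Injective (PZ o) := by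
  intro u v h
  obtain ⟨h1, h2⟩ := Lp_inj o h
  ext
  · exact_mod_cast h1
  · exact_mod_cast h2

lemma half_convex (o : Pt) (A B C : ℝ) : Convex ℝ {q : Pt | A * cx o q + B * cy o q ≤ C} := by
  intro p hp q hq a b ha hb hab
  simp only [Set.mem_ofPred_eq] at *
  rw [cx_comb _ _ _ _ _ hab, cy_comb _ _ _ _ _ hab]
  have h1 := mul_le_mul_of_nonneg_left hp ha
  have h2 := mul_le_mul_of_nonneg_left hq hb
  have : C = a * C + b * C := by rw [← add_mul, hab, one_mul]
  linarith

lemma v0_mk (o : Pt) (m n : ℤ) (b) : (mkT o m n b).v0 = PZ o (m, n) := rfl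
lemma v1_mk (o : Pt) (m n : ℤ) (b) : (mkT o m n b).v1 = PZ o (m + 1, n) := by
  simp only [mkT, GridTriangle.v1, PZ, Lp, xiv]
  ext <;> simp <;> ring
lemma v2_mkt (o : Pt) (m n : ℤ) : (mkT o m n true).v2 = PZ o (m + 1, n + 1) := by
  simp only [mkT, GridTriangle.v2, PZ, Lp, xiv]
  ext <;> simp <;> ring
lemma v2_mkf (o : Pt) (m n : ℤ) : (mkT o m n false).v2 = PZ o (m, n - 1) := by
  simp only [mkT, GridTriangle.v2, PZ, Lp, xiv]
  ext <;> simp <;> ring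

lemma hull_le (o : Pt) (A B C : ℝ) (s : Set Pt) (h : ∀ q ∈ s, A * cx o q + B * cy o q ≤ C)
    (q : Pt) (hq : q ∈ convexHull ℝ s) : A * cx o q + B * cy o q ≤ C :=
  convexHull_min (t := {q : Pt | A * cx o q + B * cy o q ≤ C}) h (half_convex o A B C) hq

lemma reg_t (o : Pt) (m n : ℤ) (q : Pt) (hq : q ∈ (mkT o m n true).region) :
    (n : ℝ) ≤ cy o q ∧ cy o q - n ≤ cx o q - m ∧ cx o q ≤ m + 1 := by
  simp only [GridTriangle.region, v0_mk, v1_mk, v2_mkt, PZ] at hq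
  have h1 := hull_le o 0 (-1) (-n) _ (by simp) q hq
  have h2 := hull_le o (-1) 1 (n - m) _ (by
    simp only [Set.mem_insert_iff, Set.mem_singleton_iff, forall_eq_or_imp, forall_eq, cx_Lp, cy_Lp]
    push_cast
    refine ⟨?_, ?_, ?_⟩ <;> linarith) q hq
  have h3 := hull_le o 1 0 (m + 1) _ (by simp) q hq
  refine ⟨?_, ?_, ?_⟩ <;> linarith

lemma reg_f (o : Pt) (m n : ℤ) (q : Pt) (hq : q ∈ (mkT o m n false).region) :
    (m : ℝ) ≤ cx o q ∧ cy o q ≤ n ∧ (cx o q - m) - (cy o q - n) ≤ 1 := by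
  simp only [GridTriangle.region, v0_mk, v1_mk, v2_mkf, PZ] at hq
  have h1 := hull_le o (-1) 0 (-m) _ (by simp) q hq
  have h2 := hull_le o 0 1 n _ (by simp) q hq
  have h3 := hull_le o 1 (-1) (m + 1 - n) _ (by
    simp only [Set.mem_insert_iff, Set.mem_singleton_iff, forall_eq_or_imp, forall_eq, cx_Lp, cy_Lp]
    push_cast
    refine ⟨?_, ?_, ?_⟩ <;> linarith) q hq
  refine ⟨?_, ?_, ?_⟩ <;> linarith

lemma v_mem (T : GridTriangle) : T.v0 ∈ T.region ∧ T.v1 ∈ T.region ∧ T.v2 ∈ T.region := by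
  refine ⟨?_, ?_, ?_⟩ <;> apply subset_convexHull <;> simp

lemma reg_sub {G : ConvexGrid} {T} (hT : T ∈ G.tris) : T.region ⊆ G.region :=
  fun _ hx => Set.mem_biUnion hT hx

/-- A lattice point close to a point of a little triangle is a vertex of it. -/
lemma near_t (o : Pt) (m n : ℤ) (q : Pt) (hq : q ∈ (mkT o m n true).region) (u : ℤ × ℤ)
    (h1 : |cx o q - u.1| < 1) (h2 : |cy o q - u.2| < 1)
    (h3 : |(cx o q - u.1) - (cy o q - u.2)| < 1) :
    u = (m, n) ∨ u = (m + 1, n) ∨ u = (m + 1, n + 1) := by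
  obtain ⟨a1, a2, a3⟩ := reg_t o m n q hq
  rw [abs_lt] at h1 h2 h3
  obtain ⟨u1, u2⟩ := u
  simp only at *
  have b1 : m < u1 + 1 := by
    have : (m : ℝ) < u1 + 1 := by linarith
    exact_mod_cast this
  have b2 : u1 < m + 2 := by
    have : (u1 : ℝ) < m + 2 := by linarith
    exact_mod_cast this
  have b3 : n < u2 + 1 := by
    have : (n : ℝ) < u2 + 1 := by linarith
    exact_mod_cast this
  have b4 : u2 < n + 2 := by
    have : (u2 : ℝ) < n + 2 := by linarith
    exact_mod_cast this
  have b5 : u2 - n < u1 - m + 1 := by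
    have : (u2 : ℝ) - n < u1 - m + 1 := by linarith
    exact_mod_cast this
  simp only [Prod.mk.injEq]
  omega

lemma near_f (o : Pt) (m n : ℤ) (q : Pt) (hq : q ∈ (mkT o m n false).region) (u : ℤ × ℤ)
    (h1 : |cx o q - u.1| < 1) (h2 : |cy o q - u.2| < 1)
    (h3 : |(cx o q - u.1) - (cy o q - u.2)| < 1) :
    u = (m, n) ∨ u = (m + 1, n) ∨ u = (m, n - 1) := by
  obtain ⟨a1, a2, a3⟩ := reg_f o m n q hq
  rw [abs_lt] at h1 h2 h3
  obtain ⟨u1, u2⟩ := u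
  simp only at *
  have b1 : m < u1 + 1 := by
    have : (m : ℝ) < u1 + 1 := by linarith
    exact_mod_cast this
  have b2 : u1 < m + 2 := by
    have : (u1 : ℝ) < m + 2 := by linarith
    exact_mod_cast this
  have b3 : u2 < n + 1 := by
    have : (u2 : ℝ) < n + 1 := by linarith
    exact_mod_cast this
  have b4 : n - 2 < u2 := by
    have : (n : ℝ) - 2 < u2 := by linarith
    exact_mod_cast this
  have b5 : (u1 - m) - (u2 - n) < 2 := by
    have : ((u1 : ℝ) - m) - (u2 - n) < 2 := by linarith
    exact_mod_cast this
  simp only [Prod.mk.injEq]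
  omega

lemma mem_region {G : ConvexGrid} {o q : Pt} (hA : Al G o) (hq : q ∈ G.region) :
    ∃ m n : ℤ, ∃ b, mkT o m n b ∈ G.tris ∧ q ∈ (mkT o m n b).region := by
  simp only [ConvexGrid.region, Set.mem_iUnion] at hq
  obtain ⟨T, hT, h⟩ := hq
  obtain ⟨m, n, b, rfl⟩ := hA T hT
  exact ⟨m, n, b, hT, h⟩

lemma VV_t {G : ConvexGrid} {o : Pt} {m n : ℤ} (h : mkT o m n true ∈ G.tris) :
    VV G o (m, n) ∧ VV G o (m + 1, n) ∧ VV G o (m + 1, n + 1) := by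
  obtain ⟨h1, h2, h3⟩ := v_mem (mkT o m n true)
  rw [v0_mk] at h1
  rw [v1_mk] at h2
  rw [v2_mkt] at h3
  exact ⟨reg_sub h h1, reg_sub h h2, reg_sub h h3⟩
lemma VV_f {G : ConvexGrid} {o : Pt} {m n : ℤ} (h : mkT o m n false ∈ G.tris) :
    VV G o (m, n) ∧ VV G o (m + 1, n) ∧ VV G o (m, n - 1) := by
  obtain ⟨h1, h2, h3⟩ := v_mem (mkT o m n false)
  rw [v0_mk] at h1
  rw [v1_mk] at h2
  rw [v2_mkf] at h3
  exact ⟨reg_sub h h1, reg_sub h h2, reg_sub h h3⟩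

lemma near {G : ConvexGrid} {o q : Pt} (hA : Al G o) (hq : q ∈ G.region) (u : ℤ × ℤ)
    (h1 : |cx o q - u.1| < 1) (h2 : |cy o q - u.2| < 1)
    (h3 : |(cx o q - u.1) - (cy o q - u.2)| < 1) : VV G o u := by
  obtain ⟨m, n, b, hT, h⟩ := mem_region hA hq
  cases b
  · obtain ⟨a, b, c⟩ := VV_f hT
    rcases near_f o m n q h u h1 h2 h3 with rfl | rfl | rfl <;> assumption
  · obtain ⟨a, b, c⟩ := VV_t hT
    rcases near_t o m n q h u h1 h2 h3 with rfl | rfl | rfl <;> assumption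

lemma cxP (o : Pt) (u : ℤ × ℤ) : cx o (PZ o u) = u.1 := by simp [PZ]
lemma cyP (o : Pt) (u : ℤ × ℤ) : cy o (PZ o u) = u.2 := by simp [PZ]

/-- convex combination of two vertices near a third -/
lemma near2 {G : ConvexGrid} {o : Pt} (hA : Al G o) {v w : ℤ × ℤ} (hv : VV G o v) (hw : VV G o w)
    (u : ℤ × ℤ) (a b : ℝ) (ha : 0 ≤ a) (hb : 0 ≤ b) (hab : a + b = 1)
    (h1 : |a * v.1 + b * w.1 - u.1| < 1) (h2 : |a * v.2 + b * w.2 - u.2| < 1)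
    (h3 : |(a * v.1 + b * w.1 - u.1) - (a * v.2 + b * w.2 - u.2)| < 1) : VV G o u := by
  have hq : a • PZ o v + b • PZ o w ∈ G.region := G.convex hv hw ha hb hab
  apply near hA hq u <;>
  simpa only [cx_comb _ _ _ _ _ hab, cy_comb _ _ _ _ _ hab, cxP, cyP]

lemma centroid_mem {G : ConvexGrid} {o : Pt} {u v w : ℤ × ℤ} (hu : VV G o u) (hv : VV G o v)
    (hw : VV G o w) : ∃ q ∈ G.region, 3 * cx o q = u.1 + v.1 + w.1 ∧ 3 * cy o q = u.2 + v.2 + w.2 := by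
  have e1 : (1/2 : ℝ) + 1/2 = 1 := by norm_num
  have e2 : (2/3 : ℝ) + 1/3 = 1 := by norm_num
  refine ⟨(2/3 : ℝ) • ((1/2 : ℝ) • PZ o u + (1/2 : ℝ) • PZ o v) + (1/3 : ℝ) • PZ o w, ?_, ?_, ?_⟩
  · exact G.convex (G.convex hu hv (by norm_num) (by norm_num) e1) hw (by norm_num) (by norm_num) e2
  · rw [cx_comb _ _ _ _ _ e2, cx_comb _ _ _ _ _ e1]
    simp only [cxP]
    ring
  · rw [cy_comb _ _ _ _ _ e2, cy_comb _ _ _ _ _ e1]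
    simp only [cyP]
    ring

lemma tri_t {G : ConvexGrid} {o : Pt} (hA : Al G o) (m n : ℤ) : mkT o m n true ∈ G.tris ↔
    VV G o (m, n) ∧ VV G o (m + 1, n) ∧ VV G o (m + 1, n + 1) := by
  refine ⟨VV_t, fun ⟨h1, h2, h3⟩ => ?_⟩
  obtain ⟨q, hq, hx, hy⟩ := centroid_mem h1 h2 h3
  obtain ⟨m', n', b, hT, h⟩ := mem_region hA hq
  push_cast at hx hy
  cases b
  · exfalso
    obtain ⟨a1, a2, a3⟩ := reg_f o m' n' q h
    have b1 : 3 * m' ≤ 3 * m + 2 := by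
      have : 3 * (m' : ℝ) ≤ 3 * m + 2 := by linarith
      exact_mod_cast this
    have b2 : 3 * n + 1 ≤ 3 * n' := by
      have : 3 * (n : ℝ) + 1 ≤ 3 * n' := by linarith
      exact_mod_cast this
    have b3 : 3 * m + 2 - 3 * m' - (3 * n + 1 - 3 * n') ≤ 3 := by
      have : 3 * (m : ℝ) + 2 - 3 * m' - (3 * n + 1 - 3 * n') ≤ 3 := by linarith
      exact_mod_cast this
    omega
  · obtain ⟨a1, a2, a3⟩ := reg_t o m' n' q h
    have b1 : 3 * n' ≤ 3 * n + 1 := by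
      have : 3 * (n' : ℝ) ≤ 3 * n + 1 := by linarith
      exact_mod_cast this
    have b2 : 3 * m + 2 ≤ 3 * m' + 3 := by
      have : 3 * (m : ℝ) + 2 ≤ 3 * m' + 3 := by linarith
      exact_mod_cast this
    have b3 : (3 * n + 1 - 3 * n') ≤ 3 * m + 2 - 3 * m' := by
      have : (3 * (n : ℝ) + 1 - 3 * n') ≤ 3 * m + 2 - 3 * m' := by linarith
      exact_mod_cast this
    obtain ⟨rfl, rfl⟩ : m' = m ∧ n' = n := by omega
    exact hT

lemma tri_f {G : ConvexGrid} {o : Pt} (hA : Al G o) (m n : ℤ) : mkT o m n false ∈ G.tris ↔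
    VV G o (m, n) ∧ VV G o (m + 1, n) ∧ VV G o (m, n - 1) := by
  refine ⟨VV_f, fun ⟨h1, h2, h3⟩ => ?_⟩
  obtain ⟨q, hq, hx, hy⟩ := centroid_mem h1 h2 h3
  obtain ⟨m', n', b, hT, h⟩ := mem_region hA hq
  push_cast at hx hy
  cases b
  · obtain ⟨a1, a2, a3⟩ := reg_f o m' n' q h
    have b1 : 3 * m' ≤ 3 * m + 1 := by
      have : 3 * (m' : ℝ) ≤ 3 * m + 1 := by linarith
      exact_mod_cast this
    have b2 : 3 * n - 1 ≤ 3 * n' := by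
      have : 3 * (n : ℝ) - 1 ≤ 3 * n' := by linarith
      exact_mod_cast this
    have b3 : 3 * m + 1 - 3 * m' - (3 * n - 1 - 3 * n') ≤ 3 := by
      have : 3 * (m : ℝ) + 1 - 3 * m' - (3 * n - 1 - 3 * n') ≤ 3 := by linarith
      exact_mod_cast this
    obtain ⟨rfl, rfl⟩ : m' = m ∧ n' = n := by omega
    exact hT
  · exfalso
    obtain ⟨a1, a2, a3⟩ := reg_t o m' n' q h
    have b1 : 3 * n' ≤ 3 * n - 1 := by
      have : 3 * (n' : ℝ) ≤ 3 * n - 1 := by linarith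
      exact_mod_cast this
    have b2 : 3 * m + 1 ≤ 3 * m' + 3 := by
      have : 3 * (m : ℝ) + 1 ≤ 3 * m' + 3 := by linarith
      exact_mod_cast this
    have b3 : (3 * n - 1 - 3 * n') ≤ 3 * m + 1 - 3 * m' := by
      have : (3 * (n : ℝ) - 1 - 3 * n') ≤ 3 * m + 1 - 3 * m' := by linarith
      exact_mod_cast this
    omega

def dd : Fin 6 → ℤ × ℤ := ![(1, 0), (1, 1), (0, 1), (-1, 0), (-1, -1), (0, -1)]
def lam : Fin 6 → ℤ × ℤ := ![(1, 1), (-1, 2), (-2, 1), (-1, -1), (1, -2), (2, -1)]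
def ev (k : Fin 6) (v : ℤ × ℤ) : ℤ := (lam k).1 * v.1 + (lam k).2 * v.2

lemma ev_add (k u v) : ev k (u + v) = ev k u + ev k v := by
  simp only [ev, Prod.fst_add, Prod.snd_add]; ring

lemma ev_pos (k : Fin 6) : 0 < ev k (dd k) ∧ 0 < ev k (dd (k + 1)) ∧ 0 < ev k (dd (k + 2)) ∧
    ev k (dd (k + 3)) < 0 ∧ ev k (dd (k + 4)) < 0 ∧ ev k (dd (k + 5)) < 0 := by
  fin_cases k <;> simp [ev, dd, lam]

lemma all6 (P : Fin 6 → Prop) (k : Fin 6) (h0 : P k) (h1 : P (k + 1)) (h2 : P (k + 2))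
    (h3 : P (k + 3)) (h4 : P (k + 4)) (h5 : P (k + 5)) (i : Fin 6) : P i := by
  fin_cases k <;> fin_cases i <;> assumption

lemma ev_ne (k i : Fin 6) : ev k (dd i) ≠ 0 := by
  obtain ⟨h0, h1, h2, h3, h4, h5⟩ := ev_pos k
  exact all6 (fun i => ev k (dd i) ≠ 0) k h0.ne' h1.ne' h2.ne' h3.ne h4.ne h5.ne i

lemma dd_succ (i : Fin 6) : dd i + dd (i + 2) = dd (i + 1) := by
  fin_cases i <;> rfl
lemma dd_opp (i : Fin 6) : dd i + dd (i + 3) = 0 := by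
  fin_cases i <;> rfl

lemma dconv {G : ConvexGrid} {o : Pt} (hA : Al G o) (p : ℤ × ℤ) (i : Fin 6)
    (h1 : VV G o (p + dd i)) (h2 : VV G o (p + dd (i + 2))) : VV G o (p + dd (i + 1)) := by
  have key : ∀ x : ℤ, |x| ≤ 1 → |((x : ℝ)) / 2| < 1 := by
    intro x hx
    have : |(x : ℝ)| ≤ 1 := by exact_mod_cast hx
    rw [abs_le] at this
    rw [abs_lt]
    constructor <;> linarith [this.1, this.2]
  have hd : |(dd (i + 1)).1| ≤ 1 ∧ |(dd (i + 1)).2| ≤ 1 ∧ |(dd (i + 1)).1 - (dd (i + 1)).2| ≤ 1 := by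
    fin_cases i <;> simp [dd]
  have e := dd_succ i
  have e1 : ((dd i).1 : ℝ) + (dd (i + 2)).1 = (dd (i + 1)).1 := by rw [← e]; simp
  have e2 : ((dd i).2 : ℝ) + (dd (i + 2)).2 = (dd (i + 1)).2 := by rw [← e]; simp
  apply near2 hA h1 h2 _ (1/2) (1/2) (by norm_num) (by norm_num) (by norm_num)
  · convert key _ ((abs_neg _).trans_le hd.1) using 2
    push_cast [Prod.fst_add]
    linarith
  · convert key _ ((abs_neg _).trans_le hd.2.1) using 2
    push_cast [Prod.snd_add]
    linarith
  · convert key _ ((abs_neg _).trans_le hd.2.2) using 2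
    push_cast [Prod.fst_add, Prod.snd_add]
    linarith

lemma ex_tri {G : ConvexGrid} {o : Pt} (hA : Al G o) (p : ℤ × ℤ) (h : VV G o p) :
    ∃ k, VV G o (p + dd k) ∧ VV G o (p + dd (k + 1)) := by
  obtain ⟨m, n, b, hT, hq⟩ := mem_region hA h
  cases b
  · obtain ⟨a, b, c⟩ := VV_f hT
    rcases near_f o m n _ hq p (by simp [cxP]) (by simp [cyP]) (by simp [cxP, cyP]) with rfl | rfl | rfl
    · exact ⟨5, by simpa [dd, sub_eq_add_neg] using c, by simpa [dd] using b⟩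
    · exact ⟨3, by simpa [dd] using a, by simpa [dd, sub_eq_add_neg] using c⟩
    · exact ⟨1, by simpa [dd] using b, by simpa [dd] using a⟩
  · obtain ⟨a, b, c⟩ := VV_t hT
    rcases near_t o m n _ hq p (by simp [cxP]) (by simp [cyP]) (by simp [cxP, cyP]) with rfl | rfl | rfl
    · exact ⟨0, by simpa [dd] using b, by simpa [dd] using c⟩
    · exact ⟨2, by simpa [dd] using c, by simpa [dd] using a⟩
    · exact ⟨4, by simpa [dd] using a, by simpa [dd] using b⟩

lemma decomp (v : ℤ × ℤ) : ∃ (i : Fin 6) (a b : ℤ), 0 ≤ a ∧ 0 ≤ b ∧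
    v.1 = a * (dd i).1 + b * (dd (i + 1)).1 ∧ v.2 = a * (dd i).2 + b * (dd (i + 1)).2 := by
  obtain ⟨x, y⟩ := v
  rcases le_total 0 x with hx | hx <;> rcases le_total 0 y with hy | hy
  · rcases le_total x y with h | h
    · exact ⟨1, x, y - x, by omega, by omega, by simp [dd], by simp [dd]⟩
    · exact ⟨0, x - y, y, by omega, by omega, by simp [dd], by simp [dd]⟩
  · exact ⟨5, -y, x, by omega, by omega, by simp [dd], by simp [dd]⟩
  · exact ⟨2, y, -x, by omega, by omega, by simp [dd], by simp [dd]⟩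
  · rcases le_total x y with h | h
    · exact ⟨3, y - x, -y, by omega, by omega, by simp [dd], by simp [dd]⟩
    · exact ⟨4, -x, x - y, by omega, by omega, by simp [dd], by simp [dd]⟩

lemma hex_t (i : Fin 6) (s : ℝ) (h0 : 0 ≤ s) (h1 : s < 1) :
    |s * (dd i).1 + (1 - s) * (dd (i + 1)).1 - (dd (i + 1)).1| < 1 ∧
    |s * (dd i).2 + (1 - s) * (dd (i + 1)).2 - (dd (i + 1)).2| < 1 ∧
    |(s * (dd i).1 + (1 - s) * (dd (i + 1)).1 - (dd (i + 1)).1) -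
      (s * (dd i).2 + (1 - s) * (dd (i + 1)).2 - (dd (i + 1)).2)| < 1 := by
  fin_cases i <;> simp [dd, abs_lt] <;> (repeat' apply And.intro) <;> linarith

lemma hex_s (i : Fin 6) (s : ℝ) (h0 : 0 < s) (h1 : s ≤ 1) :
    |s * (dd i).1 + (1 - s) * (dd (i + 1)).1 - (dd i).1| < 1 ∧
    |s * (dd i).2 + (1 - s) * (dd (i + 1)).2 - (dd i).2| < 1 ∧
    |(s * (dd i).1 + (1 - s) * (dd (i + 1)).1 - (dd i).1) -
      (s * (dd i).2 + (1 - s) * (dd (i + 1)).2 - (dd i).2)| < 1 := by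
  fin_cases i <;> simp [dd, abs_lt] <;> (repeat' apply And.intro) <;> linarith

lemma dir {G : ConvexGrid} {o : Pt} (hA : Al G o) (p c : ℤ × ℤ) (hp : VV G o p) (hc : VV G o c)
    (hne : c ≠ p) (i : Fin 6) (a b : ℤ) (ha : 0 ≤ a) (hb : 0 ≤ b)
    (e1 : (c - p).1 = a * (dd i).1 + b * (dd (i + 1)).1)
    (e2 : (c - p).2 = a * (dd i).2 + b * (dd (i + 1)).2) :
    (0 < a → VV G o (p + dd i)) ∧ (0 < b → VV G o (p + dd (i + 1))) := by
  have hab : 0 < a + b := by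
    by_contra hcon
    obtain ⟨rfl, rfl⟩ : a = 0 ∧ b = 0 := by omega
    apply hne
    simp only [zero_mul, add_zero] at e1 e2
    rw [← sub_eq_zero]
    exact Prod.ext e1 e2
  have habR : (0 : ℝ) < a + b := by exact_mod_cast hab
  have haR : (0 : ℝ) ≤ a := by exact_mod_cast ha
  have hbR : (0 : ℝ) ≤ b := by exact_mod_cast hb
  have e1R : (c.1 : ℝ) - p.1 = a * (dd i).1 + b * (dd (i + 1)).1 := by exact_mod_cast e1
  have e2R : (c.2 : ℝ) - p.2 = a * (dd i).2 + b * (dd (i + 1)).2 := by exact_mod_cast e2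
  set ε : ℝ := 1 / (a + b) with hε
  have hε0 : 0 < ε := by positivity
  have hs : ε * a + ε * b = 1 := by rw [hε]; field_simp
  have ht : ε * b = 1 - ε * a := by linarith
  have hε1 : ε ≤ 1 := by
    rw [hε, div_le_one habR]
    exact_mod_cast hab
  have f1 : (1 - ε) * p.1 + ε * c.1 = p.1 + (ε * a * (dd i).1 + (1 - ε * a) * (dd (i + 1)).1) := by
    rw [← ht]; linear_combination ε * e1R
  have f2 : (1 - ε) * p.2 + ε * c.2 = p.2 + (ε * a * (dd i).2 + (1 - ε * a) * (dd (i + 1)).2) := by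
    rw [← ht]; linear_combination ε * e2R
  have hεb : 0 ≤ ε * b := by positivity
  constructor
  · intro ha'
    have ha'R : (0 : ℝ) < a := by exact_mod_cast ha'
    obtain ⟨h1, h2, h3⟩ := hex_s i (ε * a) (by positivity) (by linarith)
    apply near2 hA hp hc _ (1 - ε) ε (by linarith) hε0.le (by ring)
    · rw [f1]; convert h1 using 2; push_cast [Prod.fst_add]; ring
    · rw [f2]; convert h2 using 2; push_cast [Prod.snd_add]; ring
    · rw [f1, f2]; convert h3 using 2; push_cast [Prod.fst_add, Prod.snd_add]; ring
  · intro hb'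
    have hb'R : (0 : ℝ) < b := by exact_mod_cast hb'
    have : 0 < ε * b := by positivity
    obtain ⟨h1, h2, h3⟩ := hex_t i (ε * a) (by positivity) (by linarith)
    apply near2 hA hp hc _ (1 - ε) ε (by linarith) hε0.le (by ring)
    · rw [f1]; convert h1 using 2; push_cast [Prod.fst_add]; ring
    · rw [f2]; convert h2 using 2; push_cast [Prod.snd_add]; ring
    · rw [f1, f2]; convert h3 using 2; push_cast [Prod.fst_add, Prod.snd_add]; ring

lemma dir2 {G : ConvexGrid} {o : Pt} (hA : Al G o) (k : Fin 6) (p c : ℤ × ℤ) (hp : VV G o p)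
    (hc : VV G o c) (hne : c ≠ p) (hle : ev k p ≤ ev k c) :
    ∃ j, 0 < ev k (dd j) ∧ VV G o (p + dd j) := by
  obtain ⟨i, a, b, ha, hb, e1, e2⟩ := decomp (c - p)
  obtain ⟨h1, h2⟩ := dir hA p c hp hc hne i a b ha hb e1 e2
  have e : ev k (c - p) = a * ev k (dd i) + b * ev k (dd (i + 1)) := by
    simp only [ev, e1, e2]; ring
  have e' : ev k (c - p) = ev k c - ev k p := by
    simp only [ev, Prod.fst_sub, Prod.snd_sub]; ring
  by_contra hcon
  push Not at hcon
  have g1 : 0 < a → ev k (dd i) < 0 := fun h =>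
    lt_of_le_of_ne (not_lt.1 fun h' => hcon i h' (h1 h)) (ev_ne k i)
  have g2 : 0 < b → ev k (dd (i + 1)) < 0 := fun h =>
    lt_of_le_of_ne (not_lt.1 fun h' => hcon _ h' (h2 h)) (ev_ne k _)
  have hab : 0 < a ∨ 0 < b := by
    by_contra hcon
    obtain ⟨rfl, rfl⟩ : a = 0 ∧ b = 0 := by omega
    apply hne
    simp only [zero_mul, add_zero] at e1 e2
    rw [← sub_eq_zero]
    exact Prod.ext e1 e2
  have i1 : a * ev k (dd i) ≤ 0 := by
    rcases ha.eq_or_lt with rfl | h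
    · simp
    · exact (mul_neg_of_pos_of_neg h (g1 h)).le
  have i2 : b * ev k (dd (i + 1)) ≤ 0 := by
    rcases hb.eq_or_lt with rfl | h
    · simp
    · exact (mul_neg_of_pos_of_neg h (g2 h)).le
  rcases hab with h | h
  · have := mul_neg_of_pos_of_neg h (g1 h)
    omega
  · have := mul_neg_of_pos_of_neg h (g2 h)
    omega

lemma comb6 (a b c d e f : Prop) (h1 : a → c → b) (h2 : b → d → c) (h3 : c → e → d)
    (h4 : d → f → e) (h5 : e → a → f) (h6 : f → b → a)
    (ht : (a ∧ b) ∨ (b ∧ c) ∨ (c ∧ d) ∨ (d ∧ e) ∨ (e ∧ f) ∨ (f ∧ a))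
    (hn : ¬ (a ∧ b ∧ c ∧ d ∧ e ∧ f)) (hj : a ∨ b ∨ c) :
    (a ∧ (¬ (b ↔ f))) ∨ (b ∧ (¬ (c ↔ a))) ∨ (c ∧ ¬ (d ↔ b)) := by
  by_cases a <;> by_cases b <;> by_cases c <;> by_cases d <;> by_cases e <;> by_cases f <;>
    simp_all

lemma ex6 (P : Fin 6 → Prop) (k : Fin 6) (h : ∃ i, P i) :
    P k ∨ P (k + 1) ∨ P (k + 2) ∨ P (k + 3) ∨ P (k + 4) ∨ P (k + 5) := by
  by_contra hc
  push Not at hc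
  obtain ⟨i, hi⟩ := h
  exact all6 (fun i => ¬ P i) k hc.1 hc.2.1 hc.2.2.1 hc.2.2.2.1 hc.2.2.2.2.1 hc.2.2.2.2.2 i hi

lemma fadd (k : Fin 6) : k + 1 + 1 = k + 2 ∧ k + 2 + 1 = k + 3 ∧ k + 3 + 1 = k + 4 ∧ k + 4 + 1 = k + 5 ∧
    k + 5 + 1 = k ∧ k + 1 + 2 = k + 3 ∧ k + 2 + 2 = k + 4 ∧ k + 3 + 2 = k + 5 ∧ k + 4 + 2 = k ∧
    k + 5 + 2 = k + 1 ∧ k + 1 + 5 = k ∧ k + 2 + 5 = k + 1 := by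
  fin_cases k <;> simp

lemma walkc (D : Fin 6 → Prop) (hD : ∀ i, D i → D (i + 2) → D (i + 1)) (ht : ∃ i, D i ∧ D (i + 1))
    (hn : ∃ i, ¬ D i) (k : Fin 6) (hj : ∃ j, 0 < ev k (dd j) ∧ D j) :
    ∃ i, 0 < ev k (dd i) ∧ D i ∧ ¬ (D (i + 1) ↔ D (i + 5)) := by
  obtain ⟨p0, p1, p2, p3, p4, p5⟩ := ev_pos k
  obtain ⟨a1, a2, a3, a4, a5, a6, a7, a8, a9, a10, a11, a12⟩ := fadd k
  have hj' : D k ∨ D (k + 1) ∨ D (k + 2) := by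
    rcases ex6 _ k hj with h | h | h | h | h | h
    · exact .inl h.2
    · exact .inr (.inl h.2)
    · exact .inr (.inr h.2)
    · exact absurd h.1 p3.not_gt
    · exact absurd h.1 p4.not_gt
    · exact absurd h.1 p5.not_gt
  have ht' := ex6 _ k ht
  have c1 := hD k
  have c2 := hD (k + 1)
  have c3 := hD (k + 2)
  have c4 := hD (k + 3)
  have c5 := hD (k + 4)
  have c6 := hD (k + 5)
  rw [a1, a6] at c2
  rw [a2, a7] at c3
  rw [a3, a8] at c4
  rw [a4, a9] at c5
  rw [a5, a10] at c6
  rw [a1, a2, a3, a4, a5] at ht'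
  have hn' : ¬ (D k ∧ D (k + 1) ∧ D (k + 2) ∧ D (k + 3) ∧ D (k + 4) ∧ D (k + 5)) := by
    rintro ⟨h0, h1, h2, h3, h4, h5⟩
    obtain ⟨i, hi⟩ := hn
    exact hi (all6 D k h0 h1 h2 h3 h4 h5 i)
  rcases comb6 _ _ _ _ _ _ c1 c2 c3 c4 c5 c6 ht' hn' hj' with h | h | h
  · exact ⟨k, p0, h⟩
  · exact ⟨k + 1, p1, by rw [a1, a11]; exact h⟩
  · exact ⟨k + 2, p2, by rw [a2, a12]; exact h⟩

/-- A point maximal for two distinct chambers is a sharp corner. -/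
lemma cornerc (D : Fin 6 → Prop) (ht : ∃ i, D i ∧ D (i + 1)) (k l : Fin 6) (hkl : k ≠ l)
    (hk : ∀ i, D i → ev k (dd i) ≤ 0) (hl : ∀ i, D i → ev l (dd i) ≤ 0) :
    ∃ i, D i ∧ D (i + 1) ∧ ¬ D (i + 2) ∧ ¬ D (i + 5) := by
  obtain ⟨i, hi, hi'⟩ := ht
  refine ⟨i, hi, hi', fun h => ?_, fun h => ?_⟩
  · have a1 := hk _ hi
    have a2 := hk _ hi'
    have a3 := hk _ h
    have b1 := hl _ hi
    have b2 := hl _ hi'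
    have b3 := hl _ h
    clear hi hi' h hk hl
    fin_cases k <;> fin_cases i <;> (try (exfalso; simp [ev, dd, lam] at a1 a2 a3)) <;>
      fin_cases l <;> first | exact hkl rfl | (exfalso; simp [ev, dd, lam] at b1 b2 b3)
  · have a1 := hk _ hi
    have a2 := hk _ hi'
    have a3 := hk _ h
    have b1 := hl _ hi
    have b2 := hl _ hi'
    have b3 := hl _ h
    clear hi hi' h hk hl
    fin_cases k <;> fin_cases i <;> (try (exfalso; simp [ev, dd, lam] at a1 a2 a3)) <;>
      fin_cases l <;> first | exact hkl rfl | (exfalso; simp [ev, dd, lam] at b1 b2 b3)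

lemma edge_t (o : Pt) (m n : ℤ) (u v : ℤ × ℤ) :
    ((PZ o u, PZ o v) ∈ (mkT o m n true).edgeFinset) ↔
    ((u = (m, n) ∧ v = (m + 1, n)) ∨ (u = (m + 1, n) ∧ v = (m + 1, n + 1)) ∨
      (u = (m + 1, n + 1) ∧ v = (m, n))) := by
  simp only [GridTriangle.edgeFinset, GridTriangle.e0, GridTriangle.e1, GridTriangle.e2, v0_mk,
    v1_mk, v2_mkt, Finset.mem_insert, Finset.mem_singleton, Prod.mk.injEq,
    (PZ_inj o).eq_iff]

lemma edge_f (o : Pt) (m n : ℤ) (u v : ℤ × ℤ) :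
    ((PZ o u, PZ o v) ∈ (mkT o m n false).edgeFinset) ↔
    ((u = (m, n) ∧ v = (m + 1, n)) ∨ (u = (m + 1, n) ∧ v = (m, n - 1)) ∨
      (u = (m, n - 1) ∧ v = (m, n))) := by
  simp only [GridTriangle.edgeFinset, GridTriangle.e0, GridTriangle.e1, GridTriangle.e2, v0_mk,
    v1_mk, v2_mkf, Finset.mem_insert, Finset.mem_singleton, Prod.mk.injEq,
    (PZ_inj o).eq_iff]

lemma bdry_of {G : ConvexGrid} {e : Ed} (T₁ T₂ : GridTriangle)
    (h : ∀ T ∈ G.tris, e ∈ T.edgeFinset → T = T₁ ∨ T = T₂) (h1 : e ∈ T₁.edgeFinset)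
    (h2 : e ∈ T₂.edgeFinset) (hx : ¬ (T₁ ∈ G.tris ↔ T₂ ∈ G.tris)) : e ∈ G.boundary := by
  have main : ∀ T ∈ G.tris, ∀ T' ∉ G.tris, e ∈ T.edgeFinset →
      (∀ U ∈ G.tris, e ∈ U.edgeFinset → U = T ∨ U = T') → e ∈ G.boundary := by
    intro T hT T' hT' he hU
    simp only [ConvexGrid.boundary, ConvexGrid.edges, Finset.mem_filter, Finset.mem_biUnion]
    refine ⟨⟨T, hT, he⟩, ?_⟩
    rw [Finset.card_eq_one]
    refine ⟨T, ?_⟩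
    ext U
    simp only [Finset.mem_filter, Finset.mem_singleton]
    constructor
    · rintro ⟨a, b⟩
      rcases hU U a b with rfl | rfl
      · rfl
      · exact absurd a hT'
    · rintro rfl
      exact ⟨hT, he⟩
  by_cases a : T₁ ∈ G.tris
  · have b : T₂ ∉ G.tris := fun b => hx ⟨fun _ => b, fun _ => a⟩
    exact main T₁ a T₂ b h1 h
  · have b : T₂ ∈ G.tris := by
      by_contra b
      exact hx ⟨fun c => absurd c a, fun c => absurd c b⟩
    exact main T₂ b T₁ a h2 fun U hU hu => (h U hU hu).symm

/-- boundary edges in the three positive directions -/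
lemma bdry_mk {G : ConvexGrid} {o : Pt} (hA : Al G o) (u v : ℤ × ℤ) (m n m' n' : ℤ)
    (h1 : (PZ o u, PZ o v) ∈ (mkT o m n true).edgeFinset)
    (h2 : (PZ o u, PZ o v) ∈ (mkT o m' n' false).edgeFinset)
    (hx : ¬ (mkT o m n true ∈ G.tris ↔ mkT o m' n' false ∈ G.tris)) :
    (PZ o u, PZ o v) ∈ G.boundary := by
  refine bdry_of _ _ ?_ h1 h2 hx
  intro T hT he
  obtain ⟨a, b, c, rfl⟩ := hA T hT
  obtain ⟨u1, u2⟩ := u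
  obtain ⟨v1, v2⟩ := v
  rw [edge_t] at h1
  rw [edge_f] at h2
  cases c
  · right
    rw [edge_f] at he
    simp only [Prod.mk.injEq] at *
    obtain ⟨rfl, rfl⟩ : a = m' ∧ b = n' := by omega
    rfl
  · left
    rw [edge_t] at he
    simp only [Prod.mk.injEq] at *
    obtain ⟨rfl, rfl⟩ : a = m ∧ b = n := by omega
    rfl

lemma bdry_even {G : ConvexGrid} {o : Pt} (hA : Al G o) (p : ℤ × ℤ) (i : Fin 6)
    (hi : i = 0 ∨ i = 2 ∨ i = 4)
    (hp : VV G o p) (hq : VV G o (p + dd i))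
    (hx : ¬ (VV G o (p + dd (i + 1)) ↔ VV G o (p + dd (i + 5)))) :
    (PZ o p, PZ o (p + dd i)) ∈ G.boundary := by
  obtain ⟨x, y⟩ := p
  rcases hi with rfl | rfl | rfl
  · apply bdry_mk hA _ _ x y x y
    · rw [edge_t]; simp [dd]
    · rw [edge_f]; simp [dd]
    · rw [tri_t hA, tri_f hA]
      simp [dd] at hx hq
      simp [hp, hq, hx, sub_eq_add_neg]
  · apply bdry_mk hA _ _ (x - 1) y x (y + 1)
    · rw [edge_t]; simp [dd]
    · rw [edge_f]; simp [dd]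
    · rw [tri_t hA, tri_f hA]
      simp [dd, ← sub_eq_add_neg] at hx hq
      simp [hp, hq]
      tauto
  · apply bdry_mk hA _ _ (x - 1) (y - 1) (x - 1) y
    · rw [edge_t]; simp [dd, sub_eq_add_neg]
    · rw [edge_f]; simp [dd, sub_eq_add_neg]
    · rw [tri_t hA, tri_f hA]
      simp [dd, ← sub_eq_add_neg] at hx hq
      simp [hp, hq]
      tauto

def Val (G : ConvexGrid) (h₀ : Ed → ℝ) (g : Pt → ℝ) : Prop :=
  ConcaveOn ℝ G.region g ∧ (∀ T ∈ G.tris, AffineOn g T.region) ∧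
    ∀ e ∈ G.boundary, g e.2 - g e.1 = h₀ e

def Rel (G : ConvexGrid) (o : Pt) (h₀ : Ed → ℝ) (u v : ℤ × ℤ) : Prop :=
  ∃ K, ∀ g, Val G h₀ g → |g (PZ o u) - g (PZ o v)| ≤ K

lemma Rel.trans {G o h₀ u v w} (h1 : Rel G o h₀ u v) (h2 : Rel G o h₀ v w) : Rel G o h₀ u w := by
  obtain ⟨K, hK⟩ := h1
  obtain ⟨L, hL⟩ := h2
  refine ⟨K + L, fun g hg => ?_⟩
  have a := hK g hg
  have b := hL g hg
  calc _ ≤ _ := abs_sub_le _ (g (PZ o v)) _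
    _ ≤ _ := by linarith

lemma Rel.symm {G o h₀ u v} (h1 : Rel G o h₀ u v) : Rel G o h₀ v u := by
  obtain ⟨K, hK⟩ := h1
  exact ⟨K, fun g hg => by rw [abs_sub_comm]; exact hK g hg⟩

lemma rel_bdry {G : ConvexGrid} {o : Pt} (hA : Al G o) (h₀) (p : ℤ × ℤ) (i : Fin 6)
    (hp : VV G o p) (hq : VV G o (p + dd i))
    (hx : ¬ (VV G o (p + dd (i + 1)) ↔ VV G o (p + dd (i + 5)))) :
    Rel G o h₀ p (p + dd i) := by
  have even : ∀ (p : ℤ × ℤ) (i : Fin 6) (hi : i = 0 ∨ i = 2 ∨ i = 4)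
    (hp : VV G o p) (hq : VV G o (p + dd i))
    (hx : ¬ (VV G o (p + dd (i + 1)) ↔ VV G o (p + dd (i + 5)))), Rel G o h₀ p (p + dd i) := by
    intro p i hi hp hq hx
    have := bdry_even hA p i hi hp hq hx
    refine ⟨|h₀ (PZ o p, PZ o (p + dd i))|, fun g hg => ?_⟩
    rw [← hg.2.2 _ this, abs_sub_comm]
  have hi : (i = 0 ∨ i = 2 ∨ i = 4) ∨ (i + 3 = 0 ∨ i + 3 = 2 ∨ i + 3 = 4) := by
    fin_cases i <;> simp
  rcases hi with hi | hi
  · exact even p i hi hp hq hx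
  · have e0 : p + dd i + dd (i + 3) = p := by rw [add_assoc, dd_opp, add_zero]
    have e1 : p + dd i + dd (i + 3 + 1) = p + dd (i + 5) := by
      rw [add_assoc]; congr 1; fin_cases i <;> rfl
    have e2 : p + dd i + dd (i + 3 + 5) = p + dd (i + 1) := by
      rw [add_assoc]; congr 1; fin_cases i <;> rfl
    have := even (p + dd i) (i + 3) hi hq (by rwa [e0]) (by rw [e1, e2]; exact fun h => hx h.symm)
    rw [e0] at this
    exact this.symm

lemma walk {G : ConvexGrid} {o : Pt} (hA : Al G o) (h₀) (k : Fin 6) (c : ℤ × ℤ) (hc : VV G o c)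
    (hmax : ∀ v, VV G o v → ev k v ≤ ev k c) :
    ∀ (N : ℕ) (p : ℤ × ℤ), VV G o p → (∃ i, ¬ VV G o (p + dd i)) → (ev k c - ev k p).toNat ≤ N →
      Rel G o h₀ p c := by
  intro N
  induction N with
  | zero =>
    intro p hp hn hN
    by_cases hpc : p = c
    · subst hpc; exact ⟨0, fun g _ => by simp⟩
    · exfalso
      have := hmax p hp
      obtain ⟨j, hj, hj'⟩ := dir2 hA k p c hp hc (Ne.symm hpc) this
      have := hmax _ hj'
      rw [ev_add] at this
      omega
  | succ N ih =>
    intro p hp hn hN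
    by_cases hpc : p = c
    · subst hpc; exact ⟨0, fun g _ => by simp⟩
    · have hle := hmax p hp
      have hj := dir2 hA k p c hp hc (Ne.symm hpc) hle
      obtain ⟨i, hi, hD, hx⟩ := walkc (fun i => VV G o (p + dd i)) (dconv hA p) (ex_tri hA p hp) hn k hj
      refine (rel_bdry hA h₀ p i hp hD hx).trans (ih _ hD ?_ ?_)
      · have e1 : p + dd i + dd (i + 2) = p + dd (i + 1) := by
          rw [add_assoc]; congr 1; fin_cases i <;> rfl
        have e2 : p + dd i + dd (i + 4) = p + dd (i + 5) := by
          rw [add_assoc]; congr 1; fin_cases i <;> rfl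
        by_cases h : VV G o (p + dd (i + 1))
        · exact ⟨i + 4, by rw [e2]; exact fun h' => hx ⟨fun _ => h', fun _ => h⟩⟩
        · exact ⟨i + 2, by rw [e1]; exact h⟩
      · rw [ev_add]
        omega

lemma VV_fin {G : ConvexGrid} {o : Pt} (hA : Al G o) : {v | VV G o v}.Finite := by
  have : (PZ o '' {v | VV G o v}).Finite := by
    refine Set.Finite.subset (s := ⋃ T ∈ G.tris, {T.v0, T.v1, T.v2})
      (Set.Finite.biUnion (Finset.finite_toSet _) fun T _ => by simp) ?_
    rintro _ ⟨v, hv, rfl⟩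
    obtain ⟨m, n, b, hT, hq⟩ := mem_region hA hv
    refine Set.mem_biUnion hT ?_
    cases b
    · rw [v0_mk, v1_mk, v2_mkf]
      rcases near_f o m n _ hq v (by simp [cxP]) (by simp [cyP]) (by simp [cxP, cyP]) with rfl | rfl | rfl <;> simp
    · rw [v0_mk, v1_mk, v2_mkt]
      rcases near_t o m n _ hq v (by simp [cxP]) (by simp [cyP]) (by simp [cxP, cyP]) with rfl | rfl | rfl <;> simp
  exact this.of_finite_image (PZ_inj o).injOn

lemma ub {R T : Set Pt} (hTR : T ⊆ R) (hT : Convex ℝ T) {g : Pt → ℝ} (hg : ConcaveOn ℝ R g)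
    (hφ : AffineOn g T) {a b c x : Pt} (ha : a ∈ T) (hb : b ∈ T) (hc : c ∈ T) (hx : x ∈ R) (α β : ℝ)
    (e : x = a + α • (b - a) + β • (c - a)) :
    g x ≤ g a + α * (g b - g a) + β * (g c - g a) := by
  obtain ⟨φ, hφ⟩ := hφ
  have mem3 : ∀ r s t : ℝ, 0 ≤ r → 0 ≤ s → 0 ≤ t → r + s + t = 1 → r • a + s • b + t • c ∈ T := by
    intro r s t hr hs ht h
    have := hT.sum_mem (t := Finset.univ) (w := ![r, s, t]) (z := ![a, b, c])
      (by intro i _; fin_cases i <;> simpa) (by simp [Fin.sum_univ_three, h])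
      (by intro i _; fin_cases i <;> simpa)
    simpa [Fin.sum_univ_three] using this
  have aff3 : ∀ r s t : ℝ, r + s + t = 1 → φ (r • a + s • b + t • c) = r * φ a + s * φ b + t * φ c := by
    intro r s t h
    obtain rfl : r = 1 - s - t := by linarith
    rw [AffineMap.decomp φ]
    simp only [Pi.add_apply, map_add, map_smul, smul_eq_mul]
    ring
  set ε : ℝ := 1 / (4 * (1 + |α| + |β|)) with hε
  have hA : 0 ≤ |α| := abs_nonneg _
  have hB : 0 ≤ |β| := abs_nonneg _
  have hε0 : 0 < ε := by positivity
  have hεe : ε * (1 + |α| + |β|) = 1 / 4 := by rw [hε]; field_simp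
  have hεa : 0 ≤ ε * |α| := by positivity
  have hεb : 0 ≤ ε * |β| := by positivity
  have i1 : ε * α ≤ ε * |α| := mul_le_mul_of_nonneg_left (le_abs_self _) hε0.le
  have i2 : ε * (-α) ≤ ε * |α| := mul_le_mul_of_nonneg_left (neg_le_abs _) hε0.le
  have i3 : ε * β ≤ ε * |β| := mul_le_mul_of_nonneg_left (le_abs_self _) hε0.le
  have i4 : ε * (-β) ≤ ε * |β| := mul_le_mul_of_nonneg_left (neg_le_abs _) hε0.le
  have hm := mem3 (1/3) (1/3) (1/3) (by norm_num) (by norm_num) (by norm_num) (by norm_num)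
  have fm := hφ _ hm
  rw [aff3 _ _ _ (by norm_num)] at fm
  have hw : (1 - ε) • ((1/3 : ℝ) • a + (1/3 : ℝ) • b + (1/3 : ℝ) • c) + ε • x =
     ((1 - ε) / 3 + ε * (1 - α - β)) • a + ((1 - ε) / 3 + ε * α) • b + ((1 - ε) / 3 + ε * β) • c := by
    rw [e]; module
  have hwm := mem3 ((1 - ε) / 3 + ε * (1 - α - β)) ((1 - ε) / 3 + ε * α) ((1 - ε) / 3 + ε * β)
    (by linarith) (by linarith) (by linarith) (by ring)
  have fw := hφ _ hwm
  rw [aff3 _ _ _ (by ring), ← hw] at fw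
  have hcc := hg.2 (hTR hm) hx (show (0 : ℝ) ≤ 1 - ε by linarith) hε0.le (by ring)
  rw [fw, fm] at hcc
  rw [hφ a ha, hφ b hb, hφ c hc]
  simp only [smul_eq_mul] at hcc
  have : ε * g x ≤ ε * (φ a + α * (φ b - φ a) + β * (φ c - φ a)) := by linarith
  exact le_of_mul_le_mul_left this hε0

lemma tri_any {G : ConvexGrid} {o : Pt} (hA : Al G o) (p : ℤ × ℤ) (i : Fin 6) (hp : VV G o p)
    (h1 : VV G o (p + dd i)) (h2 : VV G o (p + dd (i + 1))) :
    ∃ T ∈ G.tris, PZ o p ∈ T.region ∧ PZ o (p + dd i) ∈ T.region ∧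
      PZ o (p + dd (i + 1)) ∈ T.region := by
  obtain ⟨q, hq, hx, hy⟩ := centroid_mem hp h1 h2
  obtain ⟨m, n, b, hT, h⟩ := mem_region hA hq
  have nm : ∀ u : ℤ × ℤ, |cx o q - u.1| < 1 → |cy o q - u.2| < 1 →
      |(cx o q - u.1) - (cy o q - u.2)| < 1 → PZ o u ∈ (mkT o m n b).region := by
    intro u a1 a2 a3
    obtain ⟨b1, b2, b3⟩ := v_mem (mkT o m n b)
    rw [v0_mk] at b1
    rw [v1_mk] at b2
    cases b
    · rw [v2_mkf] at b3
      rcases near_f o m n q h u a1 a2 a3 with rfl | rfl | rfl <;> assumption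
    · rw [v2_mkt] at b3
      rcases near_t o m n q h u a1 a2 a3 with rfl | rfl | rfl <;> assumption
  simp only [Prod.fst_add, Prod.snd_add, Int.cast_add] at hx hy
  refine ⟨_, hT, nm _ ?_ ?_ ?_, nm _ ?_ ?_ ?_, nm _ ?_ ?_ ?_⟩ <;>
    (try simp only [Prod.fst_add, Prod.snd_add, Int.cast_add]) <;> rw [abs_lt] <;>
    clear nm h hT hp h1 h2 hq <;>
    fin_cases i <;> simp [dd] at hx hy ⊢ <;> constructor <;> linarith

lemma coords (o : Pt) (c v : ℤ × ℤ) (i : Fin 6) : ∃ α β : ℝ,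
    PZ o v = PZ o c + α • (PZ o (c + dd i) - PZ o c) + β • (PZ o (c + dd (i + 1)) - PZ o c) := by
  have hd : ((dd i).1 : ℝ) * (dd (i + 1)).2 - (dd i).2 * (dd (i + 1)).1 = 1 := by
    fin_cases i <;> simp [dd]
  refine ⟨(v.1 - c.1) * (dd (i + 1)).2 - (v.2 - c.2) * (dd (i + 1)).1,
    (dd i).1 * (v.2 - c.2) - (dd i).2 * (v.1 - c.1), ?_⟩
  ext
  · simp [PZ, Lp]
    linear_combination (-(v.1 - c.1 : ℝ) + (v.2 - c.2) / 2) * hd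
  · simp [PZ, Lp]
    linear_combination (-(v.2 - c.2 : ℝ) * (Real.sqrt 3 / 2)) * hd

lemma corner_max {G : ConvexGrid} {o : Pt} (hA : Al G o) (S : Finset Pt)
    (hreg : G.region = convexHull ℝ (↑S : Set Pt)) (k : Fin 6) :
    ∃ c : ℤ × ℤ, PZ o c ∈ S ∧ VV G o c ∧ ∀ v, VV G o v → ev k v ≤ ev k c := by
  have hne : S.Nonempty := by
    obtain ⟨T, hT⟩ := G.nonempty
    have := reg_sub hT (v_mem T).1
    rw [hreg] at this
    have h : (convexHull ℝ (↑S : Set Pt)).Nonempty := ⟨_, this⟩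
    simpa using h
  obtain ⟨s, hs, hmax⟩ := S.exists_max_image
    (fun q => ((lam k).1 : ℝ) * cx o q + (lam k).2 * cy o q) hne
  have hR : ∀ q ∈ G.region, ((lam k).1 : ℝ) * cx o q + (lam k).2 * cy o q ≤
      (lam k).1 * cx o s + (lam k).2 * cy o s := by
    intro q hq
    rw [hreg] at hq
    exact hull_le o _ _ _ _ (fun q hq => hmax q hq) q hq
  have hsR : s ∈ G.region := by
    rw [hreg]
    exact subset_convexHull ℝ _ hs
  have hVR : ∀ v, VV G o v → ((lam k).1 : ℝ) * v.1 + (lam k).2 * v.2 ≤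
      (lam k).1 * cx o s + (lam k).2 * cy o s := by
    intro v hv
    have := hR _ hv
    rwa [cxP, cyP] at this
  have key : ∃ c : ℤ × ℤ, VV G o c ∧ cx o s = c.1 ∧ cy o s = c.2 := by
    obtain ⟨m, n, b, hT, h⟩ := mem_region hA hsR
    cases b
    · obtain ⟨a1, a2, a3⟩ := VV_f hT
      obtain ⟨r1, r2, r3⟩ := reg_f o m n s h
      have b1 := hVR _ a1
      have b2 := hVR _ a2
      have b3 := hVR _ a3
      clear hVR hR hmax
      push_cast at b1 b2 b3
      fin_cases k <;> simp [lam] at b1 b2 b3 <;> first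
        | exact ⟨_, a1, by push_cast; linarith, by push_cast; linarith⟩
        | exact ⟨_, a2, by push_cast; linarith, by push_cast; linarith⟩
        | exact ⟨_, a3, by push_cast; linarith, by push_cast; linarith⟩
    · obtain ⟨a1, a2, a3⟩ := VV_t hT
      obtain ⟨r1, r2, r3⟩ := reg_t o m n s h
      have b1 := hVR _ a1
      have b2 := hVR _ a2
      have b3 := hVR _ a3
      clear hVR hR hmax
      push_cast at b1 b2 b3
      fin_cases k <;> simp [lam] at b1 b2 b3 <;> first
        | exact ⟨_, a1, by push_cast; linarith, by push_cast; linarith⟩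
        | exact ⟨_, a2, by push_cast; linarith, by push_cast; linarith⟩
        | exact ⟨_, a3, by push_cast; linarith, by push_cast; linarith⟩
  obtain ⟨c, hc, e1, e2⟩ := key
  refine ⟨c, ?_, hc, fun v hv => ?_⟩
  · rwa [PZ, ← e1, ← e2, Lp_c]
  · have := hVR v hv
    rw [e1, e2] at this
    simp only [ev]
    exact_mod_cast this

lemma exists_corner {G : ConvexGrid} {o : Pt} (hA : Al G o) (S : Finset Pt) (hS : S.card ≤ 5)
    (hreg : G.region = convexHull ℝ (↑S : Set Pt)) :
    ∃ (c : ℤ × ℤ) (k i : Fin 6), VV G o c ∧ (∀ v, VV G o v → ev k v ≤ ev k c) ∧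
      VV G o (c + dd i) ∧ VV G o (c + dd (i + 1)) ∧ ¬ VV G o (c + dd (i + 2)) ∧
      ¬ VV G o (c + dd (i + 5)) := by
  choose f hf1 hf2 hf3 using corner_max hA S hreg
  obtain ⟨k, -, l, -, hkl, he⟩ := Finset.exists_ne_map_eq_of_card_lt_of_maps_to
    (s := (Finset.univ : Finset (Fin 6))) (t := S) (f := fun k => PZ o (f k))
    (by simp; omega) (fun k _ => hf1 k)
  have he : f k = f l := PZ_inj o he
  obtain ⟨i, h⟩ := cornerc (fun i => VV G o (f k + dd i)) (ex_tri hA _ (hf2 k)) k l hkl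
    (fun i hi => by
      have := hf3 k _ hi
      rw [ev_add] at this
      omega)
    (fun i hi => by
      rw [he] at hi
      have := hf3 l _ hi
      rw [ev_add] at this
      omega)
  exact ⟨f k, k, i, hf2 k, hf3 k, h⟩

lemma main_bound {G : ConvexGrid} {o : Pt} (hA : Al G o) (S : Finset Pt) (hS : S.card ≤ 5)
    (hreg : G.region = convexHull ℝ (↑S : Set Pt)) (h₀ : Ed → ℝ) :
    ∃ c : ℤ × ℤ, ∃ K, ∀ g, Val G h₀ g → ∀ v, VV G o v → |g (PZ o v) - g (PZ o c)| ≤ K := by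
  obtain ⟨c, k, i, hc, hmax, h1, h2, h3, h5⟩ := exists_corner hA S hS hreg
  have hfin := VV_fin (G := G) hA
  -- upper bound
  obtain ⟨T, hT, t0, t1, t2⟩ := tri_any hA c i hc h1 h2
  have r1 : Rel G o h₀ c (c + dd i) := rel_bdry hA h₀ c i hc h1 (fun h => h5 (h.1 h2))
  have r2 : Rel G o h₀ c (c + dd (i + 1)) := by
    apply rel_bdry hA h₀ c (i + 1) hc h2
    obtain ⟨a1, -, -, -, -, -, -, -, -, -, a11, -⟩ := fadd i
    rw [a1, a11]
    exact fun h => h3 (h.2 h1)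
  have up : ∀ v : ℤ × ℤ, ∃ K, VV G o v → ∀ g, Val G h₀ g → g (PZ o v) - g (PZ o c) ≤ K := by
    intro v
    obtain ⟨α, β, e⟩ := coords o c v i
    obtain ⟨K₁, hK₁⟩ := r1
    obtain ⟨K₂, hK₂⟩ := r2
    refine ⟨|α| * K₁ + |β| * K₂, fun hv g hg => ?_⟩
    have := ub (reg_sub hT) (convex_convexHull ℝ _) hg.1 (hg.2.1 T hT) t0 t1 t2 hv α β e
    have k1 := hK₁ g hg
    have k2 := hK₂ g hg
    rw [abs_sub_comm] at k1 k2
    have j1 : α * (g (PZ o (c + dd i)) - g (PZ o c)) ≤ |α| * K₁ :=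
      (le_abs_self _).trans (by rw [abs_mul]; gcongr)
    have j2 : β * (g (PZ o (c + dd (i + 1))) - g (PZ o c)) ≤ |β| * K₂ :=
      (le_abs_self _).trans (by rw [abs_mul]; gcongr)
    linarith
  have low : ∀ v : ℤ × ℤ, ∃ K, VV G o v → (∃ j, ¬ VV G o (v + dd j)) → ∀ g, Val G h₀ g →
      g (PZ o c) - g (PZ o v) ≤ K := by
    intro v
    by_cases hv : VV G o v ∧ (∃ j, ¬ VV G o (v + dd j))
    · obtain ⟨K, hK⟩ := walk hA h₀ k c hc hmax _ v hv.1 hv.2 le_rfl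
      refine ⟨K, fun _ _ g hg => ?_⟩
      have := hK g hg
      rw [abs_sub_comm] at this
      exact (le_abs_self _).trans this
    · exact ⟨0, fun a b => absurd ⟨a, b⟩ hv⟩
  choose U hU using up
  choose L hL using low
  set F := hfin.toFinset with hF
  have memF : ∀ v, v ∈ F ↔ VV G o v := fun v => by simp [hF]
  refine ⟨c, ∑ v ∈ F, |U v| + ∑ v ∈ F, |L v|, fun g hg v hv => ?_⟩
  have sU : ∀ v, VV G o v → U v ≤ ∑ v ∈ F, |U v| := fun v hv =>
    (le_abs_self _).trans (Finset.single_le_sum (f := fun v => |U v|) (fun _ _ => abs_nonneg _)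
      ((memF v).2 hv))
  have sL : ∀ v, VV G o v → L v ≤ ∑ v ∈ F, |L v| := fun v hv =>
    (le_abs_self _).trans (Finset.single_le_sum (f := fun v => |L v|) (fun _ _ => abs_nonneg _)
      ((memF v).2 hv))
  have nU : 0 ≤ ∑ v ∈ F, |U v| := Finset.sum_nonneg fun _ _ => abs_nonneg _
  have nL : 0 ≤ ∑ v ∈ F, |L v| := Finset.sum_nonneg fun _ _ => abs_nonneg _
  -- minimiser
  obtain ⟨p₀, hp₀, hmin₀⟩ := F.exists_min_image (fun v => g (PZ o v)) ⟨c, (memF c).2 hc⟩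
  obtain ⟨p, hp, hpmax⟩ := (F.filter fun v => g (PZ o v) = g (PZ o p₀)).exists_max_image
    (fun v => v.1) ⟨p₀, by simp [hp₀]⟩
  rw [Finset.mem_filter, memF] at hp
  have hmin : ∀ v, VV G o v → g (PZ o p) ≤ g (PZ o v) := fun v hv => by
    rw [hp.2]; exact hmin₀ v ((memF v).2 hv)
  have hnf : ∃ j, ¬ VV G o (p + dd j) := by
    by_contra hcon
    push Not at hcon
    have a0 := hcon 0
    have a3 := hcon 3
    have hmid := hg.1.2 a0 a3 (show (0:ℝ) ≤ 1/2 by norm_num) (show (0:ℝ) ≤ 1/2 by norm_num) (by norm_num)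
    have e : (1/2 : ℝ) • PZ o (p + dd 0) + (1/2 : ℝ) • PZ o (p + dd 3) = PZ o p := by
      ext <;> simp [PZ, Lp, dd] <;> ring
    rw [e] at hmid
    simp only [smul_eq_mul] at hmid
    have m0 := hmin _ a0
    have m3 := hmin _ a3
    have : g (PZ o (p + dd 0)) = g (PZ o p₀) := by rw [← hp.2]; linarith
    have := hpmax (p + dd 0) (by rw [Finset.mem_filter, memF]; exact ⟨a0, this⟩)
    simp [dd] at this
  have l1 := hL p hp.1 hnf g hg
  have l2 := sL p hp.1
  have l3 := hmin v hv
  have u1 := hU v hv g hg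
  have u2 := sU v hv
  rw [abs_le]
  constructor <;> linarith

lemma al_base (G : ConvexGrid) : ∃ o, Al G o := by
  obtain ⟨T₀, hT₀⟩ := G.nonempty
  refine ⟨T₀.base, fun T hT => ?_⟩
  obtain ⟨m, n, h⟩ := G.aligned T hT T₀ hT₀
  refine ⟨m, n, T.up, ?_⟩
  have e : T.base = Lp T₀.base m n := by
    rw [sub_eq_iff_eq_add] at h
    rw [h]
    ext <;> simp [Lp, xiv] <;> ring
  cases T
  simp only [mkT] at *
  rw [e]

lemma edge_V {G : ConvexGrid} {o : Pt} (hA : Al G o) (e : Ed) (he : e ∈ G.edges) :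
    ∃ u v, VV G o u ∧ VV G o v ∧ e.1 = PZ o u ∧ e.2 = PZ o v := by
  simp only [ConvexGrid.edges, Finset.mem_biUnion] at he
  obtain ⟨T, hT, he⟩ := he
  obtain ⟨m, n, b, rfl⟩ := hA T hT
  simp only [GridTriangle.edgeFinset, GridTriangle.e0, GridTriangle.e1, GridTriangle.e2,
    Finset.mem_insert, Finset.mem_singleton] at he
  cases b
  · obtain ⟨a1, a2, a3⟩ := VV_f hT
    rw [v0_mk, v1_mk, v2_mkf] at he
    rcases he with rfl | rfl | rfl
    · exact ⟨_, _, a1, a2, rfl, rfl⟩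
    · exact ⟨_, _, a2, a3, rfl, rfl⟩
    · exact ⟨_, _, a3, a1, rfl, rfl⟩
  · obtain ⟨a1, a2, a3⟩ := VV_t hT
    rw [v0_mk, v1_mk, v2_mkt] at he
    rcases he with rfl | rfl | rfl
    · exact ⟨_, _, a1, a2, rfl, rfl⟩
    · exact ⟨_, _, a2, a3, rfl, rfl⟩
    · exact ⟨_, _, a3, a1, rfl, rfl⟩

end TG

/-- If the region of the convex grid G is not a hexagon (i.e. it is
the convex hull of at most five points) and h₀ is given on all boundary edges, then
C(G,h₀) is bounded. -/
theorem stmt8 (G : ConvexGrid) (S : Finset Pt) (hS : S.card ≤ 5)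
    (hreg : G.region = convexHull ℝ (↑S : Set Pt)) (h₀ : Ed → ℝ) :
    ∃ M : ℝ, ∀ h ∈ CC G (↑G.boundary) h₀, ∀ e ∈ G.edges, |h e| ≤ M := by
  obtain ⟨o, hA⟩ := TG.al_base G
  obtain ⟨c, K, hK⟩ := TG.main_bound hA S hS hreg h₀
  refine ⟨K + K, ?_⟩
  rintro h ⟨⟨-, g, hg1, hg2, hg3⟩, hb⟩ e he
  have hV : TG.Val G h₀ g := by
    refine ⟨hg1, hg2, fun e he => ?_⟩
    rw [← hb e (by exact_mod_cast he), hg3 e (Finset.mem_filter.1 he).1]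
  obtain ⟨u, v, hu, hv, e1, e2⟩ := TG.edge_V hA e he
  rw [hg3 e he, e1, e2]
  have a := hK g hV u hu
  have b := hK g hV v hv
  rw [abs_le] at *
  constructor <;> linarith [a.1, a.2, b.1, b.2]
end
end
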